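/- Let λ ∈ ℂ and let N, P ≥ 0 be such that β_c := max{2 − 2P, (4 − 2N)/3} > 1. Then there exist constants C, c > 0, complex-valued potentials V : ℝ² → ℂ and W : ℝ² → ℂ² exactly one of which is identically zero, and a nonzero twice continuously differentiable function u : ℝ² → ℂ, such that −Δu + W·∇u + Vu = λu in ℝ², |V(x)| ≤ C⟨x⟩^{−N} and |W(x)| ≤ C⟨x⟩^{−P} for all x ∈ ℝ², and there exists A ∈ {−1, 0} such that |u(x)| ≤ C·exp(−c·|x|^{β_c}·(log|x|)^{A}) for all x with |x| ≥ 2. -/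

import Mathlib

noncomputable section

/-- Partial derivative of `u` in the `i`-th coordinate direction. -/
def pd (u : EuclideanSpace ℝ (Fin 2) → ℂ) (i : Fin 2) (x : EuclideanSpace ℝ (Fin 2)) : ℂ :=
  fderiv ℝ u x (EuclideanSpace.single i 1)

/-- Laplacian on ℝ²: sum of second partial derivatives. -/
def lap (u : EuclideanSpace ℝ (Fin 2) → ℂ) (x : EuclideanSpace ℝ (Fin 2)) : ℂ :=
  ∑ i, pd (fun y => pd u i y) i x

/-!
With `s = log r` and `t = r ^ (β / 2)`, multiplying `Δu + λu` by `r²` gives `u_ss + u_θθ + λ r² u`.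
Up to small errors this is solved by the modes `exp (-n s ± i n θ)`, each of which decays only
polynomially in `r`. The frequency is therefore raised as `r` grows: the mode of frequency
`n_j = 16 j²` hands over to the next one at clock time `t = j`, so that the rate `n` of decay in `s`
is of order `t²` and `|u| ≤ exp (-t²) = exp (-r ^ β)` up to a constant.

At a handover the two modes have the same size. They rotate in opposite directions, so their sum is
small only where its angular derivative is of order `t² |mode|`, which gives `t² |u| ≲ r |∇u|` for
large `r`. The rates of decay and a small angular correction are chosen so that the relative errors
of the two modes agree wherever the sum can vanish, which gives
`r² |Δu + λu| ≲ t³ |u|`, and hence also `r² |Δu + λu| ≲ t r |∇u|`. The quotients of `Δu + λu` by `u`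
and by `∇u` are then potentials `V` and `W` of size `r ^ (3β/2 - 2)` and `r ^ (β/2 - 1)`. Since `u`
and `∇u` vanish at the origin, the value of the potential there is free and is chosen nonzero.
-/

open Filter Topology

/-! ### Logarithmic polar coordinates -/

/-- The Euclidean plane. -/
abbrev Plane := EuclideanSpace ℝ (Fin 2)

/-- The gradient of a complex-valued function on the plane. -/
def grad (u : Plane → ℂ) (x : Plane) : EuclideanSpace ℂ (Fin 2) :=
  WithLp.toLp 2 fun i => pd u i x

/-- The complex coordinate `z = x₀ + i x₁` on the plane. -/
def complexCoord : Plane ≃ₗᵢ[ℝ] ℂ := Complex.orthonormalBasisOneI.repr.symm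

/-- Rotation of the plane by a right angle, that is, multiplication of `z` by `i`. -/
def quarterTurn : Plane →L[ℝ] Plane :=
  complexCoord.symm.toContinuousLinearEquiv.toContinuousLinearMap ∘L
    (ContinuousLinearMap.mul ℝ ℂ Complex.I) ∘L
      complexCoord.toContinuousLinearEquiv.toContinuousLinearMap

/-- The point of the plane with logarithmic polar coordinates `p = (log r, θ)`. -/
def polarExp (p : ℝ × ℝ) : Plane := complexCoord.symm (Complex.exp (p.1 + p.2 * Complex.I))

theorem complexCoord_apply (x : Plane) : complexCoord x = x 0 + x 1 * Complex.I := by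
  simp [complexCoord]

theorem complexCoord_quarterTurn (x : Plane) :
    complexCoord (quarterTurn x) = Complex.I * complexCoord x := by
  simp [quarterTurn]

theorem complexCoord_polarExp (p : ℝ × ℝ) :
    complexCoord (polarExp p) = Complex.exp (p.1 + p.2 * Complex.I) :=
  complexCoord.apply_symm_apply _

theorem norm_polarExp (p : ℝ × ℝ) : ‖polarExp p‖ = Real.exp p.1 := by
  rw [← complexCoord.norm_map, complexCoord_polarExp, Complex.norm_exp]
  simp

theorem polarExp_log_arg {x : Plane} (hx : x ≠ 0) :
    polarExp (Real.log ‖x‖, Complex.arg (complexCoord x)) = x := by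
  have hz : complexCoord x ≠ 0 := complexCoord.map_eq_zero_iff.not.2 hx
  rw [← complexCoord.injective.eq_iff, complexCoord_polarExp, ← complexCoord.norm_map x]
  exact Complex.exp_log hz

theorem quarterTurn_quarterTurn (x : Plane) : quarterTurn (quarterTurn x) = -x := by
  rw [← complexCoord.injective.eq_iff, complexCoord_quarterTurn, complexCoord_quarterTurn,
    ← mul_assoc, Complex.I_mul_I, map_neg, neg_one_mul]

theorem eq_smul_single_add_smul_single (x : Plane) :
    x = x 0 • EuclideanSpace.single 0 1 + x 1 • EuclideanSpace.single 1 1 := by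
  ext i; fin_cases i <;> simp

theorem quarterTurn_eq_smul_single_add_smul_single (x : Plane) :
    quarterTurn x = -x 1 • EuclideanSpace.single 0 1 + x 0 • EuclideanSpace.single 1 1 := by
  rw [← complexCoord.injective.eq_iff, complexCoord_quarterTurn, complexCoord_apply,
    complexCoord_apply]
  apply Complex.ext <;> simp

theorem norm_sq_eq_add_sq (x : Plane) : ‖x‖ ^ 2 = x 0 ^ 2 + x 1 ^ 2 := by
  simp [EuclideanSpace.norm_sq_eq, Fin.sum_univ_two]

theorem hasDerivAt_polarExp_fst (p : ℝ × ℝ) :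
    HasDerivAt (fun s => polarExp (s, p.2)) (polarExp p) p.1 := by
  have hexp : HasDerivAt (fun s : ℝ => Complex.exp (s + p.2 * Complex.I))
      (Complex.exp (p.1 + p.2 * Complex.I) * 1) p.1 :=
    ((hasDerivAt_id p.1).ofReal_comp.add_const _).cexp
  rw [mul_one] at hexp
  exact complexCoord.symm.toContinuousLinearEquiv.hasFDerivAt.comp_hasDerivAt p.1 hexp

theorem hasDerivAt_polarExp_snd (p : ℝ × ℝ) :
    HasDerivAt (fun θ => polarExp (p.1, θ)) (quarterTurn (polarExp p)) p.2 := by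
  have hexp : HasDerivAt (fun θ : ℝ => Complex.exp (p.1 + θ * Complex.I))
      (Complex.exp (p.1 + p.2 * Complex.I) * (1 * Complex.I)) p.2 :=
    (((hasDerivAt_id p.2).ofReal_comp.mul_const _).const_add _).cexp
  have h := complexCoord.symm.toContinuousLinearEquiv.hasFDerivAt.comp_hasDerivAt p.2 hexp
  refine h.congr_deriv ?_
  rw [← complexCoord.injective.eq_iff, complexCoord_quarterTurn, complexCoord_polarExp]
  simp [mul_comm]

theorem contDiff_polarExp {n : WithTop ℕ∞} : ContDiff ℝ n polarExp := by
  refine complexCoord.symm.contDiff.comp (ContDiff.cexp ?_)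
  exact (Complex.ofRealCLM.contDiff.comp contDiff_fst).add
    ((Complex.ofRealCLM.contDiff.comp contDiff_snd).mul contDiff_const)

theorem polarExp_add_log_div (p : ℝ × ℝ) {y : Plane} (hy : y ≠ 0) :
    polarExp (p + Complex.equivRealProdCLM
      (Complex.log (complexCoord y / complexCoord (polarExp p)))) = y := by
  have hz : complexCoord y ≠ 0 := complexCoord.map_eq_zero_iff.not.2 hy
  set w := Complex.log (complexCoord y / complexCoord (polarExp p)) with hw
  rw [← complexCoord.injective.eq_iff, complexCoord_polarExp]
  have hsplit : ((p + Complex.equivRealProdCLM w).1 : ℂ) +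
      ((p + Complex.equivRealProdCLM w).2 : ℂ) * Complex.I = (p.1 + p.2 * Complex.I) + w := by
    apply Complex.ext <;> simp
  rw [hsplit, Complex.exp_add, hw, Complex.exp_log, complexCoord_polarExp,
    mul_div_cancel₀ _ (Complex.exp_ne_zero _)]
  rw [complexCoord_polarExp]
  exact div_ne_zero hz (Complex.exp_ne_zero _)

theorem contDiffAt_of_comp_polarExp {u : Plane → ℂ} {p : ℝ × ℝ} {n : WithTop ℕ∞}
    (hu : ContDiffAt ℝ n (u ∘ polarExp) p) : ContDiffAt ℝ n u (polarExp p) := by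
  have hz : complexCoord (polarExp p) ≠ 0 := by
    rw [complexCoord_polarExp]; exact Complex.exp_ne_zero _
  have hlog : ContDiffAt ℝ n
      (fun y => Complex.log (complexCoord y / complexCoord (polarExp p))) (polarExp p) := by
    have hdiv : ContDiffAt ℝ n (fun y => complexCoord y / complexCoord (polarExp p))
        (polarExp p) := complexCoord.contDiff.contDiffAt.mul contDiffAt_const
    refine ((Complex.contDiffAt_log ?_).restrict_scalars ℝ).comp (polarExp p) hdiv
    simp [div_self hz]
  have hinv := (contDiffAt_const (c := p)).add
    (Complex.equivRealProdCLM.contDiff.contDiffAt.comp _ hlog)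
  have hp : p + Complex.equivRealProdCLM (Complex.log
      (complexCoord (polarExp p) / complexCoord (polarExp p))) = p := by
    rw [div_self hz, Complex.log_one, map_zero, add_zero]
  refine ((hp.symm ▸ hu).comp (polarExp p) hinv).congr_of_eventuallyEq ?_
  filter_upwards [isOpen_ne.mem_nhds (complexCoord.map_eq_zero_iff.not.1 hz)] with y hy
  exact congrArg u (polarExp_add_log_div p hy).symm

theorem norm_sq_mul_trace_eq (B : Plane →L[ℝ] Plane →L[ℝ] ℂ) (x : Plane) :
    (‖x‖ : ℂ) ^ 2 * ∑ i, B (EuclideanSpace.single i 1) (EuclideanSpace.single i 1) =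
      B x x + B (quarterTurn x) (quarterTurn x) := by
  have hnorm : (‖x‖ : ℂ) ^ 2 = (x 0 : ℂ) ^ 2 + (x 1 : ℂ) ^ 2 := by
    exact_mod_cast congrArg ((↑) : ℝ → ℂ) (norm_sq_eq_add_sq x)
  rw [hnorm, Fin.sum_univ_two, quarterTurn_eq_smul_single_add_smul_single]
  conv_rhs => enter [1]; rw [eq_smul_single_add_smul_single x]
  simp only [map_add, map_smul, add_apply, smul_apply, Complex.real_smul]
  push_cast
  ring

theorem norm_sq_mul_norm_grad_sq (u : Plane → ℂ) (x : Plane) :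
    ‖x‖ ^ 2 * ‖grad u x‖ ^ 2 = ‖fderiv ℝ u x x‖ ^ 2 + ‖fderiv ℝ u x (quarterTurn x)‖ ^ 2 := by
  have hx : fderiv ℝ u x x = x 0 * pd u 0 x + x 1 * pd u 1 x := by
    conv_lhs => enter [2]; rw [eq_smul_single_add_smul_single x]
    simp [pd]
  have hqx : fderiv ℝ u x (quarterTurn x) = -(x 1 * pd u 0 x) + x 0 * pd u 1 x := by
    rw [quarterTurn_eq_smul_single_add_smul_single]
    simp [pd]
  rw [hx, hqx, norm_sq_eq_add_sq, EuclideanSpace.norm_sq_eq, Fin.sum_univ_two]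
  simp only [grad, Complex.sq_norm, Complex.normSq_apply, Complex.add_re, Complex.add_im,
    Complex.mul_re, Complex.mul_im, Complex.neg_re, Complex.neg_im, Complex.ofReal_re,
    Complex.ofReal_im]
  ring

theorem lap_eq_sum_fderiv_fderiv {u : Plane → ℂ} {x : Plane} (hu : ContDiffAt ℝ 2 u x) :
    lap u x = ∑ i, fderiv ℝ (fderiv ℝ u) x (EuclideanSpace.single i 1)
      (EuclideanSpace.single i 1) := by
  have hD : DifferentiableAt ℝ (fderiv ℝ u) x :=
    (hu.fderiv_right (m := 1) (by norm_num)).differentiableAt (by norm_num)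
  refine Finset.sum_congr rfl fun i _ => ?_
  have h := hD.hasFDerivAt.clm_apply (hasFDerivAt_const (EuclideanSpace.single i (1 : ℝ)) x)
  change fderiv ℝ (fun y => fderiv ℝ u y (EuclideanSpace.single i 1)) x _ = _
  rw [h.fderiv]
  simp

/-! ### Jets in logarithmic polar coordinates -/

/-- `f` is `C²` at `p`, has the partial derivatives `f₁`, `f₂` near `p` and the unmixed second
partial derivatives `f₁₁`, `f₂₂` at `p`. The mixed ones never enter the Laplacian. -/
structure HasUnmixedJet (f f₁ f₂ : ℝ × ℝ → ℂ) (f₁₁ f₂₂ : ℂ) (p : ℝ × ℝ) : Prop where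
  contDiffAt : ContDiffAt ℝ 2 f p
  hasDerivAt_fst : ∀ᶠ q in 𝓝 p, HasDerivAt (fun s => f (s, q.2)) (f₁ q) q.1
  hasDerivAt_snd : ∀ᶠ q in 𝓝 p, HasDerivAt (fun θ => f (q.1, θ)) (f₂ q) q.2
  hasDerivAt_fst_fst : HasDerivAt (fun s => f₁ (s, p.2)) f₁₁ p.1
  hasDerivAt_snd_snd : HasDerivAt (fun θ => f₂ (p.1, θ)) f₂₂ p.2

namespace HasUnmixedJet

variable {f f₁ f₂ g g₁ g₂ : ℝ × ℝ → ℂ} {f₁₁ f₂₂ g₁₁ g₂₂ : ℂ} {p : ℝ × ℝ}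

theorem congr_of_eventuallyEq (hf : HasUnmixedJet f f₁ f₂ f₁₁ f₂₂ p) (hgf : g =ᶠ[𝓝 p] f) :
    HasUnmixedJet g f₁ f₂ f₁₁ f₂₂ p where
  contDiffAt := hf.contDiffAt.congr_of_eventuallyEq hgf
  hasDerivAt_fst := by
    filter_upwards [hf.hasDerivAt_fst, hgf.eventually_nhds] with q hq hqg
    exact hq.congr_of_eventuallyEq
      ((Continuous.prodMk_left q.2).continuousAt (x := q.1) |>.eventually hqg)
  hasDerivAt_snd := by
    filter_upwards [hf.hasDerivAt_snd, hgf.eventually_nhds] with q hq hqg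
    exact hq.congr_of_eventuallyEq
      ((Continuous.prodMk_right q.1).continuousAt (x := q.2) |>.eventually hqg)
  hasDerivAt_fst_fst := hf.hasDerivAt_fst_fst
  hasDerivAt_snd_snd := hf.hasDerivAt_snd_snd

theorem add (hf : HasUnmixedJet f f₁ f₂ f₁₁ f₂₂ p) (hg : HasUnmixedJet g g₁ g₂ g₁₁ g₂₂ p) :
    HasUnmixedJet (fun q => f q + g q) (fun q => f₁ q + g₁ q) (fun q => f₂ q + g₂ q)
      (f₁₁ + g₁₁) (f₂₂ + g₂₂) p where
  contDiffAt := hf.contDiffAt.add hg.contDiffAt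
  hasDerivAt_fst := by
    filter_upwards [hf.hasDerivAt_fst, hg.hasDerivAt_fst] with q hfq hgq using hfq.add hgq
  hasDerivAt_snd := by
    filter_upwards [hf.hasDerivAt_snd, hg.hasDerivAt_snd] with q hfq hgq using hfq.add hgq
  hasDerivAt_fst_fst := hf.hasDerivAt_fst_fst.add hg.hasDerivAt_fst_fst
  hasDerivAt_snd_snd := hf.hasDerivAt_snd_snd.add hg.hasDerivAt_snd_snd

theorem mul (hf : HasUnmixedJet f f₁ f₂ f₁₁ f₂₂ p) (hg : HasUnmixedJet g g₁ g₂ g₁₁ g₂₂ p) :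
    HasUnmixedJet (fun q => f q * g q) (fun q => f₁ q * g q + f q * g₁ q)
      (fun q => f₂ q * g q + f q * g₂ q) (f₁₁ * g p + 2 * f₁ p * g₁ p + f p * g₁₁)
      (f₂₂ * g p + 2 * f₂ p * g₂ p + f p * g₂₂) p where
  contDiffAt := hf.contDiffAt.mul hg.contDiffAt
  hasDerivAt_fst := by
    filter_upwards [hf.hasDerivAt_fst, hg.hasDerivAt_fst] with q hfq hgq using hfq.mul hgq
  hasDerivAt_snd := by
    filter_upwards [hf.hasDerivAt_snd, hg.hasDerivAt_snd] with q hfq hgq using hfq.mul hgq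
  hasDerivAt_fst_fst :=
    ((hf.hasDerivAt_fst_fst.mul hg.hasDerivAt_fst.self_of_nhds).add
      (hf.hasDerivAt_fst.self_of_nhds.mul hg.hasDerivAt_fst_fst)).congr_deriv (by ring)
  hasDerivAt_snd_snd :=
    ((hf.hasDerivAt_snd_snd.mul hg.hasDerivAt_snd.self_of_nhds).add
      (hf.hasDerivAt_snd.self_of_nhds.mul hg.hasDerivAt_snd_snd)).congr_deriv (by ring)

theorem cexp (hf : HasUnmixedJet f f₁ f₂ f₁₁ f₂₂ p) :
    HasUnmixedJet (fun q => Complex.exp (f q)) (fun q => f₁ q * Complex.exp (f q))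
      (fun q => f₂ q * Complex.exp (f q)) ((f₁₁ + f₁ p ^ 2) * Complex.exp (f p))
      ((f₂₂ + f₂ p ^ 2) * Complex.exp (f p)) p where
  contDiffAt := hf.contDiffAt.cexp
  hasDerivAt_fst := by
    filter_upwards [hf.hasDerivAt_fst] with q hq using hq.cexp.congr_deriv (mul_comm _ _)
  hasDerivAt_snd := by
    filter_upwards [hf.hasDerivAt_snd] with q hq using hq.cexp.congr_deriv (mul_comm _ _)
  hasDerivAt_fst_fst :=
    (hf.hasDerivAt_fst_fst.mul hf.hasDerivAt_fst.self_of_nhds.cexp).congr_deriv (by ring)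
  hasDerivAt_snd_snd :=
    (hf.hasDerivAt_snd_snd.mul hf.hasDerivAt_snd.self_of_nhds.cexp).congr_deriv (by ring)

theorem of_fst {w w₁ : ℝ → ℂ} {w₂ : ℂ} (hw : ContDiffAt ℝ 2 w p.1)
    (hw₁ : ∀ᶠ s in 𝓝 p.1, HasDerivAt w (w₁ s) s) (hw₂ : HasDerivAt w₁ w₂ p.1) :
    HasUnmixedJet (fun q => w q.1) (fun q => w₁ q.1) (fun _ => 0) w₂ 0 p where
  contDiffAt := hw.comp p contDiffAt_fst
  hasDerivAt_fst := continuousAt_fst.eventually hw₁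
  hasDerivAt_snd := Eventually.of_forall fun q => hasDerivAt_const q.2 (w q.1)
  hasDerivAt_fst_fst := hw₂
  hasDerivAt_snd_snd := hasDerivAt_const _ _

theorem of_snd {w w₁ : ℝ → ℂ} {w₂ : ℂ} (hw : ContDiffAt ℝ 2 w p.2)
    (hw₁ : ∀ᶠ θ in 𝓝 p.2, HasDerivAt w (w₁ θ) θ) (hw₂ : HasDerivAt w₁ w₂ p.2) :
    HasUnmixedJet (fun q => w q.2) (fun _ => 0) (fun q => w₁ q.2) 0 w₂ p where
  contDiffAt := hw.comp p contDiffAt_snd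
  hasDerivAt_fst := Eventually.of_forall fun q => hasDerivAt_const q.1 (w q.2)
  hasDerivAt_snd := continuousAt_snd.eventually hw₁
  hasDerivAt_fst_fst := hasDerivAt_const _ _
  hasDerivAt_snd_snd := hw₂

end HasUnmixedJet

section PolarJet

variable {u : Plane → ℂ} {f₁ f₂ : ℝ × ℝ → ℂ} {f₁₁ f₂₂ : ℂ} {p : ℝ × ℝ}

theorem HasUnmixedJet.eventually_eq_fderiv
    (h : HasUnmixedJet (u ∘ polarExp) f₁ f₂ f₁₁ f₂₂ p) :
    ∀ᶠ q in 𝓝 p, f₁ q = fderiv ℝ u (polarExp q) (polarExp q) ∧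
      f₂ q = fderiv ℝ u (polarExp q) (quarterTurn (polarExp q)) := by
  have hdiff : ∀ᶠ q in 𝓝 p, DifferentiableAt ℝ u (polarExp q) := by
    filter_upwards [(contDiff_polarExp (n := 2)).continuous.continuousAt.eventually
      ((contDiffAt_of_comp_polarExp h.contDiffAt).eventually (by simp))] with q hq
    exact hq.differentiableAt (by norm_num)
  filter_upwards [hdiff, h.hasDerivAt_fst, h.hasDerivAt_snd] with q hq h₁ h₂
  exact ⟨h₁.unique (hq.hasFDerivAt.comp_hasDerivAt _ (hasDerivAt_polarExp_fst q)),
    h₂.unique (hq.hasFDerivAt.comp_hasDerivAt _ (hasDerivAt_polarExp_snd q))⟩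

theorem HasUnmixedJet.norm_sq_add_norm_sq (h : HasUnmixedJet (u ∘ polarExp) f₁ f₂ f₁₁ f₂₂ p) :
    ‖f₁ p‖ ^ 2 + ‖f₂ p‖ ^ 2 = ‖polarExp p‖ ^ 2 * ‖grad u (polarExp p)‖ ^ 2 := by
  obtain ⟨h₁, h₂⟩ := h.eventually_eq_fderiv.self_of_nhds
  rw [norm_sq_mul_norm_grad_sq, h₁, h₂]

theorem HasUnmixedJet.add_eq_norm_sq_mul_lap
    (h : HasUnmixedJet (u ∘ polarExp) f₁ f₂ f₁₁ f₂₂ p) :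
    f₁₁ + f₂₂ = (‖polarExp p‖ : ℂ) ^ 2 * lap u (polarExp p) := by
  have hu := contDiffAt_of_comp_polarExp h.contDiffAt
  have hfderiv := h.eventually_eq_fderiv
  have hD : HasFDerivAt (fderiv ℝ u) (fderiv ℝ (fderiv ℝ u) (polarExp p)) (polarExp p) :=
    ((hu.fderiv_right (m := 1) (by norm_num)).differentiableAt (by norm_num)).hasFDerivAt
  have h₁₁ : f₁₁ = fderiv ℝ (fderiv ℝ u) (polarExp p) (polarExp p) (polarExp p) +
      fderiv ℝ u (polarExp p) (polarExp p) := by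
    have hcurve := hasDerivAt_polarExp_fst p
    have hDcurve : HasDerivAt (fun s => fderiv ℝ u (polarExp (s, p.2)))
        (fderiv ℝ (fderiv ℝ u) (polarExp p) (polarExp p)) p.1 := hD.comp_hasDerivAt p.1 hcurve
    refine h.hasDerivAt_fst_fst.unique ((hDcurve.clm_apply hcurve).congr_of_eventuallyEq ?_)
    filter_upwards [(Continuous.prodMk_left p.2).continuousAt.eventually hfderiv] with s hs
    exact hs.1
  have h₂₂ : f₂₂ = fderiv ℝ (fderiv ℝ u) (polarExp p) (quarterTurn (polarExp p))
      (quarterTurn (polarExp p)) - fderiv ℝ u (polarExp p) (polarExp p) := by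
    have hcurve := hasDerivAt_polarExp_snd p
    have hDcurve : HasDerivAt (fun θ => fderiv ℝ u (polarExp (p.1, θ)))
        (fderiv ℝ (fderiv ℝ u) (polarExp p) (quarterTurn (polarExp p))) p.2 :=
      hD.comp_hasDerivAt p.2 hcurve
    have hturn : HasDerivAt (fun θ => quarterTurn (polarExp (p.1, θ))) (-polarExp p) p.2 :=
      quarterTurn_quarterTurn (polarExp p) ▸ quarterTurn.hasFDerivAt.comp_hasDerivAt p.2 hcurve
    have hderiv := hDcurve.clm_apply hturn
    rw [map_neg, ← sub_eq_add_neg] at hderiv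
    refine h.hasDerivAt_snd_snd.unique (hderiv.congr_of_eventuallyEq ?_)
    filter_upwards [(Continuous.prodMk_right p.1).continuousAt.eventually hfderiv] with θ hθ
    exact hθ.2
  rw [lap_eq_sum_fderiv_fderiv hu, norm_sq_mul_trace_eq, h₁₁, h₂₂]
  ring

end PolarJet

/-- The function on the plane whose expression in logarithmic polar coordinates is `F`, extended
by zero to the origin. -/
def ofPolar (F : ℝ × ℝ → ℂ) (x : Plane) : ℂ :=
  if x = 0 then 0 else F (Real.log ‖x‖, Complex.arg (complexCoord x))

theorem ofPolar_zero (F : ℝ × ℝ → ℂ) : ofPolar F 0 = 0 := if_pos rfl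

theorem ofPolar_of_ne_zero (F : ℝ × ℝ → ℂ) {x : Plane} (hx : x ≠ 0) :
    ofPolar F x = F (Real.log ‖x‖, Complex.arg (complexCoord x)) := if_neg hx

theorem ofPolar_comp_polarExp {F : ℝ × ℝ → ℂ}
    (hF : ∀ s, Function.Periodic (fun θ => F (s, θ)) (2 * Real.pi)) :
    ofPolar F ∘ polarExp = F := by
  funext p
  have hne : polarExp p ≠ 0 := by
    rw [← norm_pos_iff, norm_polarExp]; exact Real.exp_pos _
  rw [Function.comp_apply, ofPolar_of_ne_zero F hne, norm_polarExp, Real.log_exp,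
    complexCoord_polarExp, Complex.arg_exp]
  have him : (p.1 + p.2 * Complex.I : ℂ).im = p.2 := by simp
  rw [him, ← self_sub_toIocDiv_zsmul]
  exact (hF p.1).sub_zsmul_eq _

/-! ### WKB rates for `f'' = (n² - n² w) f` -/

/-- The principal square root `√(1 - w)`. -/
def wkbRoot (w : ℂ) : ℂ := (1 - w) ^ (2⁻¹ : ℂ)

/-- The second order WKB exponential rate of `f'' = n² (1 - w) f` when `w' = 2 w`. -/
def meanRate (n : ℝ) (w : ℂ) : ℂ := n * wkbRoot w + w / (2 * wkbRoot w ^ 2)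

/-- Half of the difference of the rates at which two modes of frequencies `n` and `n + k` may
cross, see `crossingPotential_eq`. -/
def rateShift (n k : ℝ) (w : ℂ) : ℂ := k * (2 - k / n) / (4 * wkbRoot w)

/-- The derivative of `meanRate n` along `w' = 2 w`. -/
def meanRateDeriv (n : ℝ) (w : ℂ) : ℂ :=
  -n * w / wkbRoot w + w / wkbRoot w ^ 2 + w ^ 2 / wkbRoot w ^ 4

/-- The derivative of `rateShift n k` along `w' = 2 w`. -/
def rateShiftDeriv (n k : ℝ) (w : ℂ) : ℂ := rateShift n k w * w / wkbRoot w ^ 2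

/-- The potential by which a mode of frequency `n` and rate `meanRate + rateShift` fails to solve
the equation. -/
def crossingPotential (n k : ℝ) (w : ℂ) : ℂ :=
  (meanRate n w + rateShift n k w) ^ 2 - (meanRateDeriv n w + rateShiftDeriv n k w) - n ^ 2 +
    n ^ 2 * w

section WKB

variable {n k : ℝ} {w w' : ℂ}

theorem wkbRoot_sq (w : ℂ) : wkbRoot w ^ 2 = 1 - w :=
  Complex.cpow_nat_inv_pow _ two_ne_zero

theorem wkbRoot_re_nonneg (w : ℂ) : 0 ≤ (wkbRoot w).re := by
  rw [wkbRoot, Complex.cpow_inv_two_re]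
  exact Real.sqrt_nonneg _

theorem norm_wkbRoot_sub_one_le (w : ℂ) : ‖wkbRoot w - 1‖ ≤ ‖w‖ := by
  have hmul : (wkbRoot w - 1) * (wkbRoot w + 1) = -w := by linear_combination wkbRoot_sq w
  have hone : 1 ≤ ‖wkbRoot w + 1‖ := by
    refine le_trans ?_ (Complex.re_le_norm _)
    simpa using wkbRoot_re_nonneg w
  have hnorm := congrArg norm hmul
  rw [norm_mul, norm_neg] at hnorm
  rw [← hnorm]
  exact le_mul_of_one_le_right (norm_nonneg _) hone

theorem one_sub_norm_le_wkbRoot_re (w : ℂ) : 1 - ‖w‖ ≤ (wkbRoot w).re := by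
  have hre := (Complex.abs_re_le_norm (wkbRoot w - 1)).trans (norm_wkbRoot_sub_one_le w)
  rw [Complex.sub_re, Complex.one_re] at hre
  linarith [(abs_le.1 hre).1]

theorem one_sub_norm_le_norm_wkbRoot (w : ℂ) : 1 - ‖w‖ ≤ ‖wkbRoot w‖ :=
  (one_sub_norm_le_wkbRoot_re w).trans (Complex.re_le_norm _)

theorem wkbRoot_ne_zero (hw : ‖w‖ < 1) : wkbRoot w ≠ 0 := by
  rw [← norm_pos_iff]
  linarith [one_sub_norm_le_norm_wkbRoot w]

theorem norm_div_wkbRoot_le (hw : ‖w‖ ≤ 1 / 100) : ‖w / wkbRoot w‖ ≤ 11 / 1000 := by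
  have hq := one_sub_norm_le_norm_wkbRoot w
  rw [norm_div, div_le_iff₀ (by linarith)]
  linarith

theorem norm_div_wkbRoot_sq_le (hw : ‖w‖ ≤ 1 / 100) : ‖w / wkbRoot w ^ 2‖ ≤ 11 / 1000 := by
  have hq := norm_sub_norm_le 1 w
  rw [norm_one] at hq
  rw [wkbRoot_sq, norm_div, div_le_iff₀ (by linarith)]
  linarith

theorem meanRate_eq (n : ℝ) (w : ℂ) :
    meanRate n w = n * wkbRoot w + w / wkbRoot w ^ 2 / 2 := by
  rw [meanRate, mul_comm 2, div_div]

theorem meanRateDeriv_eq (n : ℝ) (w : ℂ) : meanRateDeriv n w =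
    -n * (w / wkbRoot w) + w / wkbRoot w ^ 2 + (w / wkbRoot w ^ 2) ^ 2 := by
  rw [meanRateDeriv]
  ring

theorem norm_meanRate_sub_le (hn : 2 ≤ n) (hw : ‖w‖ ≤ 1 / 100) :
    ‖meanRate n w - n‖ ≤ n / 50 := by
  have hsplit : meanRate n w - n = n * (wkbRoot w - 1) + w / wkbRoot w ^ 2 / 2 := by
    rw [meanRate_eq]
    ring
  rw [hsplit]
  refine (norm_add_le _ _).trans ?_
  rw [norm_mul, norm_div, Complex.norm_real, Real.norm_of_nonneg (by linarith), Complex.norm_two]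
  nlinarith [norm_wkbRoot_sub_one_le w, norm_div_wkbRoot_sq_le hw]

theorem norm_meanRate_le (hn : 2 ≤ n) (hw : ‖w‖ ≤ 1 / 100) : ‖meanRate n w‖ ≤ 2 * n := by
  have h := norm_le_insert' (meanRate n w) n
  rw [Complex.norm_real, Real.norm_of_nonneg (by linarith)] at h
  linarith [norm_meanRate_sub_le hn hw]

theorem norm_rateShift_sub_le (hk : 0 ≤ k) (hkn : k ≤ n / 100) (hw : ‖w‖ ≤ 1 / 100) :
    ‖rateShift n k w - k / 2‖ ≤ k / 50 := by
  have hq := one_sub_norm_le_norm_wkbRoot w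
  have hq0 := wkbRoot_ne_zero (hw.trans_lt (by norm_num))
  have hratio : k / n ≤ 1 / 100 := div_le_of_le_mul₀ (by linarith) (by norm_num) (by linarith)
  have hsplit : rateShift n k w - k / 2 =
      k * ((2 * (1 - wkbRoot w) - ((k / n : ℝ) : ℂ)) / (4 * wkbRoot w)) := by
    rw [rateShift]
    push_cast
    field_simp
    ring
  have hnum : ‖2 * (1 - wkbRoot w) - ((k / n : ℝ) : ℂ)‖ ≤ 3 / 100 := by
    refine (norm_sub_le _ _).trans ?_
    rw [norm_mul, norm_sub_rev, Complex.norm_real,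
      Real.norm_of_nonneg (div_nonneg hk (by linarith)), Complex.norm_two]
    linarith [norm_wkbRoot_sub_one_le w]
  rw [hsplit, norm_mul, Complex.norm_real, Real.norm_of_nonneg hk, div_eq_mul_one_div k 50]
  refine mul_le_mul_of_nonneg_left ?_ hk
  rw [norm_div, norm_mul, Complex.norm_ofNat, div_le_iff₀ (by linarith)]
  linarith

theorem norm_rateShift_le (hk : 0 ≤ k) (hkn : k ≤ n / 100) (hw : ‖w‖ ≤ 1 / 100) :
    ‖rateShift n k w‖ ≤ k := by
  have h := norm_le_insert' (rateShift n k w) (k / 2)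
  rw [norm_div, Complex.norm_real, Real.norm_of_nonneg hk, Complex.norm_two] at h
  linarith [norm_rateShift_sub_le hk hkn hw]

theorem norm_meanRateDeriv_le (hn : 2 ≤ n) (hw : ‖w‖ ≤ 1 / 100) :
    ‖meanRateDeriv n w‖ ≤ n / 10 := by
  rw [meanRateDeriv_eq]
  refine norm_add₃_le.trans ?_
  rw [norm_mul, norm_neg, norm_pow, Complex.norm_real, Real.norm_of_nonneg (by linarith)]
  nlinarith [norm_div_wkbRoot_sq_le hw, norm_div_wkbRoot_le hw, norm_nonneg (w / wkbRoot w ^ 2)]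

theorem norm_rateShiftDeriv_le (hk : 0 ≤ k) (hkn : k ≤ n / 100) (hw : ‖w‖ ≤ 1 / 100) :
    ‖rateShiftDeriv n k w‖ ≤ k := by
  rw [rateShiftDeriv, mul_div_assoc, norm_mul]
  nlinarith [norm_rateShift_le hk hkn hw, norm_div_wkbRoot_sq_le hw,
    norm_nonneg (rateShift n k w), norm_nonneg (w / wkbRoot w ^ 2)]

/-- The shift is chosen so that `4 σ δ - 2 δ' = n² - (n - k)²` for `σ = meanRate`,
`δ = rateShift`: a mode of frequency `n - k` and rate `σ - δ` then fails to solve the equation by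
the same potential as a mode of frequency `n` and rate `σ + δ`. -/
theorem crossingPotential_eq (hn : n ≠ 0) (hw : ‖w‖ < 1) : crossingPotential n k w =
    (meanRate n w - rateShift n k w) ^ 2 - (meanRateDeriv n w - rateShiftDeriv n k w) -
      (n - k) ^ 2 + n ^ 2 * w := by
  have hq := wkbRoot_ne_zero hw
  have hn' : (n : ℂ) ≠ 0 := Complex.ofReal_ne_zero.2 hn
  have hshift : 4 * meanRate n w * rateShift n k w - 2 * rateShiftDeriv n k w =
      (k : ℂ) * (2 * n - k) := by
    rw [rateShiftDeriv, meanRate, rateShift]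
    field_simp
    ring
  rw [crossingPotential]
  linear_combination hshift

theorem crossingPotential_eq_add (hw : ‖w‖ < 1) : crossingPotential n k w =
    n * (w / wkbRoot w) + (w / wkbRoot w ^ 2) ^ 2 / 4 + 2 * meanRate n w * rateShift n k w +
      rateShift n k w ^ 2 - meanRateDeriv n w - rateShiftDeriv n k w := by
  have hq := wkbRoot_ne_zero hw
  have hsq : meanRate n w ^ 2 = n ^ 2 * wkbRoot w ^ 2 + n * (w / wkbRoot w) +
      (w / wkbRoot w ^ 2) ^ 2 / 4 := by
    rw [meanRate]
    field_simp
    ring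
  rw [crossingPotential]
  linear_combination hsq + (n : ℂ) ^ 2 * wkbRoot_sq w

theorem norm_crossingPotential_le (hk : 16 ≤ k) (hkn : k ≤ n / 100) (hw : ‖w‖ ≤ 1 / 100) :
    ‖crossingPotential n k w‖ ≤ 10 * (n * k) := by
  have hn : 1600 ≤ n := by linarith
  have hσ := norm_meanRate_le (n := n) (by linarith) hw
  have hδ := norm_rateShift_le (by linarith) hkn hw
  have h₁ : ‖(n : ℂ) * (w / wkbRoot w)‖ ≤ n := by
    rw [norm_mul, Complex.norm_real, Real.norm_of_nonneg (by linarith)]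
    nlinarith [norm_div_wkbRoot_le hw]
  have h₂ : ‖(w / wkbRoot w ^ 2) ^ 2 / 4‖ ≤ 1 := by
    rw [norm_div, norm_pow, Complex.norm_ofNat]
    nlinarith [norm_div_wkbRoot_sq_le hw, norm_nonneg (w / wkbRoot w ^ 2)]
  have h₃ : ‖2 * meanRate n w * rateShift n k w‖ ≤ 2 * (2 * n) * k := by
    rw [norm_mul, norm_mul, Complex.norm_two]
    gcongr
  have h₄ : ‖rateShift n k w ^ 2‖ ≤ k ^ 2 := by
    rw [norm_pow]
    gcongr
  rw [crossingPotential_eq_add (hw.trans_lt (by norm_num))]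
  calc _ ≤ n + 1 + 2 * (2 * n) * k + k ^ 2 + n / 10 + k :=
        norm_sub_le_of_le (norm_sub_le_of_le (norm_add_le_of_le (norm_add_le_of_le
          (norm_add_le_of_le h₁ h₂) h₃) h₄) (norm_meanRateDeriv_le (by linarith) hw))
          (norm_rateShiftDeriv_le (by linarith) hkn hw)
    _ ≤ 10 * (n * k) := by nlinarith

theorem norm_mul_wkbRoot_sub_le (hn : 0 < n) (hk : 0 < k) (hw : ‖w‖ ≤ 1 / 100)
    (hw' : ‖w'‖ ≤ 1 / 100) (h : (n : ℂ) ^ 2 * w = ((n + k : ℝ) : ℂ) ^ 2 * w') :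
    ‖n * wkbRoot w - (n + k : ℝ) * wkbRoot w'‖ ≤ 3 / 2 * k := by
  have hmul : (n * wkbRoot w - (n + k : ℝ) * wkbRoot w') *
      (n * wkbRoot w + (n + k : ℝ) * wkbRoot w') = ((n ^ 2 - (n + k) ^ 2 : ℝ) : ℂ) := by
    push_cast at h ⊢
    linear_combination (n : ℂ) ^ 2 * wkbRoot_sq w - ((n : ℂ) + k) ^ 2 * wkbRoot_sq w' - h
  have hsum : (n + (n + k)) * (99 / 100) ≤ ‖n * wkbRoot w + (n + k : ℝ) * wkbRoot w'‖ := by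
    refine le_trans ?_ (Complex.re_le_norm _)
    rw [Complex.add_re, Complex.re_ofReal_mul, Complex.re_ofReal_mul]
    nlinarith [one_sub_norm_le_wkbRoot_re w, one_sub_norm_le_wkbRoot_re w']
  have hnorm := congrArg norm hmul
  rw [norm_mul, Complex.norm_real, Real.norm_of_nonpos (by nlinarith)] at hnorm
  by_contra! hcon
  have : 3 / 2 * k * ((n + (n + k)) * (99 / 100)) < -(n ^ 2 - (n + k) ^ 2) :=
    hnorm ▸ mul_lt_mul hcon hsum (by positivity) (norm_nonneg _)
  nlinarith

theorem norm_meanRate_sub_meanRate_le (hn : 0 < n) (hk : 1 ≤ k) (hw : ‖w‖ ≤ 1 / 100)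
    (hw' : ‖w'‖ ≤ 1 / 100) (h : (n : ℂ) ^ 2 * w = ((n + k : ℝ) : ℂ) ^ 2 * w') :
    ‖meanRate n w - meanRate (n + k) w'‖ ≤ 2 * k := by
  have hroot := norm_mul_wkbRoot_sub_le hn (by linarith) hw hw' h
  have hcorr : ∀ {v : ℂ}, ‖v‖ ≤ 1 / 100 → ‖v / wkbRoot v ^ 2 / 2‖ ≤ 1 / 100 := fun hv => by
    rw [norm_div, Complex.norm_two]
    linarith [norm_div_wkbRoot_sq_le hv]
  rw [meanRate_eq, meanRate_eq, add_sub_add_comm]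
  refine (norm_add_le_of_le hroot (norm_sub_le_of_le (hcorr hw) (hcorr hw'))).trans ?_
  linarith

section Deriv

variable {w : ℝ → ℂ} {s : ℝ}

theorem hasDerivAt_wkbRoot_comp (hw : HasDerivAt w (2 * w s) s) (hlt : ‖w s‖ < 1) :
    HasDerivAt (fun s => wkbRoot (w s)) (-w s / wkbRoot (w s)) s := by
  have hmem : 1 - w s ∈ Complex.slitPlane := by
    rw [sub_eq_add_neg]
    exact Complex.mem_slitPlane_of_norm_lt_one (by rwa [norm_neg])
  have hq := wkbRoot_ne_zero hlt
  have h := ((hasDerivAt_id (1 - w s)).cpow_const (c := (2⁻¹ : ℂ)) hmem).comp s (hw.const_sub 1)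
  refine h.congr_deriv ?_
  rw [id, Complex.cpow_sub _ _ (Complex.slitPlane_ne_zero hmem), Complex.cpow_one, ← wkbRoot,
    ← wkbRoot_sq]
  field_simp

theorem hasDerivAt_meanRate_comp (n : ℝ) (hw : HasDerivAt w (2 * w s) s) (hlt : ‖w s‖ < 1) :
    HasDerivAt (fun s => meanRate n (w s)) (meanRateDeriv n (w s)) s := by
  have hq := wkbRoot_ne_zero hlt
  have hroot := hasDerivAt_wkbRoot_comp hw hlt
  have h := (hroot.const_mul (n : ℂ)).add (hw.div ((hroot.pow 2).const_mul (2 : ℂ))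
    (mul_ne_zero two_ne_zero (pow_ne_zero 2 hq)))
  refine h.congr_deriv ?_
  rw [meanRateDeriv]
  simp only [Pi.pow_apply]
  push_cast
  field_simp
  ring

theorem hasDerivAt_rateShift_comp (n k : ℝ) (hw : HasDerivAt w (2 * w s) s) (hlt : ‖w s‖ < 1) :
    HasDerivAt (fun s => rateShift n k (w s)) (rateShiftDeriv n k (w s)) s := by
  have hq := wkbRoot_ne_zero hlt
  have h := (hasDerivAt_const s ((k : ℂ) * (2 - k / n))).div
    ((hasDerivAt_wkbRoot_comp hw hlt).const_mul (4 : ℂ)) (mul_ne_zero (by norm_num) hq)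
  refine h.congr_deriv ?_
  rw [rateShiftDeriv, rateShift]
  field_simp
  ring

end Deriv

end WKB

/-! ### The radial clock and its cutoffs -/

/-- The clock `t = r ^ (β / 2)` as a function of `s = log r`; the `j`-th crossing of modes takes
place at `t = j`. -/
def radialClock (β s : ℝ) : ℝ := Real.exp (β / 2 * s)

/-- A smooth cutoff in the clock, equal to `0` where `a t + b ≤ 0` and to `1` where
`1 ≤ a t + b`. -/
def cutoff (β a b s : ℝ) : ℝ := Real.smoothTransition (a * radialClock β s + b)

theorem contDiff_deriv_smoothTransition : ContDiff ℝ 1 (deriv Real.smoothTransition) :=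
  ((contDiff_succ_iff_deriv (n := 1)).1 (Real.smoothTransition.contDiff (n := 2))).2.2

theorem hasCompactSupport_deriv_smoothTransition :
    HasCompactSupport (deriv Real.smoothTransition) := by
  refine HasCompactSupport.intro (isCompact_Icc (a := 0) (b := 1)) fun x hx => ?_
  rw [Set.mem_Icc, not_and_or, not_le, not_le] at hx
  rcases hx with hx | hx
  · have hzero : Real.smoothTransition =ᶠ[𝓝 x] fun _ => 0 := by
      filter_upwards [Iio_mem_nhds hx] with y hy
      exact Real.smoothTransition.zero_of_nonpos (le_of_lt hy)
    rw [hzero.deriv_eq, deriv_const]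
  · have hone : Real.smoothTransition =ᶠ[𝓝 x] fun _ => 1 := by
      filter_upwards [Ioi_mem_nhds hx] with y hy
      exact Real.smoothTransition.one_of_one_le (le_of_lt hy)
    rw [hone.deriv_eq, deriv_const]

theorem exists_abs_deriv_smoothTransition_le : ∃ B, 0 ≤ B ∧
    (∀ x, |deriv Real.smoothTransition x| ≤ B) ∧
      ∀ x, |deriv (deriv Real.smoothTransition) x| ≤ B := by
  obtain ⟨B₁, h₁⟩ := hasCompactSupport_deriv_smoothTransition.exists_bound_of_continuous
    contDiff_deriv_smoothTransition.continuous
  obtain ⟨B₂, h₂⟩ := hasCompactSupport_deriv_smoothTransition.deriv.exists_bound_of_continuous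
    (contDiff_deriv_smoothTransition.continuous_deriv le_rfl)
  exact ⟨max B₁ B₂, le_max_of_le_left ((norm_nonneg _).trans (h₁ 0)),
    fun x => (h₁ x).trans (le_max_left _ _), fun x => (h₂ x).trans (le_max_right _ _)⟩

section Cutoff

variable {β a b s : ℝ}

theorem radialClock_pos : 0 < radialClock β s := Real.exp_pos _

theorem hasDerivAt_radialClock (β s : ℝ) :
    HasDerivAt (radialClock β) (β / 2 * radialClock β s) s := by
  have h := ((hasDerivAt_id s).const_mul (β / 2)).exp
  rw [mul_one, mul_comm] at h
  exact h

theorem contDiff_radialClock {n : WithTop ℕ∞} : ContDiff ℝ n (radialClock β) := by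
  unfold radialClock
  fun_prop

theorem radialClock_strictMono (hβ : 0 < β) : StrictMono (radialClock β) := fun _ _ hxy =>
  Real.exp_lt_exp.2 (mul_lt_mul_of_pos_left hxy (half_pos hβ))

theorem hasDerivAt_cutoff (β a b s : ℝ) : HasDerivAt (cutoff β a b)
    (deriv Real.smoothTransition (a * radialClock β s + b) * (a * (β / 2 * radialClock β s))) s :=
  ((Real.smoothTransition.contDiff (n := 2)).differentiable (by norm_num) _).hasDerivAt.comp s
    (((hasDerivAt_radialClock β s).const_mul a).add_const b)

theorem hasDerivAt_deriv_cutoff (β a b s : ℝ) : HasDerivAt (deriv (cutoff β a b))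
    (deriv (deriv Real.smoothTransition) (a * radialClock β s + b) *
        (a * (β / 2 * radialClock β s)) ^ 2 +
      deriv Real.smoothTransition (a * radialClock β s + b) *
        (a * (β / 2 * (β / 2 * radialClock β s)))) s := by
  have houter := (contDiff_deriv_smoothTransition.differentiable (by norm_num)
    (a * radialClock β s + b)).hasDerivAt.comp s
      (((hasDerivAt_radialClock β s).const_mul a).add_const b)
  have hinner := ((hasDerivAt_radialClock β s).const_mul (β / 2)).const_mul a
  rw [funext fun s => (hasDerivAt_cutoff β a b s).deriv]
  refine (houter.mul hinner).congr_deriv ?_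
  rw [Function.comp_apply]
  ring

theorem contDiff_cutoff {n : ℕ∞} : ContDiff ℝ n (cutoff β a b) :=
  Real.smoothTransition.contDiff.comp ((contDiff_const.mul contDiff_radialClock).add
    contDiff_const)

theorem cutoff_nonneg : 0 ≤ cutoff β a b s := Real.smoothTransition.nonneg _

theorem abs_cutoff_le_one : |cutoff β a b s| ≤ 1 := by
  rw [abs_of_nonneg cutoff_nonneg]
  exact Real.smoothTransition.le_one _

theorem cutoff_eq_zero (h : a * radialClock β s + b ≤ 0) : cutoff β a b s = 0 :=
  Real.smoothTransition.zero_of_nonpos h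

theorem cutoff_eq_one (h : 1 ≤ a * radialClock β s + b) : cutoff β a b s = 1 :=
  Real.smoothTransition.one_of_one_le h

theorem deriv_cutoff_eq_zero
    (h : a * radialClock β s + b < 0 ∨ 1 < a * radialClock β s + b) :
    deriv (cutoff β a b) s = 0 ∧ deriv (deriv (cutoff β a b)) s = 0 := by
  have hcont : ContinuousAt (fun x => a * radialClock β x + b) s :=
    (((contDiff_radialClock (n := 0)).continuous.const_mul a).add_const b).continuousAt
  obtain ⟨c, hc⟩ : ∃ c, cutoff β a b =ᶠ[𝓝 s] fun _ => c := by
    rcases h with h | h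
    · exact ⟨0, (hcont.eventually_lt_const h).mono fun x hx => cutoff_eq_zero hx.le⟩
    · exact ⟨1, (hcont.eventually_const_lt h).mono fun x hx => cutoff_eq_one hx.le⟩
  exact ⟨by rw [hc.deriv_eq, deriv_const], by rw [hc.deriv.deriv_eq, deriv_const', deriv_const]⟩

/-- Both derivatives cost a factor `t` at most, since `t' = β t / 2`. -/
theorem exists_abs_deriv_cutoff_le (A : ℝ) : ∃ B, 0 ≤ B ∧ ∀ β a b s, 0 ≤ β → β ≤ 2 → |a| ≤ A →
    |deriv (cutoff β a b) s| ≤ B * radialClock β s ∧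
      (1 ≤ radialClock β s → |deriv (deriv (cutoff β a b)) s| ≤ B * radialClock β s ^ 2) := by
  obtain ⟨B, hB0, hB₁, hB₂⟩ := exists_abs_deriv_smoothTransition_le
  refine ⟨B * (A ^ 2 + |A|), by positivity, fun β a b s hβ0 hβ2 ha => ?_⟩
  set t := radialClock β s with ht
  have ht0 : 0 < t := radialClock_pos
  have hA : |a| ≤ |A| := ha.trans (le_abs_self A)
  have hhalf : β / 2 * t ≤ t := mul_le_of_le_one_left ht0.le (by linarith)
  have hdt : |a * (β / 2 * t)| ≤ |A| * t := by
    rw [abs_mul, abs_of_nonneg (by positivity : 0 ≤ β / 2 * t)]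
    gcongr
  have hddt : |a * (β / 2 * (β / 2 * t))| ≤ |A| * t := by
    rw [abs_mul, abs_of_nonneg (by positivity : 0 ≤ β / 2 * (β / 2 * t))]
    gcongr
    exact (mul_le_of_le_one_left (by positivity) (by linarith)).trans hhalf
  rw [(hasDerivAt_deriv_cutoff β a b s).deriv, (hasDerivAt_cutoff β a b s).deriv, ← ht]
  refine ⟨?_, fun ht1 => (abs_add_le _ _).trans ?_⟩
  · rw [abs_mul]
    calc _ ≤ B * (|A| * t) := by gcongr; exact hB₁ _
      _ ≤ B * (A ^ 2 + |A|) * t := by nlinarith [mul_nonneg (mul_nonneg hB0 (sq_nonneg A)) ht0.le]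
  · rw [abs_mul, abs_mul, abs_pow]
    calc _ ≤ B * (|A| * t) ^ 2 + B * (|A| * t) := by gcongr; exacts [hB₂ _, hB₁ _]
      _ ≤ B * (|A| * t) ^ 2 + B * (|A| * t ^ 2) := by
        gcongr
        exact le_self_pow₀ ht1 two_ne_zero
      _ = B * (A ^ 2 + |A|) * t ^ 2 := by rw [mul_pow, sq_abs]; ring

end Cutoff

/-! ### The modes -/

/-- The angular frequency `n_j` of the `j`-th mode. -/
def angularFreq (j : ℕ) : ℝ := 16 * j ^ 2

/-- The gap `k_j = n_{j + 1} - n_j`. -/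
def freqGap (j : ℕ) : ℝ := 16 * (2 * j + 1)

/-- The spectral term relative to the `j`-th frequency: `w_j = λ r² / n_j²` with `r = exp s`. -/
def relPotential (lam : ℂ) (j : ℕ) (s : ℝ) : ℂ :=
  lam * Complex.exp (2 * s) / (angularFreq j : ℂ) ^ 2

/-- The rate of decay of mode `j` when it is being overtaken by mode `j + 1`. -/
def leaveRate (lam : ℂ) (j : ℕ) (s : ℝ) : ℂ :=
  meanRate (angularFreq j) (relPotential lam j s) +
    rateShift (angularFreq j) (freqGap j) (relPotential lam j s)

/-- The derivative of `leaveRate`. -/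
def leaveRateDeriv (lam : ℂ) (j : ℕ) (s : ℝ) : ℂ :=
  meanRateDeriv (angularFreq j) (relPotential lam j s) +
    rateShiftDeriv (angularFreq j) (freqGap j) (relPotential lam j s)

/-- The rate of decay of mode `i` when it overtakes mode `i - 1`. The initial mode `J` has overtaken
nobody: it starts out as the harmonic function `z ^ n_J`. -/
def enterRate (lam : ℂ) (J i : ℕ) (s : ℝ) : ℂ :=
  if i ≤ J then -angularFreq i else
    meanRate (angularFreq (i - 1)) (relPotential lam (i - 1) s) -
      rateShift (angularFreq (i - 1)) (freqGap (i - 1)) (relPotential lam (i - 1) s)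

/-- The derivative of `enterRate`. -/
def enterRateDeriv (lam : ℂ) (J i : ℕ) (s : ℝ) : ℂ :=
  if i ≤ J then 0 else
    meanRateDeriv (angularFreq (i - 1)) (relPotential lam (i - 1) s) -
      rateShiftDeriv (angularFreq (i - 1)) (freqGap (i - 1)) (relPotential lam (i - 1) s)

/-- The cutoff along which mode `i` passes from `enterRate` to `leaveRate`: it is `1` up to the
clock time `i - 11 / 16` and `0` from `i - 5 / 16` on. -/
def switch (β : ℝ) (i : ℕ) : ℝ → ℝ := cutoff β (-8 / 3) (11 / 6 + 8 / 3 * ((i : ℝ) - 1))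

/-- The rate of decay of mode `i`. -/
def modeRate (lam : ℂ) (β : ℝ) (J i : ℕ) (s : ℝ) : ℂ :=
  leaveRate lam i s + switch β i s * (enterRate lam J i s - leaveRate lam i s)

/-- The derivative of `modeRate`. -/
def modeRateDeriv (lam : ℂ) (β : ℝ) (J i : ℕ) (s : ℝ) : ℂ :=
  leaveRateDeriv lam i s + (deriv (switch β i) s * (enterRate lam J i s - leaveRate lam i s) +
    switch β i s * (enterRateDeriv lam J i s - leaveRateDeriv lam i s))

/-- The value of `s = log r` at which the clock shows `i`. -/
def crossingTime (β : ℝ) (i : ℕ) : ℝ := 2 / β * Real.log i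

/-- A primitive of `modeRate`, normalised so that the modes `i` and `i + 1` agree in size at their
crossing. -/
def modeAction (lam : ℂ) (β : ℝ) (J i : ℕ) (s : ℝ) : ℂ :=
  (∑ m ∈ Finset.range i,
      ∫ x in (crossingTime β m)..(crossingTime β (m + 1)), modeRate lam β J (m + 1) x) +
    ∫ x in (crossingTime β i)..s, modeRate lam β J i x

/-- The clock regime in which the spectral term `λ u` is a small perturbation for all modes in use,
the first of which is `J`. -/
structure WKBRegime (lam : ℂ) (β : ℝ) (J : ℕ) : Prop where
  le_start : 300 ≤ J
  one_lt : 1 < β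
  le_two : β ≤ 2
  norm_relPotential_le : ∀ j, J ≤ j + 1 → ∀ s, radialClock β s ≤ j + 2 →
    ‖relPotential lam j s‖ ≤ 1 / 100

section Freq

variable {i j : ℕ}

theorem angularFreq_succ (j : ℕ) : angularFreq (j + 1) = angularFreq j + freqGap j := by
  simp only [angularFreq, freqGap]
  push_cast
  ring

theorem angularFreq_nonneg : 0 ≤ angularFreq j := by
  unfold angularFreq
  positivity

theorem angularFreq_mono : Monotone angularFreq := fun i j h => by
  unfold angularFreq
  gcongr

theorem freqGap_mono : Monotone freqGap := fun i j h => by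
  unfold freqGap
  gcongr

theorem sixteen_le_freqGap : 16 ≤ freqGap j := by
  unfold freqGap
  linarith [Nat.cast_nonneg (α := ℝ) j]

theorem freqGap_le (hj : 299 ≤ j) : freqGap j ≤ angularFreq j / 100 := by
  have : (299 : ℝ) ≤ j := by exact_mod_cast hj
  unfold freqGap angularFreq
  nlinarith

theorem le_angularFreq (hj : 299 ≤ j) : 1000 ≤ angularFreq j := by
  have : (299 : ℝ) ≤ j := by exact_mod_cast hj
  unfold angularFreq
  nlinarith

theorem angularFreq_pos (hj : 1 ≤ j) : 0 < angularFreq j := by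
  have : (0 : ℝ) < j := by exact_mod_cast hj
  unfold angularFreq
  positivity

theorem angularFreq_sq_mul_relPotential (hj : 1 ≤ j) (lam : ℂ) (s : ℝ) :
    (angularFreq j : ℂ) ^ 2 * relPotential lam j s = lam * Complex.exp (2 * s) :=
  mul_div_cancel₀ _ (pow_ne_zero 2 (Complex.ofReal_ne_zero.2 (angularFreq_pos hj).ne'))

theorem contDiff_relPotential {lam : ℂ} {n : WithTop ℕ∞} : ContDiff ℝ n (relPotential lam j) := by
  unfold relPotential
  exact (contDiff_const.mul
    (contDiff_const.mul Complex.ofRealCLM.contDiff).cexp).div_const _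

theorem hasDerivAt_relPotential (lam : ℂ) (j : ℕ) (s : ℝ) :
    HasDerivAt (relPotential lam j) (2 * relPotential lam j s) s := by
  have h := (((hasDerivAt_id s).ofReal_comp.const_mul (2 : ℂ)).cexp.const_mul lam).div_const
    ((angularFreq j : ℂ) ^ 2)
  refine h.congr_deriv ?_
  simp only [relPotential, id, Complex.ofReal_one]
  ring

end Freq

theorem radialClock_crossingTime {β : ℝ} (hβ : 0 < β) {i : ℕ} (hi : 1 ≤ i) :
    radialClock β (crossingTime β i) = i := by
  have hlog : β / 2 * (2 / β * Real.log i) = Real.log i := by field_simp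
  rw [radialClock, crossingTime, hlog, Real.exp_log (by exact_mod_cast hi)]

section Smoothness

variable {w : ℝ → ℂ} {s : ℝ} {m : WithTop ℕ∞}

theorem contDiffAt_wkbRoot_comp (hw : ContDiffAt ℝ m w s) (hlt : ‖w s‖ < 1) :
    ContDiffAt ℝ m (fun s => wkbRoot (w s)) s := by
  have hmem : 1 - w s ∈ Complex.slitPlane := by
    rw [sub_eq_add_neg]
    exact Complex.mem_slitPlane_of_norm_lt_one (by rwa [norm_neg])
  have hroot : ContDiffAt ℝ m wkbRoot (w s) :=
    ((analyticAt_const.sub analyticAt_id).cpow analyticAt_const hmem).contDiffAt.restrict_scalars ℝ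
  exact hroot.comp s hw

theorem contDiffAt_meanRate_comp (n : ℝ) (hw : ContDiffAt ℝ m w s) (hlt : ‖w s‖ < 1) :
    ContDiffAt ℝ m (fun s => meanRate n (w s)) s := by
  have hroot := contDiffAt_wkbRoot_comp hw hlt
  have hne : 2 * wkbRoot (w s) ^ 2 ≠ 0 := by simp [wkbRoot_ne_zero hlt]
  simp only [meanRate, div_eq_mul_inv]
  exact (contDiffAt_const.mul hroot).add
    (hw.mul ((contDiffAt_const.mul (hroot.pow 2)).inv hne))

theorem contDiffAt_rateShift_comp (n k : ℝ) (hw : ContDiffAt ℝ m w s) (hlt : ‖w s‖ < 1) :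
    ContDiffAt ℝ m (fun s => rateShift n k (w s)) s := by
  have hne : 4 * wkbRoot (w s) ≠ 0 := by simp [wkbRoot_ne_zero hlt]
  simp only [rateShift, div_eq_mul_inv]
  exact contDiffAt_const.mul ((contDiffAt_const.mul (contDiffAt_wkbRoot_comp hw hlt)).inv hne)

theorem contDiffAt_two_of_hasDerivAt {w₁ : ℝ → ℂ} (h : ∀ᶠ x in 𝓝 s, HasDerivAt w (w₁ x) x)
    (h₁ : ContDiffAt ℝ 1 w₁ s) : ContDiffAt ℝ 2 w s := by
  obtain ⟨t, ht, hder⟩ := eventually_iff_exists_mem.1 h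
  exact (contDiffAt_succ_iff_hasFDerivAt (n := 1)).2
    ⟨fun x => ContinuousLinearMap.toSpanSingleton ℝ (w₁ x), ⟨t, ht, fun x hx => hder x hx⟩,
      (ContinuousLinearMap.toSpanSingletonCLE (𝕜 := ℝ) (E := ℂ)).contDiff.contDiffAt.comp s h₁⟩

end Smoothness

namespace WKBRegime

variable {lam : ℂ} {β : ℝ} {J i : ℕ} {s : ℝ}

theorem pos (H : WKBRegime lam β J) : 0 < β := one_pos.trans H.one_lt

theorem norm_relPotential_le_of_le (H : WKBRegime lam β J) (hi : J ≤ i)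
    (hs : radialClock β s ≤ i + 1) : ‖relPotential lam i s‖ ≤ 1 / 100 :=
  H.norm_relPotential_le i (by omega) s (by linarith)

theorem norm_relPotential_pred_le (H : WKBRegime lam β J) (hi : J ≤ i)
    (hs : radialClock β s ≤ i + 1) : ‖relPotential lam (i - 1) s‖ ≤ 1 / 100 := by
  have hJ := H.le_start
  refine H.norm_relPotential_le (i - 1) (by omega) s ?_
  rw [Nat.cast_sub (by omega), Nat.cast_one]
  linarith

theorem hasDerivAt_leaveRate (H : WKBRegime lam β J) (hi : J ≤ i)
    (hs : radialClock β s ≤ i + 1) : HasDerivAt (leaveRate lam i) (leaveRateDeriv lam i s) s := by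
  have hw := (H.norm_relPotential_le_of_le hi hs).trans_lt (by norm_num : (1 : ℝ) / 100 < 1)
  have hd := hasDerivAt_relPotential lam i s
  exact (hasDerivAt_meanRate_comp _ hd hw).add (hasDerivAt_rateShift_comp _ _ hd hw)

theorem hasDerivAt_enterRate (H : WKBRegime lam β J) (hi : J ≤ i)
    (hs : radialClock β s ≤ i + 1) :
    HasDerivAt (enterRate lam J i) (enterRateDeriv lam J i s) s := by
  have hw := (H.norm_relPotential_pred_le hi hs).trans_lt (by norm_num : (1 : ℝ) / 100 < 1)
  have hd := hasDerivAt_relPotential lam (i - 1) s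
  unfold enterRate enterRateDeriv
  split_ifs with h
  · exact hasDerivAt_const _ _
  · exact (hasDerivAt_meanRate_comp _ hd hw).sub (hasDerivAt_rateShift_comp _ _ hd hw)

theorem contDiffAt_leaveRate (H : WKBRegime lam β J) (hi : J ≤ i)
    (hs : radialClock β s ≤ i + 1) {m : WithTop ℕ∞} : ContDiffAt ℝ m (leaveRate lam i) s := by
  have hw := (H.norm_relPotential_le_of_le hi hs).trans_lt (by norm_num : (1 : ℝ) / 100 < 1)
  have hd := (contDiff_relPotential (lam := lam) (j := i) (n := m)).contDiffAt (x := s)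
  exact (contDiffAt_meanRate_comp _ hd hw).add (contDiffAt_rateShift_comp _ _ hd hw)

theorem contDiffAt_enterRate (H : WKBRegime lam β J) (hi : J ≤ i)
    (hs : radialClock β s ≤ i + 1) {m : WithTop ℕ∞} : ContDiffAt ℝ m (enterRate lam J i) s := by
  have hw := (H.norm_relPotential_pred_le hi hs).trans_lt (by norm_num : (1 : ℝ) / 100 < 1)
  have hd := (contDiff_relPotential (lam := lam) (j := i - 1) (n := m)).contDiffAt (x := s)
  unfold enterRate
  split_ifs with h
  · exact contDiffAt_const
  · exact (contDiffAt_meanRate_comp _ hd hw).sub (contDiffAt_rateShift_comp _ _ hd hw)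

theorem hasDerivAt_modeRate (H : WKBRegime lam β J) (hi : J ≤ i)
    (hs : radialClock β s ≤ i + 1) :
    HasDerivAt (modeRate lam β J i) (modeRateDeriv lam β J i s) s := by
  have hleave := H.hasDerivAt_leaveRate hi hs
  have hswitch : HasDerivAt (switch β i) (deriv (switch β i) s) s :=
    (hasDerivAt_cutoff _ _ _ _).differentiableAt.hasDerivAt
  exact hleave.add (hswitch.ofReal_comp.mul ((H.hasDerivAt_enterRate hi hs).sub hleave))

theorem contDiffAt_modeRate (H : WKBRegime lam β J) (hi : J ≤ i)
    (hs : radialClock β s ≤ i + 1) {m : ℕ∞} : ContDiffAt ℝ m (modeRate lam β J i) s := by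
  have hleave := H.contDiffAt_leaveRate hi hs (m := m)
  have hswitch : ContDiff ℝ m (fun s => (switch β i s : ℂ)) :=
    Complex.ofRealCLM.contDiff.comp contDiff_cutoff
  exact hleave.add (hswitch.contDiffAt.mul ((H.contDiffAt_enterRate hi hs).sub hleave))

theorem hasDerivAt_modeAction (H : WKBRegime lam β J) (hi : J ≤ i)
    (hs : radialClock β s < i + 1) :
    HasDerivAt (modeAction lam β J i) (modeRate lam β J i s) s := by
  have hJ := H.le_start
  have hmono := radialClock_strictMono H.pos
  have hend : radialClock β (crossingTime β (i + 1)) = i + 1 := by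
    rw [radialClock_crossingTime H.pos (by omega), Nat.cast_succ]
  have hcont : ContinuousOn (modeRate lam β J i) (Set.Iio (crossingTime β (i + 1))) :=
    fun x hx => (H.contDiffAt_modeRate hi (m := 0)
      (hend ▸ (hmono hx).le)).continuousAt.continuousWithinAt
  have hsmem : s < crossingTime β (i + 1) := hmono.lt_iff_lt.1 (hend.symm ▸ hs)
  have himem : crossingTime β i < crossingTime β (i + 1) := by
    rw [← hmono.lt_iff_lt, hend, radialClock_crossingTime H.pos (by omega)]
    exact lt_add_one _
  refine (intervalIntegral.integral_hasDerivAt_right ?_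
    (hcont.stronglyMeasurableAtFilter isOpen_Iio s hsmem)
    (hcont.continuousAt (Iio_mem_nhds hsmem))).const_add _
  exact (hcont.mono (Set.ordConnected_Iio.uIcc_subset himem hsmem)).intervalIntegrable

theorem eventually_hasDerivAt_modeAction (H : WKBRegime lam β J) (hi : J ≤ i)
    (hs : radialClock β s < i + 1) :
    ∀ᶠ x in 𝓝 s, HasDerivAt (modeAction lam β J i) (modeRate lam β J i x) x := by
  filter_upwards [(contDiff_radialClock (n := 0)).continuous.continuousAt.eventually_lt_const hs]
    with x hx using H.hasDerivAt_modeAction hi hx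

theorem contDiffAt_modeAction (H : WKBRegime lam β J) (hi : J ≤ i)
    (hs : radialClock β s < i + 1) : ContDiffAt ℝ 2 (modeAction lam β J i) s :=
  contDiffAt_two_of_hasDerivAt (H.eventually_hasDerivAt_modeAction hi hs)
    (H.contDiffAt_modeRate hi hs.le (m := 1))

end WKBRegime

theorem modeAction_succ_crossingTime {lam : ℂ} {β : ℝ} {J i : ℕ} :
    modeAction lam β J (i + 1) (crossingTime β i) = modeAction lam β J i (crossingTime β i) := by
  rw [modeAction, modeAction, Finset.sum_range_succ, intervalIntegral.integral_same,
    intervalIntegral.integral_symm (crossingTime β i), add_neg_cancel_right, add_zero]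

/-- Consecutive modes rotate in opposite directions. -/
def modeSign (J i : ℕ) : ℝ := (-1) ^ (i + J)

/-- The frequency `n_{i - 1} + n_i` of the quotient of the modes `i - 1` and `i`. -/
def crossFreq (i : ℕ) : ℝ := angularFreq (i - 1) + angularFreq i

/-- The amplitude of the angular correction which mode `i` carries while it overtakes
mode `i - 1`. -/
def twistAmplitude (J i : ℕ) : ℝ := if i ≤ J then 0 else 2 * freqGap (i - 1)

/-- The angular correction of mode `i` while it overtakes mode `i - 1`. -/
def twist (J i : ℕ) (θ : ℝ) : ℝ :=
  twistAmplitude J i / crossFreq i * Real.sin (crossFreq i * θ)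

/-- The derivative of `twist`. -/
def twistDeriv (J i : ℕ) (θ : ℝ) : ℝ := twistAmplitude J i * Real.cos (crossFreq i * θ)

/-- The second derivative of `twist`. -/
def twistSecondDeriv (J i : ℕ) (θ : ℝ) : ℝ :=
  -(twistAmplitude J i * crossFreq i * Real.sin (crossFreq i * θ))

/-- The exponent of mode `i` at `(s, θ)`, that is, at `r = exp s`. -/
def modePhase (lam : ℂ) (β : ℝ) (J i : ℕ) (p : ℝ × ℝ) : ℂ :=
  -modeAction lam β J i p.1 +
    Complex.I * (modeSign J i * (angularFreq i * p.2 + switch β i p.1 * twist J i p.2))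

/-- `∂_s` of `modePhase`. -/
def modePhaseFst (lam : ℂ) (β : ℝ) (J i : ℕ) (p : ℝ × ℝ) : ℂ :=
  -modeRate lam β J i p.1 +
    Complex.I * (modeSign J i * (deriv (switch β i) p.1 * twist J i p.2))

/-- `∂_θ` of `modePhase`. -/
def modePhaseSnd (β : ℝ) (J i : ℕ) (p : ℝ × ℝ) : ℂ :=
  Complex.I * (modeSign J i * (angularFreq i + switch β i p.1 * twistDeriv J i p.2))

/-- `∂_s²` of `modePhase`. -/
def modePhaseFstFst (lam : ℂ) (β : ℝ) (J i : ℕ) (p : ℝ × ℝ) : ℂ :=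
  -modeRateDeriv lam β J i p.1 +
    Complex.I * (modeSign J i * (deriv (deriv (switch β i)) p.1 * twist J i p.2))

/-- `∂_θ²` of `modePhase`. -/
def modePhaseSndSnd (β : ℝ) (J i : ℕ) (p : ℝ × ℝ) : ℂ :=
  Complex.I * (modeSign J i * (switch β i p.1 * twistSecondDeriv J i p.2))

/-- The `i`-th mode in logarithmic polar coordinates. -/
def mode (lam : ℂ) (β : ℝ) (J i : ℕ) (p : ℝ × ℝ) : ℂ := Complex.exp (modePhase lam β J i p)

/-- The function `(f_ss + f_θθ + λ r² f) / f` for the mode `f`. -/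
def modePotential (lam : ℂ) (β : ℝ) (J i : ℕ) (p : ℝ × ℝ) : ℂ :=
  modePhaseFstFst lam β J i p + modePhaseFst lam β J i p ^ 2 +
    (modePhaseSndSnd β J i p + modePhaseSnd β J i p ^ 2) + lam * Complex.exp (2 * p.1)

section Twist

variable {J i : ℕ}

theorem modeSign_sq : modeSign J i ^ 2 = 1 := by
  rw [modeSign, ← pow_mul, mul_comm, pow_mul, neg_one_sq, one_pow]

theorem abs_modeSign : |modeSign J i| = 1 := by
  rw [modeSign, abs_pow, abs_neg, abs_one, one_pow]

theorem norm_I_mul_modeSign_mul (x : ℝ) : ‖Complex.I * (modeSign J i * x)‖ = |x| := by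
  rw [norm_mul, norm_mul, Complex.norm_I, Complex.norm_real, Complex.norm_real, Real.norm_eq_abs,
    Real.norm_eq_abs, abs_modeSign, one_mul, one_mul]

theorem crossFreq_pos (hi : 1 ≤ i) : 0 < crossFreq i :=
  add_pos_of_nonneg_of_pos angularFreq_nonneg (angularFreq_pos hi)

theorem crossFreq_le : crossFreq i ≤ 2 * angularFreq i := by
  rw [crossFreq, two_mul]
  gcongr
  exact angularFreq_mono (Nat.sub_le i 1)

theorem twistAmplitude_nonneg : 0 ≤ twistAmplitude J i := by
  have := sixteen_le_freqGap (j := i - 1)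
  unfold twistAmplitude
  split_ifs <;> linarith

theorem twistAmplitude_le : twistAmplitude J i ≤ 2 * freqGap i := by
  have := sixteen_le_freqGap (j := i)
  have := freqGap_mono (Nat.sub_le i 1)
  unfold twistAmplitude
  split_ifs <;> linarith

theorem hasDerivAt_twist (hi : 1 ≤ i) (θ : ℝ) :
    HasDerivAt (twist J i) (twistDeriv J i θ) θ := by
  have h := (((hasDerivAt_id θ).const_mul (crossFreq i)).sin).const_mul
    (twistAmplitude J i / crossFreq i)
  refine h.congr_deriv ?_
  have hne := (crossFreq_pos hi).ne'
  simp only [id, twistDeriv]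
  field_simp

theorem hasDerivAt_twistDeriv (θ : ℝ) :
    HasDerivAt (twistDeriv J i) (twistSecondDeriv J i θ) θ := by
  refine ((((hasDerivAt_id θ).const_mul (crossFreq i)).cos).const_mul
    (twistAmplitude J i)).congr_deriv ?_
  simp only [id, twistSecondDeriv]
  ring

theorem abs_twist_le_abs_sin (hi : 300 ≤ i) (θ : ℝ) :
    |twist J i θ| ≤ 1 / 50 * |Real.sin (crossFreq i * θ)| := by
  have hpos := crossFreq_pos (i := i) (by omega)
  rw [twist, abs_mul]
  refine mul_le_mul_of_nonneg_right ?_ (abs_nonneg _)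
  rw [abs_of_nonneg (div_nonneg twistAmplitude_nonneg hpos.le), div_le_iff₀ hpos, crossFreq]
  linarith [twistAmplitude_le (J := J) (i := i), freqGap_le (j := i) (by omega),
    angularFreq_nonneg (j := i - 1)]

theorem abs_twist_le_one (hi : 300 ≤ i) (θ : ℝ) : |twist J i θ| ≤ 1 := by
  linarith [abs_twist_le_abs_sin (J := J) hi θ, Real.abs_sin_le_one (crossFreq i * θ)]

theorem abs_twistDeriv_le (θ : ℝ) : |twistDeriv J i θ| ≤ 2 * freqGap i := by
  rw [twistDeriv, abs_mul, abs_of_nonneg twistAmplitude_nonneg]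
  exact (mul_le_of_le_one_right twistAmplitude_nonneg (Real.abs_cos_le_one _)).trans
    twistAmplitude_le

theorem abs_twistSecondDeriv_le (hi : 1 ≤ i) (θ : ℝ) :
    |twistSecondDeriv J i θ| ≤ 4 * (angularFreq i * freqGap i) := by
  have hpos := (crossFreq_pos hi).le
  rw [twistSecondDeriv, abs_neg, abs_mul, abs_mul, abs_of_nonneg twistAmplitude_nonneg,
    abs_of_nonneg hpos]
  calc _ ≤ twistAmplitude J i * crossFreq i :=
        mul_le_of_le_one_right (mul_nonneg twistAmplitude_nonneg hpos) (Real.abs_sin_le_one _)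
    _ ≤ 2 * freqGap i * (2 * angularFreq i) :=
        mul_le_mul twistAmplitude_le crossFreq_le hpos (by linarith [sixteen_le_freqGap (j := i)])
    _ = _ := by ring

end Twist

theorem abs_mul_le_of_le {a b c d : ℝ} (hac : |a| ≤ c) (hbd : |b| ≤ d) : |a * b| ≤ c * d :=
  (abs_mul a b).trans_le (mul_le_mul hac hbd (abs_nonneg b) ((abs_nonneg a).trans hac))

section Switch

variable {β : ℝ} {J i : ℕ}

theorem abs_switch_le_one {s : ℝ} : |switch β i s| ≤ 1 := abs_cutoff_le_one

theorem norm_switch_le_one {s : ℝ} : ‖(switch β i s : ℂ)‖ ≤ 1 :=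
  (Complex.norm_real _).trans_le abs_switch_le_one

theorem abs_switch_mul_twistDeriv_le (p : ℝ × ℝ) :
    |switch β i p.1 * twistDeriv J i p.2| ≤ 2 * freqGap i :=
  (abs_mul_le_of_le abs_switch_le_one (abs_twistDeriv_le p.2)).trans_eq (one_mul _)

theorem exists_abs_deriv_switch_le : ∃ B, 0 ≤ B ∧ ∀ β (i : ℕ) s, 0 ≤ β → β ≤ 2 → 299 ≤ i →
    (i : ℝ) - 1 ≤ radialClock β s → radialClock β s ≤ i →
      |deriv (switch β i) s| ≤ B * freqGap i ∧
      |deriv (deriv (switch β i)) s| ≤ B * (angularFreq i * freqGap i) := by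
  obtain ⟨B, hB0, hB⟩ := exists_abs_deriv_cutoff_le (8 / 3)
  refine ⟨B, hB0, fun β i s hβ hβ' hi hs hs' => ?_⟩
  have hi' : (299 : ℝ) ≤ i := by exact_mod_cast hi
  have hk : (i : ℝ) ≤ freqGap i := by
    unfold freqGap
    linarith
  have hkn := freqGap_le hi
  obtain ⟨hd, hdd⟩ := hB β (-8 / 3) (11 / 6 + 8 / 3 * ((i : ℝ) - 1)) s hβ hβ'
    (by norm_num [abs_div])
  refine ⟨hd.trans (by gcongr; linarith), (hdd (by linarith)).trans ?_⟩
  rw [sq]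
  gcongr <;> linarith

end Switch

theorem hasUnmixedJet_cutoff (β a b : ℝ) (p : ℝ × ℝ) :
    HasUnmixedJet (fun q => (cutoff β a b q.1 : ℂ))
      (fun q => ((deriv (cutoff β a b) q.1 : ℝ) : ℂ)) (fun _ => 0)
      ((deriv (deriv (cutoff β a b)) p.1 : ℝ) : ℂ) 0 p :=
  .of_fst (w := fun s => (cutoff β a b s : ℂ))
    (w₁ := fun s => ((deriv (cutoff β a b) s : ℝ) : ℂ))
    (Complex.ofRealCLM.contDiff.comp (contDiff_cutoff (n := 2))).contDiffAt
    (.of_forall fun s => (hasDerivAt_cutoff β a b s).differentiableAt.hasDerivAt.ofReal_comp)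
    (hasDerivAt_deriv_cutoff β a b p.1).differentiableAt.hasDerivAt.ofReal_comp

section Potential

variable {lam : ℂ} {β : ℝ} {J i : ℕ} {p : ℝ × ℝ}

theorem norm_modePhaseSnd_sq_add_sq_le (hi : 299 ≤ i) :
    ‖modePhaseSnd β J i p ^ 2 + angularFreq i ^ 2‖ ≤ 8 * (angularFreq i * freqGap i) := by
  have hk := sixteen_le_freqGap (j := i)
  have hkn := freqGap_le (j := i) hi
  have hd := abs_switch_mul_twistDeriv_le (β := β) (J := J) (i := i) p
  set d := switch β i p.1 * twistDeriv J i p.2 with hd_def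
  have hsplit : modePhaseSnd β J i p ^ 2 + angularFreq i ^ 2 =
      ((-(d * (2 * angularFreq i + d)) : ℝ) : ℂ) := by
    have hsign : (modeSign J i : ℂ) ^ 2 = 1 := by exact_mod_cast modeSign_sq
    rw [modePhaseSnd, mul_pow, mul_pow, Complex.I_sq, hsign, hd_def]
    push_cast
    ring
  rw [hsplit, Complex.norm_real, Real.norm_eq_abs, abs_neg]
  refine (abs_mul_le_of_le hd (d := 4 * angularFreq i) ?_).trans_eq (by ring)
  rw [abs_le] at hd ⊢
  constructor <;> linarith [hd.1, hd.2]

theorem norm_modePhaseSndSnd_le (hi : 1 ≤ i) :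
    ‖modePhaseSndSnd β J i p‖ ≤ 4 * (angularFreq i * freqGap i) := by
  rw [modePhaseSndSnd, ← Complex.ofReal_mul, norm_I_mul_modeSign_mul]
  exact (abs_mul_le_of_le abs_switch_le_one (abs_twistSecondDeriv_le hi p.2)).trans_eq (one_mul _)

theorem angularFreq_div_two_le_norm_modePhaseSnd (hi : 299 ≤ i) :
    angularFreq i / 2 ≤ ‖modePhaseSnd β J i p‖ := by
  have hk := sixteen_le_freqGap (j := i)
  have hkn := freqGap_le (j := i) hi
  have hd := abs_le.1 (abs_switch_mul_twistDeriv_le (β := β) (J := J) (i := i) p)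
  rw [modePhaseSnd, ← Complex.ofReal_mul, ← Complex.ofReal_add, norm_I_mul_modeSign_mul]
  refine le_trans ?_ (le_abs_self _)
  linarith [hd.1]

/-- Writing `ρ` for `leaveRate`, the mode solves the equation exactly up to the deviations of the
partial derivatives of its exponent from `-ρ` and `i n`. -/
theorem modePotential_eq (hi : 1 ≤ i) :
    modePotential lam β J i p =
      crossingPotential (angularFreq i) (freqGap i) (relPotential lam i p.1) -
        2 * (leaveRate lam i p.1 * (modePhaseFst lam β J i p + leaveRate lam i p.1)) +
        (modePhaseFst lam β J i p + leaveRate lam i p.1) ^ 2 +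
        (modePhaseFstFst lam β J i p + leaveRateDeriv lam i p.1) +
        modePhaseSndSnd β J i p + (modePhaseSnd β J i p ^ 2 + angularFreq i ^ 2) := by
  rw [modePotential, ← angularFreq_sq_mul_relPotential hi lam p.1, crossingPotential, leaveRate,
    leaveRateDeriv]
  ring

end Potential

namespace WKBRegime

variable {lam : ℂ} {β : ℝ} {J i : ℕ} {p : ℝ × ℝ} {s : ℝ}

theorem hasUnmixedJet_modePhase (H : WKBRegime lam β J) (hi : J ≤ i)
    (hp : radialClock β p.1 < i + 1) :
    HasUnmixedJet (modePhase lam β J i) (modePhaseFst lam β J i) (modePhaseSnd β J i)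
      (modePhaseFstFst lam β J i p) (modePhaseSndSnd β J i p) p := by
  have hJ := H.le_start
  have haction : HasUnmixedJet _ _ _ _ _ p := .of_fst (w := fun s => -modeAction lam β J i s)
    (H.contDiffAt_modeAction hi hp).neg
    ((H.eventually_hasDerivAt_modeAction hi hp).mono fun _ h => h.neg)
    (H.hasDerivAt_modeRate hi hp.le).neg
  have hlinear : HasUnmixedJet _ _ _ _ _ p := .of_snd
    (w := fun θ => Complex.I * (modeSign J i * (angularFreq i * θ)))
    (w₁ := fun _ => Complex.I * (modeSign J i * (angularFreq i * 1)))
    (contDiff_const.mul (contDiff_const.mul (contDiff_const.mul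
      Complex.ofRealCLM.contDiff))).contDiffAt
    (.of_forall fun θ => (((hasDerivAt_id θ).ofReal_comp.const_mul _).const_mul _).const_mul _)
    (hasDerivAt_const _ _)
  have htwist : HasUnmixedJet _ _ _ _ _ p := .of_snd
    (w := fun θ => Complex.I * (modeSign J i * (twist J i θ)))
    (contDiff_const.mul (contDiff_const.mul (Complex.ofRealCLM.contDiff.comp
      (contDiff_const.mul (contDiff_const.mul contDiff_id).sin)))).contDiffAt
    (.of_forall fun θ =>
      ((hasDerivAt_twist (by omega) θ).ofReal_comp.const_mul _).const_mul _)
    (((hasDerivAt_twistDeriv p.2).ofReal_comp.const_mul _).const_mul _)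
  convert (haction.add hlinear).add
    ((hasUnmixedJet_cutoff β (-8 / 3) (11 / 6 + 8 / 3 * ((i : ℝ) - 1)) p).mul htwist) using 1
  · funext q
    simp only [modePhase, switch]
    ring
  · funext q
    simp only [modePhaseFst, switch]
    ring
  · funext q
    simp only [modePhaseSnd, switch]
    ring
  · simp only [modePhaseFstFst, switch]
    ring
  · simp only [modePhaseSndSnd, switch]
    ring

theorem hasUnmixedJet_mode (H : WKBRegime lam β J) (hi : J ≤ i)
    (hp : radialClock β p.1 < i + 1) :
    HasUnmixedJet (mode lam β J i) (fun q => modePhaseFst lam β J i q * mode lam β J i q)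
      (fun q => modePhaseSnd β J i q * mode lam β J i q)
      ((modePhaseFstFst lam β J i p + modePhaseFst lam β J i p ^ 2) * mode lam β J i p)
      ((modePhaseSndSnd β J i p + modePhaseSnd β J i p ^ 2) * mode lam β J i p) p :=
  (H.hasUnmixedJet_modePhase hi hp).cexp

theorem norm_leaveRate_le (H : WKBRegime lam β J) (hi : J ≤ i)
    (hs : radialClock β s ≤ i + 1) : ‖leaveRate lam i s‖ ≤ 3 * angularFreq i := by
  have hJ := H.le_start
  have hw := H.norm_relPotential_le_of_le hi hs
  have hk := sixteen_le_freqGap (j := i)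
  have hkn := freqGap_le (j := i) (by omega)
  refine (norm_add_le_of_le (norm_meanRate_le (by linarith) hw)
    (norm_rateShift_le (by linarith) hkn hw)).trans ?_
  linarith

theorem norm_enterRate_sub_leaveRate_le (H : WKBRegime lam β J) (hi : J < i)
    (hs : radialClock β s ≤ i + 1) :
    ‖enterRate lam J i s - leaveRate lam i s‖ ≤ 4 * freqGap i := by
  have hJ := H.le_start
  have hw := H.norm_relPotential_pred_le hi.le hs
  have hw' := H.norm_relPotential_le_of_le hi.le hs
  have hk := sixteen_le_freqGap (j := i - 1)
  have hkk := freqGap_mono (Nat.sub_le i 1)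
  have hsucc : angularFreq (i - 1) + freqGap (i - 1) = angularFreq i := by
    rw [← angularFreq_succ, Nat.sub_add_cancel (by omega)]
  have hmean := norm_meanRate_sub_meanRate_le (n := angularFreq (i - 1)) (k := freqGap (i - 1))
    (angularFreq_pos (by omega)) (by linarith) hw hw' (by
      rw [hsucc, angularFreq_sq_mul_relPotential (by omega),
        angularFreq_sq_mul_relPotential (by omega)])
  rw [hsucc] at hmean
  have hshift := norm_rateShift_le (by linarith) (freqGap_le (j := i - 1) (by omega)) hw
  have hshift' := norm_rateShift_le (by linarith) (freqGap_le (j := i) (by omega)) hw'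
  have hsplit : enterRate lam J i s - leaveRate lam i s =
      meanRate (angularFreq (i - 1)) (relPotential lam (i - 1) s) -
          meanRate (angularFreq i) (relPotential lam i s) -
        rateShift (angularFreq (i - 1)) (freqGap (i - 1)) (relPotential lam (i - 1) s) -
        rateShift (angularFreq i) (freqGap i) (relPotential lam i s) := by
    rw [enterRate, if_neg (by omega), leaveRate]
    ring
  rw [hsplit]
  refine (norm_sub_le_of_le (norm_sub_le_of_le hmean hshift) hshift').trans ?_
  linarith

theorem norm_enterRateDeriv_sub_leaveRateDeriv_le (H : WKBRegime lam β J) (hi : J < i)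
    (hs : radialClock β s ≤ i + 1) :
    ‖enterRateDeriv lam J i s - leaveRateDeriv lam i s‖ ≤ angularFreq i := by
  have hJ := H.le_start
  have hw := H.norm_relPotential_pred_le hi.le hs
  have hw' := H.norm_relPotential_le_of_le hi.le hs
  have hk := sixteen_le_freqGap (j := i - 1)
  have hkn := freqGap_le (j := i - 1) (by omega)
  have hk' := sixteen_le_freqGap (j := i)
  have hkn' := freqGap_le (j := i) (by omega)
  rw [enterRateDeriv, if_neg (by omega), leaveRateDeriv]
  refine (norm_sub_le_of_le
    (norm_sub_le_of_le (norm_meanRateDeriv_le (by linarith) hw)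
      (norm_rateShiftDeriv_le (by linarith) hkn hw))
    (norm_add_le_of_le (norm_meanRateDeriv_le (by linarith) hw')
      (norm_rateShiftDeriv_le (by linarith) hkn' hw'))).trans ?_
  linarith [angularFreq_mono (Nat.sub_le i 1)]

theorem norm_modePhaseFst_add_leaveRate_le {B : ℝ} (H : WKBRegime lam β J) (hi : J < i)
    (hp : radialClock β p.1 ≤ i + 1) (hB : |deriv (switch β i) p.1| ≤ B * freqGap i) :
    ‖modePhaseFst lam β J i p + leaveRate lam i p.1‖ ≤ (B + 4) * freqGap i := by
  have hsplit : modePhaseFst lam β J i p + leaveRate lam i p.1 =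
      Complex.I * (modeSign J i * (deriv (switch β i) p.1 * twist J i p.2 : ℝ)) -
        switch β i p.1 * (enterRate lam J i p.1 - leaveRate lam i p.1) := by
    rw [modePhaseFst, modeRate]
    push_cast
    ring
  rw [hsplit]
  refine (norm_sub_le_of_le ((norm_I_mul_modeSign_mul _).trans_le (abs_mul_le_of_le hB
    (abs_twist_le_one (H.le_start.trans hi.le) p.2))) (norm_mul_le_of_le norm_switch_le_one
    (H.norm_enterRate_sub_leaveRate_le hi hp))).trans_eq ?_
  ring

theorem norm_modePhaseFstFst_add_leaveRateDeriv_le {B : ℝ} (H : WKBRegime lam β J) (hi : J < i)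
    (hp : radialClock β p.1 ≤ i + 1) (hB : |deriv (switch β i) p.1| ≤ B * freqGap i)
    (hB' : |deriv (deriv (switch β i)) p.1| ≤ B * (angularFreq i * freqGap i)) :
    ‖modePhaseFstFst lam β J i p + leaveRateDeriv lam i p.1‖ ≤
      (5 * B + 1) * (angularFreq i * freqGap i) := by
  have hsplit : modePhaseFstFst lam β J i p + leaveRateDeriv lam i p.1 =
      Complex.I * (modeSign J i * (deriv (deriv (switch β i)) p.1 * twist J i p.2 : ℝ)) -
        ((deriv (switch β i) p.1 : ℝ) : ℂ) * (enterRate lam J i p.1 - leaveRate lam i p.1) -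
        switch β i p.1 * (enterRateDeriv lam J i p.1 - leaveRateDeriv lam i p.1) := by
    rw [modePhaseFstFst, modeRateDeriv]
    push_cast
    ring
  have hJ := H.le_start
  have hk := sixteen_le_freqGap (j := i)
  have hkn := freqGap_le (j := i) (by omega)
  have hB0 : 0 ≤ B := nonneg_of_mul_nonneg_left ((abs_nonneg _).trans hB) (by linarith)
  rw [hsplit]
  refine (norm_sub_le_of_le (norm_sub_le_of_le ((norm_I_mul_modeSign_mul _).trans_le
    (abs_mul_le_of_le hB' (abs_twist_le_one (hJ.trans hi.le) p.2)))
    (norm_mul_le_of_le ((Complex.norm_real _).trans_le hB)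
      (H.norm_enterRate_sub_leaveRate_le hi hp)))
    (norm_mul_le_of_le norm_switch_le_one
      (H.norm_enterRateDeriv_sub_leaveRateDeriv_le hi hp))).trans ?_
  have hkk : B * (freqGap i * freqGap i) ≤ B * (angularFreq i * freqGap i) := by gcongr; linarith
  have hnk : angularFreq i ≤ angularFreq i * freqGap i :=
    le_mul_of_one_le_right angularFreq_nonneg (by linarith)
  linarith

theorem exists_norm_modePotential_le : ∃ C, 0 ≤ C ∧ ∀ lam β J i (p : ℝ × ℝ),
    WKBRegime lam β J → J < i → (i : ℝ) - 1 ≤ radialClock β p.1 → radialClock β p.1 ≤ i →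
      ‖modePotential lam β J i p‖ ≤ C * (angularFreq i * freqGap i) := by
  obtain ⟨B, hB0, hB⟩ := exists_abs_deriv_switch_le
  refine ⟨10 + 6 * (B + 4) + (B + 4) ^ 2 + (5 * B + 1) + 4 + 8, by positivity,
    fun lam β J i p H hi hp hp' => ?_⟩
  have hJ := H.le_start
  obtain ⟨hB₁, hB₂⟩ := hB β i p.1 H.pos.le H.le_two (by omega) hp hp'
  have hk := sixteen_le_freqGap (j := i)
  have hkn := freqGap_le (j := i) (by omega)
  have hfst := H.norm_modePhaseFst_add_leaveRate_le hi (by linarith) hB₁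
  have hsq : ‖(modePhaseFst lam β J i p + leaveRate lam i p.1) ^ 2‖ ≤
      (B + 4) ^ 2 * (angularFreq i * freqGap i) := by
    rw [norm_pow]
    refine (pow_le_pow_left₀ (norm_nonneg _) hfst 2).trans ?_
    rw [mul_pow, sq (freqGap i)]
    gcongr
    linarith
  have hcross : ‖2 * (leaveRate lam i p.1 * (modePhaseFst lam β J i p + leaveRate lam i p.1))‖ ≤
      6 * (B + 4) * (angularFreq i * freqGap i) := by
    refine (norm_mul_le_of_le Complex.norm_two.le
      (norm_mul_le_of_le (H.norm_leaveRate_le hi.le (by linarith)) hfst)).trans_eq (by ring)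
  rw [modePotential_eq (by omega)]
  refine (norm_add_le_of_le (norm_add_le_of_le (norm_add_le_of_le (norm_add_le_of_le
    (norm_sub_le_of_le (norm_crossingPotential_le hk hkn
      (H.norm_relPotential_le_of_le hi.le (by linarith))) hcross) hsq)
    (H.norm_modePhaseFstFst_add_leaveRateDeriv_le hi (by linarith) hB₁ hB₂))
    (norm_modePhaseSndSnd_le (by omega))) (norm_modePhaseSnd_sq_add_sq_le (by omega))).trans_eq ?_
  ring

end WKBRegime

/-! ### Crossing of consecutive modes -/

section Exponential

theorem abs_le_two_mul_abs_exp_sub_one {a : ℝ} (ha : -1 ≤ a) : |a| ≤ 2 * |Real.exp a - 1| := by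
  rcases le_total 0 a with h | h
  · rw [abs_of_nonneg h]
    linarith [Real.add_one_le_exp a, le_abs_self (Real.exp a - 1), abs_nonneg (Real.exp a - 1)]
  · have hexp : Real.exp a * (1 - a) ≤ 1 := by
      calc Real.exp a * (1 - a) ≤ Real.exp a * Real.exp (-a) := by
            gcongr
            linarith [Real.add_one_le_exp (-a)]
        _ = 1 := by rw [← Real.exp_add, add_neg_cancel, Real.exp_zero]
    rw [abs_of_nonpos h, abs_sub_comm]
    nlinarith [le_abs_self (1 - Real.exp a), Real.exp_pos a]

theorem abs_exp_re_sub_one_le (z : ℂ) : |Real.exp z.re - 1| ≤ ‖1 + Complex.exp z‖ := by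
  have h := abs_norm_sub_norm_le (Complex.exp z) (-1)
  rwa [norm_neg, norm_one, sub_neg_eq_add, add_comm _ (1 : ℂ), Complex.norm_exp] at h

theorem norm_one_add_exp_im_mul_I_le (z : ℂ) :
    ‖1 + Complex.exp (z.im * Complex.I)‖ ≤ 2 * ‖1 + Complex.exp z‖ := by
  have hsplit : 1 + Complex.exp (z.im * Complex.I) = 1 + Complex.exp z -
      ((Real.exp z.re - 1 : ℝ) : ℂ) * Complex.exp (z.im * Complex.I) := by
    have hexp : Complex.exp z = Complex.exp z.re * Complex.exp (z.im * Complex.I) := by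
      rw [← Complex.exp_add, Complex.re_add_im]
    rw [hexp]
    push_cast
    ring
  rw [hsplit, two_mul]
  refine norm_sub_le_of_le le_rfl ?_
  rw [norm_mul, Complex.norm_exp_ofReal_mul_I, mul_one, Complex.norm_real]
  exact abs_exp_re_sub_one_le z

/-- Where `1 + exp (τ + i (α + φ))` is small, `α` is close to an odd multiple of `π`. -/
theorem abs_one_add_cos_add_abs_sin_le {τ : ℂ} {α φ : ℝ} (him : |τ.im| ≤ |τ.re| / 10)
    (hre : -1 ≤ τ.re) (hφ : |φ| ≤ 1 / 50 * |Real.sin α|) :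
    |1 + Real.cos α| + |Real.sin α| ≤ 6 * ‖1 + Complex.exp (τ + Complex.I * (α + φ))‖ := by
  set z := τ + Complex.I * (α + φ) with hz
  have hzre : z.re = τ.re := by simp [hz]
  have hzim : z.im = τ.im + (α + φ) := by simp [hz]
  have hτ : |τ.im| ≤ ‖1 + Complex.exp z‖ / 5 := by
    linarith [abs_le_two_mul_abs_exp_sub_one hre, hzre ▸ abs_exp_re_sub_one_le z]
  have hproj := norm_one_add_exp_im_mul_I_le z
  have hcos : |1 + Real.cos z.im| ≤ 2 * ‖1 + Complex.exp z‖ := by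
    have h := (Complex.abs_re_le_norm _).trans hproj
    rwa [Complex.add_re, Complex.one_re, Complex.exp_ofReal_mul_I_re] at h
  have hsin : |Real.sin z.im| ≤ 2 * ‖1 + Complex.exp z‖ := by
    have h := (Complex.abs_im_le_norm _).trans hproj
    rwa [Complex.add_im, Complex.one_im, zero_add, Complex.exp_ofReal_mul_I_im] at h
  have hαz : |α - z.im| ≤ 1 / 50 * |Real.sin α| + ‖1 + Complex.exp z‖ / 5 := by
    rw [hzim, show α - (τ.im + (α + φ)) = -(φ + τ.im) by ring, abs_neg]
    exact (abs_add_le _ _).trans (add_le_add hφ hτ)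
  have htri := abs_add_le (1 + Real.cos z.im) (Real.cos α - Real.cos z.im)
  rw [add_add_sub_cancel] at htri
  linarith [abs_sub_abs_le_abs_sub (Real.sin α) (Real.sin z.im), Real.abs_sin_sub_sin_le α z.im,
    Real.abs_cos_sub_cos_le α z.im, norm_nonneg (1 + Complex.exp z)]

end Exponential

/-- `f`, a function in logarithmic polar coordinates, is `C²` near `p`, nearly solves the equation
`r² (Δ + lam) f = 0` with error `K |f|`, and has a gradient of size `c |f|` at least. -/
def PolarEstimate (lam : ℂ) (f : ℝ × ℝ → ℂ) (p : ℝ × ℝ) (K c : ℝ) : Prop :=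
  ∃ f₁ f₂ f₁₁ f₂₂, HasUnmixedJet f f₁ f₂ f₁₁ f₂₂ p ∧
    ‖f₁₁ + f₂₂ + lam * Complex.exp (2 * p.1) * f p‖ ≤ K * ‖f p‖ ∧
      c * ‖f p‖ ≤ ‖f₁ p‖ + ‖f₂ p‖

namespace PolarEstimate

variable {lam : ℂ} {f g : ℝ × ℝ → ℂ} {p : ℝ × ℝ} {K K' c c' : ℝ}

theorem congr_of_eventuallyEq (h : PolarEstimate lam f p K c) (hgf : g =ᶠ[𝓝 p] f) :
    PolarEstimate lam g p K c := by
  obtain ⟨f₁, f₂, f₁₁, f₂₂, hjet, hK, hc⟩ := h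
  refine ⟨f₁, f₂, f₁₁, f₂₂, hjet.congr_of_eventuallyEq hgf, ?_, ?_⟩ <;>
    rwa [hgf.self_of_nhds]

theorem mono (h : PolarEstimate lam f p K c) (hK : K ≤ K') (hc : c' ≤ c) :
    PolarEstimate lam f p K' c' := by
  obtain ⟨f₁, f₂, f₁₁, f₂₂, hjet, hfK, hfc⟩ := h
  exact ⟨f₁, f₂, f₁₁, f₂₂, hjet, hfK.trans (by gcongr), le_trans (by gcongr) hfc⟩

/-- A perturbation by a function of at most half the size. -/
theorem add_of_dominated {f₁ f₂ g₁ g₂ : ℝ × ℝ → ℂ} {f₁₁ f₂₂ g₁₁ g₂₂ : ℂ} {m : ℝ}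
    (hf : HasUnmixedJet f f₁ f₂ f₁₁ f₂₂ p) (hg : HasUnmixedJet g g₁ g₂ g₁₁ g₂₂ p)
    (hdom : 2 * ‖g p‖ ≤ ‖f p‖) (hm : 0 ≤ m) (hK : 0 ≤ K)
    (hfK : ‖f₁₁ + f₂₂ + lam * Complex.exp (2 * p.1) * f p‖ ≤ K * ‖f p‖)
    (hgK : ‖g₁₁ + g₂₂ + lam * Complex.exp (2 * p.1) * g p‖ ≤ K * ‖f p‖)
    (hfm : 99 / 100 * m * ‖f p‖ ≤ ‖f₂ p‖) (hgm : ‖g₂ p‖ ≤ 52 / 100 * m * ‖f p‖) :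
    PolarEstimate lam (fun q => f q + g q) p (4 * K) (m / 4) := by
  have hfg : ‖f p‖ ≤ 2 * ‖f p + g p‖ := by linarith [norm_le_add_norm_add (f p) (g p)]
  refine ⟨_, _, _, _, hf.add hg, ?_, ?_⟩
  · calc _ = ‖(f₁₁ + f₂₂ + lam * Complex.exp (2 * p.1) * f p) +
          (g₁₁ + g₂₂ + lam * Complex.exp (2 * p.1) * g p)‖ := by ring_nf
      _ ≤ K * ‖f p‖ + K * ‖f p‖ := norm_add_le_of_le hfK hgK
      _ ≤ 4 * K * ‖f p + g p‖ := by nlinarith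
  · have hsum := norm_le_add_norm_add (f₂ p) (g₂ p)
    have hmf : 0 ≤ m * ‖f p‖ := by positivity
    calc m / 4 * ‖f p + g p‖ ≤ m / 4 * (3 / 2 * ‖f p‖) := by
          gcongr
          linarith [norm_add_le (f p) (g p)]
      _ ≤ ‖f₂ p + g₂ p‖ := by linarith
      _ ≤ _ := le_add_of_nonneg_left (norm_nonneg _)

end PolarEstimate

/-- Two modes with nearly equal radial rates `p₁, p₂` and nearly opposite angular frequencies
`n, -G` cannot cancel to first order. -/
theorem div_four_mul_norm_add_le {p₁ p₂ E₁ E₂ : ℂ} {n G : ℝ} (hn : 0 ≤ n)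
    (hp : ‖p₁ + n‖ ≤ n / 10) (hpp : ‖p₂ - p₁‖ ≤ n / 50) (hG : 99 / 100 * n ≤ G) :
    n / 4 * ‖E₁ + E₂‖ ≤ ‖p₁ * E₁ + p₂ * E₂‖ + ‖n * E₁ - G * E₂‖ := by
  have hsnd : (n + G) * ‖E₂‖ ≤ n * ‖E₁ + E₂‖ + ‖n * E₁ - G * E₂‖ := by
    calc (n + G) * ‖E₂‖ = ‖n * (E₁ + E₂) - (n * E₁ - G * E₂)‖ := by
          rw [show n * (E₁ + E₂) - (n * E₁ - G * E₂) = ((n + G : ℝ) : ℂ) * E₂ by push_cast; ring,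
            norm_mul, Complex.norm_real, Real.norm_of_nonneg (by linarith)]
      _ ≤ ‖n * (E₁ + E₂)‖ + ‖n * E₁ - G * E₂‖ := norm_sub_le _ _
      _ = _ := by rw [norm_mul, Complex.norm_real, Real.norm_of_nonneg hn]
  have hfst : n * ‖E₁ + E₂‖ ≤
      n / 10 * ‖E₁ + E₂‖ + n / 50 * ‖E₂‖ + ‖p₁ * E₁ + p₂ * E₂‖ := by
    calc n * ‖E₁ + E₂‖ =
          ‖(p₁ + n) * (E₁ + E₂) + (p₂ - p₁) * E₂ - (p₁ * E₁ + p₂ * E₂)‖ := by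
          rw [show (p₁ + n) * (E₁ + E₂) + (p₂ - p₁) * E₂ - (p₁ * E₁ + p₂ * E₂) =
            n * (E₁ + E₂) by ring, norm_mul, Complex.norm_real, Real.norm_of_nonneg hn]
      _ ≤ _ := norm_sub_le_of_le (norm_add_le_of_le (norm_mul_le_of_le hp le_rfl)
          (norm_mul_le_of_le hpp le_rfl)) le_rfl
  have hG' : 199 / 100 * n * ‖E₂‖ ≤ (n + G) * ‖E₂‖ := by
    gcongr
    linarith
  have hn' : 0 ≤ n * ‖E₁ + E₂‖ := by positivity
  linarith [norm_nonneg (n * E₁ - G * E₂), norm_nonneg (p₁ * E₁ + p₂ * E₂)]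

section LeaveEnter

variable {lam : ℂ} {β : ℝ} {J i : ℕ} {s : ℝ} {p : ℝ × ℝ}

theorem switch_eq_zero (h : (i : ℝ) - 5 / 16 ≤ radialClock β s) : switch β i s = 0 :=
  cutoff_eq_zero (by linarith)

theorem switch_eq_one (h : radialClock β s ≤ i - 11 / 16) : switch β i s = 1 :=
  cutoff_eq_one (by linarith)

theorem deriv_switch_eq_zero
    (h : radialClock β s < i - 11 / 16 ∨ (i : ℝ) - 5 / 16 < radialClock β s) :
    deriv (switch β i) s = 0 ∧ deriv (deriv (switch β i)) s = 0 :=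
  deriv_cutoff_eq_zero (h.symm.imp (fun h => by linarith) fun h => by linarith)

theorem modeRate_of_leaving (h : (i : ℝ) - 5 / 16 ≤ radialClock β s) :
    modeRate lam β J i s = leaveRate lam i s := by
  rw [modeRate, switch_eq_zero h, Complex.ofReal_zero, zero_mul, add_zero]

theorem modeRate_of_entering (h : radialClock β s ≤ i - 11 / 16) :
    modeRate lam β J i s = enterRate lam J i s := by
  rw [modeRate, switch_eq_one h, Complex.ofReal_one, one_mul, add_sub_cancel]

theorem modePhaseFst_of_leaving (h : (i : ℝ) - 5 / 16 < radialClock β p.1) :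
    modePhaseFst lam β J i p = -leaveRate lam i p.1 := by
  simp [modePhaseFst, modeRate_of_leaving h.le, deriv_switch_eq_zero (.inr h)]

theorem modePhaseFst_of_entering (h : radialClock β p.1 < i - 11 / 16) :
    modePhaseFst lam β J i p = -enterRate lam J i p.1 := by
  simp [modePhaseFst, modeRate_of_entering h.le, deriv_switch_eq_zero (.inl h)]

theorem modePhaseFstFst_of_leaving (h : (i : ℝ) - 5 / 16 < radialClock β p.1) :
    modePhaseFstFst lam β J i p = -leaveRateDeriv lam i p.1 := by
  simp [modePhaseFstFst, modeRateDeriv, switch_eq_zero h.le, deriv_switch_eq_zero (.inr h)]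

theorem modePhaseFstFst_of_entering (h : radialClock β p.1 < i - 11 / 16) :
    modePhaseFstFst lam β J i p = -enterRateDeriv lam J i p.1 := by
  simp [modePhaseFstFst, modeRateDeriv, switch_eq_one h.le, deriv_switch_eq_zero (.inl h)]

theorem modePhaseSnd_of_leaving (h : (i : ℝ) - 5 / 16 ≤ radialClock β p.1) :
    modePhaseSnd β J i p = Complex.I * (modeSign J i * angularFreq i) := by
  simp [modePhaseSnd, switch_eq_zero h]

theorem modePhaseSnd_of_entering (h : radialClock β p.1 ≤ i - 11 / 16) :
    modePhaseSnd β J i p =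
      Complex.I * (modeSign J i * (angularFreq i + twistDeriv J i p.2 : ℝ)) := by
  simp [modePhaseSnd, switch_eq_one h]

theorem modePhaseSndSnd_of_leaving (h : (i : ℝ) - 5 / 16 ≤ radialClock β p.1) :
    modePhaseSndSnd β J i p = 0 := by
  simp [modePhaseSndSnd, switch_eq_zero h]

theorem modePhaseSndSnd_of_entering (h : radialClock β p.1 ≤ i - 11 / 16) :
    modePhaseSndSnd β J i p = Complex.I * (modeSign J i * twistSecondDeriv J i p.2) := by
  simp [modePhaseSndSnd, switch_eq_one h]

theorem modePotential_of_leaving (hi : 1 ≤ i) (h : (i : ℝ) - 5 / 16 < radialClock β p.1) :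
    modePotential lam β J i p =
      crossingPotential (angularFreq i) (freqGap i) (relPotential lam i p.1) := by
  have hsign : (modeSign J i : ℂ) ^ 2 = 1 := by exact_mod_cast modeSign_sq
  rw [modePotential_eq hi, modePhaseFst_of_leaving h, modePhaseFstFst_of_leaving h,
    modePhaseSnd_of_leaving h.le, modePhaseSndSnd_of_leaving h.le]
  linear_combination (modeSign J i : ℂ) ^ 2 * (angularFreq i : ℂ) ^ 2 * Complex.I_sq -
    (angularFreq i : ℂ) ^ 2 * hsign

end LeaveEnter

section Succ

variable {lam : ℂ} {β : ℝ} {J j : ℕ} {s θ : ℝ} {p : ℝ × ℝ}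

theorem modeSign_succ : modeSign J (j + 1) = -modeSign J j := by
  rw [modeSign, modeSign, add_right_comm, pow_succ, mul_neg_one]

theorem enterRate_succ (hj : J ≤ j) : enterRate lam J (j + 1) s =
    meanRate (angularFreq j) (relPotential lam j s) -
      rateShift (angularFreq j) (freqGap j) (relPotential lam j s) := by
  rw [enterRate, if_neg (by omega), add_tsub_cancel_right]

theorem enterRateDeriv_succ (hj : J ≤ j) : enterRateDeriv lam J (j + 1) s =
    meanRateDeriv (angularFreq j) (relPotential lam j s) -
      rateShiftDeriv (angularFreq j) (freqGap j) (relPotential lam j s) := by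
  rw [enterRateDeriv, if_neg (by omega), add_tsub_cancel_right]

theorem crossFreq_succ : crossFreq (j + 1) = 2 * angularFreq j + freqGap j := by
  rw [crossFreq, add_tsub_cancel_right, angularFreq_succ]
  ring

theorem twistAmplitude_succ (hj : J ≤ j) : twistAmplitude J (j + 1) = 2 * freqGap j := by
  rw [twistAmplitude, if_neg (by omega), add_tsub_cancel_right]

/-- The angular frequency of mode `j + 1` while it overtakes mode `j` is close to `n_j`. -/
theorem angularFreq_add_twistDeriv_mem_Icc (hj : J ≤ j) (hj' : 299 ≤ j) :
    angularFreq (j + 1) + twistDeriv J (j + 1) θ ∈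
      Set.Icc (99 / 100 * angularFreq j) (104 / 100 * angularFreq j) := by
  have hk := sixteen_le_freqGap (j := j)
  have hkn := freqGap_le hj'
  have hcos := Real.cos_mem_Icc (crossFreq (j + 1) * θ)
  rw [angularFreq_succ, twistDeriv, twistAmplitude_succ hj]
  constructor <;> nlinarith [hcos.1, hcos.2]

/-- The difference vanishes together with `1 + exp (i (n_j + n_{j + 1}) θ)`, so that the modes `j`
and `j + 1` solve the same equation where they may cancel. -/
theorem WKBRegime.modePotential_succ_eq (H : WKBRegime lam β J) (hj : J ≤ j)
    (h : radialClock β p.1 < j + 5 / 16) :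
    modePotential lam β J (j + 1) p =
      crossingPotential (angularFreq j) (freqGap j) (relPotential lam j p.1) -
        (((1 + Real.cos (crossFreq (j + 1) * p.2)) * (4 * freqGap j *
          (angularFreq j + freqGap j * Real.cos (crossFreq (j + 1) * p.2))) : ℝ) +
        Complex.I * (modeSign J (j + 1) * (Real.sin (crossFreq (j + 1) * p.2) *
          (2 * freqGap j * (2 * angularFreq j + freqGap j)) : ℝ))) := by
  have hJ := H.le_start
  have hw := H.norm_relPotential_le_of_le hj (s := p.1) (by linarith)
  have hent : radialClock β p.1 < ((j + 1 : ℕ) : ℝ) - 11 / 16 := by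
    push_cast
    linarith
  have hsign : (modeSign J (j + 1) : ℂ) ^ 2 = 1 := by exact_mod_cast modeSign_sq
  rw [modePotential, modePhaseFst_of_entering hent, modePhaseFstFst_of_entering hent,
    modePhaseSnd_of_entering hent.le, modePhaseSndSnd_of_entering hent.le, enterRate_succ hj,
    enterRateDeriv_succ hj, crossingPotential_eq (angularFreq_pos (by omega)).ne'
      (hw.trans_lt (by norm_num)),
    angularFreq_sq_mul_relPotential (by omega), twistDeriv, twistSecondDeriv,
    twistAmplitude_succ hj, crossFreq_succ, angularFreq_succ]
  set C := Real.cos ((2 * angularFreq j + freqGap j) * p.2)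
  push_cast
  linear_combination ((modeSign J (j + 1) : ℂ) ^ 2 * Complex.I_sq - hsign) *
    (angularFreq j + freqGap j + 2 * freqGap j * C : ℂ) ^ 2

theorem WKBRegime.norm_modePotential_succ_sub_le (H : WKBRegime lam β J) (hj : J ≤ j)
    (h : radialClock β p.1 < j + 5 / 16) :
    ‖modePotential lam β J (j + 1) p -
        crossingPotential (angularFreq j) (freqGap j) (relPotential lam j p.1)‖ ≤
      5 * (angularFreq j * freqGap j) *
        (|1 + Real.cos (crossFreq (j + 1) * p.2)| + |Real.sin (crossFreq (j + 1) * p.2)|) := by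
  have hk := sixteen_le_freqGap (j := j)
  have hkn := freqGap_le (j := j) (by have := H.le_start; omega)
  have hcos := Real.cos_mem_Icc (crossFreq (j + 1) * p.2)
  have hfst : |4 * freqGap j * (angularFreq j + freqGap j * Real.cos (crossFreq (j + 1) * p.2))| ≤
      5 * (angularFreq j * freqGap j) := by
    rw [abs_of_nonneg (mul_nonneg (by linarith) (by nlinarith [hcos.1]))]
    calc _ ≤ 4 * freqGap j * (5 / 4 * angularFreq j) := by
          gcongr
          nlinarith [hcos.2]
      _ = _ := by ring
  have hsnd : |2 * freqGap j * (2 * angularFreq j + freqGap j)| ≤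
      5 * (angularFreq j * freqGap j) := by
    rw [abs_of_nonneg (mul_nonneg (by linarith) (by linarith))]
    nlinarith
  rw [H.modePotential_succ_eq hj h, sub_sub_cancel_left, norm_neg]
  refine (norm_add_le_of_le ((Complex.norm_real _).trans_le (abs_mul_le_of_le le_rfl hfst))
    ((norm_I_mul_modeSign_mul _).trans_le (abs_mul_le_of_le le_rfl hsnd))).trans_eq ?_
  ring

end Succ

/-- The logarithm of the quotient of the amplitudes of the modes `j + 1` and `j`. -/
def actionGap (lam : ℂ) (β : ℝ) (J j : ℕ) (s : ℝ) : ℂ :=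
  modeAction lam β J j s - modeAction lam β J (j + 1) s

section Ratio

variable {lam : ℂ} {β : ℝ} {J i j : ℕ} {s : ℝ} {p : ℝ × ℝ}

theorem norm_mode : ‖mode lam β J i p‖ = Real.exp (-(modeAction lam β J i p.1).re) := by
  have hangle : ((modeSign J i : ℂ) * (angularFreq i * p.2 + switch β i p.1 * twist J i p.2)) =
      ((modeSign J i * (angularFreq i * p.2 + switch β i p.1 * twist J i p.2) : ℝ) : ℂ) := by
    push_cast
    ring
  rw [mode, Complex.norm_exp, modePhase, hangle, Complex.add_re, Complex.neg_re,
    Complex.I_mul_re, Complex.ofReal_im, neg_zero, add_zero]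

theorem norm_mode_succ : ‖mode lam β J (j + 1) p‖ =
    Real.exp (actionGap lam β J j p.1).re * ‖mode lam β J j p‖ := by
  rw [norm_mode, norm_mode, ← Real.exp_add, actionGap, Complex.sub_re]
  congr 1
  ring

theorem mode_succ_eq (h : |radialClock β p.1 - j| < 5 / 16) :
    mode lam β J (j + 1) p = mode lam β J j p *
      Complex.exp (actionGap lam β J j p.1 + Complex.I *
        ((modeSign J (j + 1) * (crossFreq (j + 1) * p.2) : ℝ) +
          (modeSign J (j + 1) * twist J (j + 1) p.2 : ℝ))) := by
  rw [abs_lt] at h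
  have hleave := switch_eq_zero (β := β) (i := j) (s := p.1) (by linarith [h.1])
  have henter := switch_eq_one (β := β) (i := j + 1) (s := p.1) (by push_cast; linarith [h.2])
  rw [mode, mode, ← Complex.exp_add, modePhase, modePhase, hleave, henter, actionGap, crossFreq,
    add_tsub_cancel_right, modeSign_succ]
  congr 1
  push_cast
  ring

theorem radialClock_eq_mul_exp (hβ : 0 < β) (hj : 1 ≤ j) :
    radialClock β s = j * Real.exp (β / 2 * (s - crossingTime β j)) := by
  rw [← radialClock_crossingTime hβ hj, radialClock, radialClock, ← Real.exp_add]
  congr 1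
  ring

theorem modeRate_sub_modeRate_succ (hj : J ≤ j) (h : |radialClock β s - j| < 5 / 16) :
    modeRate lam β J j s - modeRate lam β J (j + 1) s =
      2 * rateShift (angularFreq j) (freqGap j) (relPotential lam j s) := by
  rw [abs_lt] at h
  rw [modeRate_of_leaving (by linarith [h.1]), modeRate_of_entering (by push_cast; linarith [h.2]),
    enterRate_succ hj, leaveRate]
  ring

theorem actionGap_crossingTime : actionGap lam β J j (crossingTime β j) = 0 := by
  rw [actionGap, modeAction_succ_crossingTime, sub_self]

namespace WKBRegime

theorem hasDerivAt_actionGap (H : WKBRegime lam β J) (hj : J ≤ j)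
    (h : |radialClock β s - j| < 5 / 16) :
    HasDerivAt (actionGap lam β J j)
      (2 * rateShift (angularFreq j) (freqGap j) (relPotential lam j s)) s := by
  have hlt := (abs_lt.1 h).2
  rw [← modeRate_sub_modeRate_succ hj h]
  exact (H.hasDerivAt_modeAction hj (by linarith)).sub
    (H.hasDerivAt_modeAction (i := j + 1) (by omega) (by push_cast; linarith))

theorem norm_actionGap_sub_le (H : WKBRegime lam β J) (hj : J ≤ j)
    (h : |radialClock β s - j| < 5 / 16) :
    ‖actionGap lam β J j s - freqGap j * (s - crossingTime β j)‖ ≤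
      freqGap j / 25 * |s - crossingTime β j| := by
  have hJ := H.le_start
  have hk := sixteen_le_freqGap (j := j)
  set S := radialClock β ⁻¹' Metric.ball (j : ℝ) (5 / 16)
  have hmem : ∀ {x}, x ∈ S ↔ |radialClock β x - j| < 5 / 16 := Iff.rfl
  have hconvex : Convex ℝ S := ((convex_ball (j : ℝ) (5 / 16)).ordConnected.preimage_mono
    (radialClock_strictMono H.pos).monotone).convex
  have hcross : crossingTime β j ∈ S := by
    rw [hmem, radialClock_crossingTime H.pos (by omega), sub_self, abs_zero]
    norm_num
  have hderiv : ∀ x ∈ S, HasDerivWithinAt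
      (fun x : ℝ => actionGap lam β J j x - freqGap j * (x - crossingTime β j))
      (2 * (rateShift (angularFreq j) (freqGap j) (relPotential lam j x) - freqGap j / 2)) S x := by
    intro x hx
    refine ((H.hasDerivAt_actionGap hj (hmem.1 hx)).sub (((hasDerivAt_id x).ofReal_comp.sub_const
      (crossingTime β j : ℂ)).const_mul (freqGap j : ℂ))).hasDerivWithinAt.congr_deriv ?_
    push_cast
    ring
  have hbound : ∀ x ∈ S, ‖2 * (rateShift (angularFreq j) (freqGap j) (relPotential lam j x) -
      freqGap j / 2)‖ ≤ freqGap j / 25 := by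
    intro x hx
    have hlt := (abs_lt.1 (hmem.1 hx)).2
    refine (norm_mul_le_of_le Complex.norm_two.le (norm_rateShift_sub_le (by linarith)
      (freqGap_le (by omega)) (H.norm_relPotential_le_of_le hj (by linarith)))).trans_eq ?_
    ring
  have hmvt := hconvex.norm_image_sub_le_of_norm_hasDerivWithin_le hderiv hbound hcross
    (hmem.2 h)
  rwa [actionGap_crossingTime, sub_self, mul_zero, sub_zero, sub_zero, Real.norm_eq_abs] at hmvt

theorem abs_re_actionGap_sub_le (H : WKBRegime lam β J) (hj : J ≤ j)
    (h : |radialClock β s - j| < 5 / 16) :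
    |(actionGap lam β J j s).re - freqGap j * (s - crossingTime β j)| ≤
      freqGap j / 25 * |s - crossingTime β j| := by
  have hre := (Complex.abs_re_le_norm _).trans (H.norm_actionGap_sub_le hj h)
  rwa [Complex.sub_re, ← Complex.ofReal_sub, Complex.re_ofReal_mul, Complex.ofReal_re] at hre

theorem freqGap_mul_abs_sub_crossingTime_le (H : WKBRegime lam β J) (hj : J ≤ j)
    (h : |radialClock β s - j| < 5 / 16) :
    24 / 25 * (freqGap j * |s - crossingTime β j|) ≤ |(actionGap lam β J j s).re| := by
  have hre := H.abs_re_actionGap_sub_le hj h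
  rw [abs_sub_comm] at hre
  have hle := (abs_sub_abs_le_abs_sub _ _).trans hre
  rw [abs_mul, abs_of_nonneg (by linarith [sixteen_le_freqGap (j := j)])] at hle
  linarith

theorem abs_im_actionGap_le (H : WKBRegime lam β J) (hj : J ≤ j)
    (h : |radialClock β s - j| < 5 / 16) :
    |(actionGap lam β J j s).im| ≤ |(actionGap lam β J j s).re| / 10 := by
  have him := (Complex.abs_im_le_norm _).trans (H.norm_actionGap_sub_le hj h)
  rw [Complex.sub_im, ← Complex.ofReal_sub, Complex.im_ofReal_mul, Complex.ofReal_im, mul_zero,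
    sub_zero] at him
  linarith [H.freqGap_mul_abs_sub_crossingTime_le hj h, abs_nonneg (actionGap lam β J j s).re]

theorem lt_radialClock_of_re_actionGap_pos (H : WKBRegime lam β J) (hj : J ≤ j)
    (h : |radialClock β s - j| < 5 / 16) (hpos : 0 < (actionGap lam β J j s).re) :
    (j : ℝ) < radialClock β s := by
  have hJ := H.le_start
  by_contra! hle
  rw [← radialClock_crossingTime H.pos (by omega), (radialClock_strictMono H.pos).le_iff_le,
    ← sub_nonpos] at hle
  have hre := H.abs_re_actionGap_sub_le hj h
  rw [abs_of_nonpos hle, abs_le] at hre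
  nlinarith [sixteen_le_freqGap (j := j)]

theorem radialClock_lt_of_re_actionGap_neg (H : WKBRegime lam β J) (hj : J ≤ j)
    (h : |radialClock β s - j| < 5 / 16) (hneg : (actionGap lam β J j s).re < 0) :
    radialClock β s < j := by
  have hJ := H.le_start
  by_contra! hle
  rw [← radialClock_crossingTime H.pos (by omega), (radialClock_strictMono H.pos).le_iff_le,
    ← sub_nonneg] at hle
  have hre := H.abs_re_actionGap_sub_le hj h
  rw [abs_of_nonneg hle, abs_le] at hre
  nlinarith [sixteen_le_freqGap (j := j)]

theorem abs_radialClock_sub_lt (H : WKBRegime lam β J) (hj : J ≤ j)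
    (h : |radialClock β s - j| < 5 / 16) (hre : |(actionGap lam β J j s).re| ≤ 1) :
    |radialClock β s - j| < 1 / 8 := by
  have hJ := H.le_start
  have hj' : (300 : ℝ) ≤ j := by exact_mod_cast (by omega : 300 ≤ j)
  have hle := H.freqGap_mul_abs_sub_crossingTime_le hj h
  have hy := abs_nonneg (s - crossingTime β j)
  set y := s - crossingTime β j
  have hjy : j * |y| ≤ 25 / 768 := by
    rw [freqGap] at hle
    nlinarith
  have hβy : |β / 2 * y| ≤ |y| := by
    rw [abs_mul, abs_of_pos (by linarith [H.pos])]
    nlinarith [H.le_two]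
  have hexp := Real.abs_exp_sub_one_le (x := β / 2 * y) (hβy.trans (by nlinarith))
  rw [radialClock_eq_mul_exp (j := j) H.pos (by omega), ← mul_sub_one, abs_mul, Nat.abs_cast]
  nlinarith

/-- At a zero of the sum of the two modes `cos` is near `-1` and `sin` near `0`, which makes the
mismatch of the potentials of the two modes small relative to the sum itself. -/
theorem abs_one_add_cos_add_abs_sin_mul_norm_mode_le (H : WKBRegime lam β J) (hj : J ≤ j)
    (h : |radialClock β p.1 - j| < 5 / 16) (hre : |(actionGap lam β J j p.1).re| ≤ 1) :
    (|1 + Real.cos (crossFreq (j + 1) * p.2)| + |Real.sin (crossFreq (j + 1) * p.2)|) *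
      ‖mode lam β J (j + 1) p‖ ≤ 18 * ‖mode lam β J j p + mode lam β J (j + 1) p‖ := by
  have hJ := H.le_start
  set α := crossFreq (j + 1) * p.2
  have hφ : |modeSign J (j + 1) * twist J (j + 1) p.2| ≤
      1 / 50 * |Real.sin (modeSign J (j + 1) * α)| := by
    have htwist := abs_twist_le_abs_sin (J := J) (i := j + 1) (by omega) p.2
    rcases eq_or_eq_neg_of_abs_eq (abs_modeSign (J := J) (i := j + 1)) with hε | hε <;>
      simpa [hε] using htwist
  have hsign : |1 + Real.cos α| + |Real.sin α| =
      |1 + Real.cos (modeSign J (j + 1) * α)| + |Real.sin (modeSign J (j + 1) * α)| := by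
    rcases eq_or_eq_neg_of_abs_eq (abs_modeSign (J := J) (i := j + 1)) with hε | hε <;>
      simp [hε]
  have hsum := abs_one_add_cos_add_abs_sin_le (H.abs_im_actionGap_le hj h) (abs_le.1 hre).1 hφ
  have hratio : ‖mode lam β J (j + 1) p‖ ≤ 3 * ‖mode lam β J j p‖ := by
    rw [norm_mode_succ]
    gcongr
    exact (Real.exp_le_exp.2 (abs_le.1 hre).2).trans (by linarith [Real.exp_one_lt_d9])
  calc _ ≤ 6 * ‖1 + Complex.exp (actionGap lam β J j p.1 + Complex.I *
        ((modeSign J (j + 1) * α : ℝ) + (modeSign J (j + 1) * twist J (j + 1) p.2 : ℝ)))‖ *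
          (3 * ‖mode lam β J j p‖) := by
        rw [hsign]
        gcongr
    _ = 18 * ‖mode lam β J j p + mode lam β J (j + 1) p‖ := by
        rw [mode_succ_eq h, ← mul_one_add, norm_mul]
        ring

end WKBRegime

end Ratio

section Crossing

variable {lam : ℂ} {β : ℝ} {J i j : ℕ} {p : ℝ × ℝ}

namespace WKBRegime

theorem norm_modePotential_mul_mode_add_le (H : WKBRegime lam β J) (hj : J ≤ j)
    (h : |radialClock β p.1 - j| < 5 / 16) (hre : |(actionGap lam β J j p.1).re| ≤ 1) :
    ‖modePotential lam β J j p * mode lam β J j p +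
        modePotential lam β J (j + 1) p * mode lam β J (j + 1) p‖ ≤
      100 * (angularFreq j * freqGap j) * ‖mode lam β J j p + mode lam β J (j + 1) p‖ := by
  have hJ := H.le_start
  have hlt := abs_lt.1 h
  have hk := sixteen_le_freqGap (j := j)
  have hkn := freqGap_le (j := j) (by omega)
  set V := crossingPotential (angularFreq j) (freqGap j) (relPotential lam j p.1)
  set E := mode lam β J j p
  set E' := mode lam β J (j + 1) p
  have hV : ‖V‖ ≤ 10 * (angularFreq j * freqGap j) :=
    norm_crossingPotential_le hk hkn (H.norm_relPotential_le_of_le hj (by linarith))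
  calc _ = ‖V * (E + E') + (modePotential lam β J (j + 1) p - V) * E'‖ := by
        refine congrArg _ ?_
        linear_combination E * modePotential_of_leaving (lam := lam) (β := β) (J := J) (i := j)
          (p := p) (by omega) (by linarith)
    _ ≤ 10 * (angularFreq j * freqGap j) * ‖E + E'‖ +
        5 * (angularFreq j * freqGap j) * (18 * ‖E + E'‖) := by
        refine norm_add_le_of_le (norm_mul_le_of_le hV le_rfl) ?_
        rw [norm_mul]
        refine (mul_le_mul_of_nonneg_right (H.norm_modePotential_succ_sub_le hj (by linarith))
          (norm_nonneg _)).trans ?_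
        rw [mul_assoc]
        exact mul_le_mul_of_nonneg_left
          (H.abs_one_add_cos_add_abs_sin_mul_norm_mode_le hj h hre) (by nlinarith)
    _ = _ := by ring

theorem norm_leaveRate_sub_le (H : WKBRegime lam β J) (hj : J ≤ j)
    (h : radialClock β p.1 ≤ j + 1) :
    ‖leaveRate lam j p.1 - angularFreq j‖ ≤ angularFreq j / 10 := by
  have hJ := H.le_start
  have hk := sixteen_le_freqGap (j := j)
  have hkn := freqGap_le (j := j) (by omega)
  have hw := H.norm_relPotential_le_of_le hj h
  rw [leaveRate, add_sub_right_comm]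
  refine (norm_add_le_of_le (norm_meanRate_sub_le (by linarith) hw)
    (norm_rateShift_le (by linarith) hkn hw)).trans ?_
  linarith

theorem polarEstimate_mode_add_mode_succ (H : WKBRegime lam β J) (hj : J ≤ j)
    (h : |radialClock β p.1 - j| < 5 / 16) (hre : |(actionGap lam β J j p.1).re| ≤ 1) :
    PolarEstimate lam (fun q => mode lam β J j q + mode lam β J (j + 1) q) p
      (100 * (angularFreq j * freqGap j)) (angularFreq j / 4) := by
  have hJ := H.le_start
  have hlt := abs_lt.1 h
  have hk := sixteen_le_freqGap (j := j)
  have hkn := freqGap_le (j := j) (by omega)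
  have hw := H.norm_relPotential_le_of_le hj (s := p.1) (by linarith)
  refine ⟨_, _, _, _, (H.hasUnmixedJet_mode hj (by linarith)).add
    (H.hasUnmixedJet_mode (i := j + 1) (by omega) (by push_cast; linarith)), ?_, ?_⟩
  · refine le_of_eq_of_le (congrArg _ ?_) (H.norm_modePotential_mul_mode_add_le hj h hre)
    rw [modePotential, modePotential]
    ring
  · have hrate : ‖-enterRate lam J (j + 1) p.1 - -leaveRate lam j p.1‖ ≤ angularFreq j / 50 := by
      rw [enterRate_succ hj, leaveRate, show ∀ a b : ℂ, -(a - b) - -(a + b) = 2 * b by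
        intros; ring]
      refine (norm_mul_le_of_le Complex.norm_two.le (norm_rateShift_le (by linarith) hkn
        hw)).trans ?_
      linarith
    have hleave : ‖-leaveRate lam j p.1 + angularFreq j‖ ≤ angularFreq j / 10 := by
      rw [neg_add_eq_sub, norm_sub_rev]
      exact H.norm_leaveRate_sub_le hj (by linarith)
    have hgrad := div_four_mul_norm_add_le (E₁ := mode lam β J j p)
      (E₂ := mode lam β J (j + 1) p) angularFreq_nonneg hleave hrate
      (angularFreq_add_twistDeriv_mem_Icc (θ := p.2) hj (by omega)).1
    have hsign (z : ℂ) : ‖Complex.I * (modeSign J j * z)‖ = ‖z‖ := by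
      rw [← mul_assoc, norm_mul, ← mul_one (modeSign J j : ℂ), ← Complex.ofReal_one,
        norm_I_mul_modeSign_mul, abs_one, one_mul]
    refine hgrad.trans_eq ?_
    rw [modePhaseFst_of_leaving (by linarith), modePhaseFst_of_entering (by push_cast; linarith),
      modePhaseSnd_of_leaving (by linarith), modePhaseSnd_of_entering (by push_cast; linarith),
      modeSign_succ, ← hsign (_ - _)]
    congr 2
    push_cast
    ring

theorem norm_modePotential_le_of_crossing (H : WKBRegime lam β J) (hj : J ≤ j)
    (h : |radialClock β p.1 - j| < 5 / 16) (hi : i = j ∨ i = j + 1) :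
    ‖modePotential lam β J i p‖ ≤ 25 * (angularFreq j * freqGap j) := by
  have hJ := H.le_start
  have hlt := abs_lt.1 h
  have hk := sixteen_le_freqGap (j := j)
  have hkn := freqGap_le (j := j) (by omega)
  have hV := norm_crossingPotential_le hk hkn
    (H.norm_relPotential_le_of_le hj (s := p.1) (by linarith))
  rcases hi with rfl | rfl
  · rw [modePotential_of_leaving (by omega) (by linarith)]
    nlinarith
  · have hdiff := H.norm_modePotential_succ_sub_le hj (p := p) (by linarith)
    have hcos := Real.cos_mem_Icc (crossFreq (j + 1) * p.2)
    have htrig : |1 + Real.cos (crossFreq (j + 1) * p.2)| +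
        |Real.sin (crossFreq (j + 1) * p.2)| ≤ 3 := by
      rw [abs_of_nonneg (by linarith [hcos.1])]
      linarith [hcos.2, Real.abs_sin_le_one (crossFreq (j + 1) * p.2)]
    have hmul := mul_le_mul_of_nonneg_left htrig
      (show 0 ≤ 5 * (angularFreq j * freqGap j) by nlinarith)
    linarith [norm_le_norm_add_norm_sub' (modePotential lam β J (j + 1) p)
      (crossingPotential (angularFreq j) (freqGap j) (relPotential lam j p.1))]

theorem norm_modePhaseFst_le_of_crossing (H : WKBRegime lam β J) (hj : J ≤ j)
    (h : |radialClock β p.1 - j| < 5 / 16) (hi : i = j ∨ i = j + 1) :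
    ‖modePhaseFst lam β J i p‖ ≤ 3 * angularFreq j := by
  have hJ := H.le_start
  have hlt := abs_lt.1 h
  have hk := sixteen_le_freqGap (j := j)
  have hkn := freqGap_le (j := j) (by omega)
  have hw := H.norm_relPotential_le_of_le hj (s := p.1) (by linarith)
  rcases hi with rfl | rfl
  · rw [modePhaseFst_of_leaving (by linarith), norm_neg]
    exact H.norm_leaveRate_le hj (by linarith)
  · rw [modePhaseFst_of_entering (by push_cast; linarith), norm_neg, enterRate_succ hj]
    refine (norm_sub_le_of_le (norm_meanRate_le (by linarith) hw)
      (norm_rateShift_le (by linarith) hkn hw)).trans ?_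
    linarith

/-- The effect of a cutoff `χ` with derivatives `χ₁` and `χ₂` on the potential of a mode. -/
theorem norm_add_mul_modePhaseFst_add_le {B χ χ₁ χ₂ : ℝ} (H : WKBRegime lam β J) (hj : J ≤ j)
    (h : |radialClock β p.1 - j| < 5 / 16) (hi : i = j ∨ i = j + 1) (hB : 0 ≤ B) (hχ : |χ| ≤ 1)
    (hχ₁ : |χ₁| ≤ B * radialClock β p.1) (hχ₂ : |χ₂| ≤ B * radialClock β p.1 ^ 2) :
    ‖χ₂ + 2 * (χ₁ * modePhaseFst lam β J i p) + χ * modePotential lam β J i p‖ ≤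
      (7 * B + 25) * (angularFreq j * freqGap j) := by
  have hlt := abs_lt.1 h
  have ht := radialClock_pos (β := β) (s := p.1)
  have hk := sixteen_le_freqGap (j := j)
  have hkn := freqGap_le (j := j) (by have := H.le_start; omega)
  have htk : radialClock β p.1 ≤ freqGap j := by
    rw [freqGap]
    linarith [(Nat.cast_nonneg j : (0 : ℝ) ≤ j)]
  have hsq : |χ₂| ≤ B * (angularFreq j * freqGap j) := by
    rw [pow_two] at hχ₂
    exact hχ₂.trans (mul_le_mul_of_nonneg_left
      (mul_le_mul (by linarith) htk ht.le angularFreq_nonneg) hB)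
  have hmul : |χ₁| * ‖modePhaseFst lam β J i p‖ ≤ 3 * B * (angularFreq j * freqGap j) := by
    refine (mul_le_mul hχ₁ (H.norm_modePhaseFst_le_of_crossing hj h hi) (norm_nonneg _)
      (by positivity)).trans ?_
    nlinarith [mul_le_mul_of_nonneg_left htk (mul_nonneg hB (angularFreq_nonneg (j := j)))]
  have hpot : |χ| * ‖modePotential lam β J i p‖ ≤ 25 * (angularFreq j * freqGap j) :=
    (mul_le_of_le_one_left (norm_nonneg _) hχ).trans
      (H.norm_modePotential_le_of_crossing hj h hi)
  refine norm_add₃_le.trans ?_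
  rw [norm_mul 2, norm_mul, norm_mul, Complex.norm_two, Complex.norm_real, Complex.norm_real,
    Complex.norm_real, Real.norm_eq_abs, Real.norm_eq_abs, Real.norm_eq_abs]
  linarith

end WKBRegime

theorem norm_modePhaseSnd_mem_Icc_of_crossing (hj : J ≤ j) (hj' : 299 ≤ j)
    (h : |radialClock β p.1 - j| < 5 / 16) (hi : i = j ∨ i = j + 1) :
    ‖modePhaseSnd β J i p‖ ∈ Set.Icc (99 / 100 * angularFreq j) (104 / 100 * angularFreq j) := by
  have hlt := abs_lt.1 h
  have hn := angularFreq_nonneg (j := j)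
  rcases hi with rfl | rfl
  · rw [modePhaseSnd_of_leaving (by linarith), norm_I_mul_modeSign_mul, abs_of_nonneg hn]
    constructor <;> linarith
  · have hmem := angularFreq_add_twistDeriv_mem_Icc (θ := p.2) hj hj'
    rw [modePhaseSnd_of_entering (by push_cast; linarith), norm_I_mul_modeSign_mul,
      abs_of_nonneg (by linarith [hmem.1])]
    exact hmem

theorem exists_polarEstimate_mode_add_cutoff_mul_mode (A : ℝ) : ∃ C, 0 ≤ C ∧
    ∀ lam β J j i i' a b (p : ℝ × ℝ), WKBRegime lam β J → J ≤ j →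
      |radialClock β p.1 - j| < 5 / 16 → (i = j ∨ i = j + 1) → (i' = j ∨ i' = j + 1) → |a| ≤ A →
      2 * ‖mode lam β J i' p‖ ≤ ‖mode lam β J i p‖ →
      PolarEstimate lam (fun q => mode lam β J i q + cutoff β a b q.1 * mode lam β J i' q) p
        (C * (angularFreq j * freqGap j)) (angularFreq j / 4) := by
  obtain ⟨B, hB0, hB⟩ := exists_abs_deriv_cutoff_le A
  refine ⟨4 * (7 * B + 25), by positivity,
    fun lam β J j i i' a b p H hj h hi hi' ha hdom => ?_⟩
  have hJ := H.le_start
  have hlt := abs_lt.1 h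
  have hj' : (300 : ℝ) ≤ j := by exact_mod_cast (by omega : 300 ≤ j)
  have hn := angularFreq_nonneg (j := j)
  have hk := sixteen_le_freqGap (j := j)
  have hchain := hB β a b p.1 H.pos.le H.le_two ha
  have hjet (i) (hi : i = j ∨ i = j + 1) := H.hasUnmixedJet_mode (i := i) (p := p) (by omega)
    (by rcases hi with rfl | rfl <;> push_cast <;> linarith)
  have hfreq (i) (hi : i = j ∨ i = j + 1) :=
    norm_modePhaseSnd_mem_Icc_of_crossing (β := β) hj (by omega) h hi
  have hle : ‖mode lam β J i' p‖ ≤ ‖mode lam β J i p‖ := by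
    linarith [norm_nonneg (mode lam β J i' p)]
  rw [mul_assoc]
  refine .add_of_dominated (hjet i hi) ((hasUnmixedJet_cutoff β a b p).mul (hjet i' hi'))
    ?_ hn (by positivity) ?_ ?_ ?_ ?_
  · rw [norm_mul, Complex.norm_real, Real.norm_eq_abs]
    nlinarith [norm_nonneg (mode lam β J i' p), abs_cutoff_le_one (β := β) (a := a) (b := b)
      (s := p.1)]
  · rw [← add_mul, ← add_mul, norm_mul]
    refine mul_le_mul_of_nonneg_right ?_ (norm_nonneg _)
    refine (H.norm_modePotential_le_of_crossing hj h hi).trans ?_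
    gcongr
    linarith
  · have hcut := H.norm_add_mul_modePhaseFst_add_le (χ := cutoff β a b p.1) hj h hi' hB0
      abs_cutoff_le_one hchain.1 (hchain.2 (by linarith))
    refine le_trans (le_of_eq ?_) (mul_le_mul hcut hle (norm_nonneg _) (by positivity))
    rw [← norm_mul, modePotential]
    ring_nf
  · rw [norm_mul]
    exact mul_le_mul_of_nonneg_right (hfreq i hi).1 (norm_nonneg _)
  · rw [zero_mul, zero_add, norm_mul, norm_mul, Complex.norm_real, Real.norm_eq_abs]
    calc _ ≤ 1 * (104 / 100 * angularFreq j * ‖mode lam β J i' p‖) := by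
          gcongr
          exacts [abs_cutoff_le_one, (hfreq i' hi').2]
      _ ≤ _ := by nlinarith

end Crossing

/-! ### The solution in logarithmic polar coordinates -/

/-- The weight of mode `j` in its crossing with mode `j + 1`: it falls from `1` to `0` between the
clock times `j + 1 / 8` and `j + 3 / 16`. -/
def fallCutoff (β : ℝ) (j : ℕ) : ℝ → ℝ := cutoff β (-16) (3 + 16 * j)

/-- The weight of mode `j + 1` in its crossing with mode `j`: it rises from `0` to `1` between the
clock times `j - 3 / 16` and `j - 1 / 8`. -/
def riseCutoff (β : ℝ) (j : ℕ) : ℝ → ℝ := cutoff β 16 (3 - 16 * j)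

/-- The weighted sum of the modes `j` and `j + 1` around their crossing. -/
def crossingSum (lam : ℂ) (β : ℝ) (J j : ℕ) (p : ℝ × ℝ) : ℂ :=
  fallCutoff β j p.1 * mode lam β J j p + riseCutoff β j p.1 * mode lam β J (j + 1) p

/-- The solution in logarithmic polar coordinates: the modes `J, J + 1, …` one after the other, with
the crossings at integer clock times. -/
def modeSum (lam : ℂ) (β : ℝ) (J : ℕ) (p : ℝ × ℝ) : ℂ :=
  if ⌊radialClock β p.1 + 1 / 2⌋₊ < J then mode lam β J J p else
    crossingSum lam β J ⌊radialClock β p.1 + 1 / 2⌋₊ p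

section ModeSum

variable {lam : ℂ} {β s : ℝ} {J j : ℕ} {p : ℝ × ℝ}

theorem fallCutoff_eq_one (h : radialClock β s ≤ j + 1 / 8) : fallCutoff β j s = 1 :=
  cutoff_eq_one (by linarith)

theorem fallCutoff_eq_zero (h : j + 3 / 16 ≤ radialClock β s) : fallCutoff β j s = 0 :=
  cutoff_eq_zero (by linarith)

theorem riseCutoff_eq_one (h : j - 1 / 8 ≤ radialClock β s) : riseCutoff β j s = 1 :=
  cutoff_eq_one (by linarith)

theorem riseCutoff_eq_zero (h : radialClock β s ≤ j - 3 / 16) : riseCutoff β j s = 0 :=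
  cutoff_eq_zero (by linarith)

theorem continuous_radialClock_fst : Continuous fun q : ℝ × ℝ => radialClock β q.1 :=
  (contDiff_radialClock (n := 0)).continuous.comp continuous_fst

theorem two_mul_norm_mode_le_norm_mode_succ (h : 1 ≤ (actionGap lam β J j p.1).re) :
    2 * ‖mode lam β J j p‖ ≤ ‖mode lam β J (j + 1) p‖ := by
  rw [norm_mode_succ]
  gcongr
  linarith [Real.add_one_le_exp (actionGap lam β J j p.1).re]

theorem two_mul_norm_mode_succ_le_norm_mode (h : (actionGap lam β J j p.1).re ≤ -1) :
    2 * ‖mode lam β J (j + 1) p‖ ≤ ‖mode lam β J j p‖ := by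
  rw [norm_mode_succ, ← mul_assoc]
  refine mul_le_of_le_one_left (norm_nonneg _) ?_
  calc 2 * Real.exp (actionGap lam β J j p.1).re
      ≤ Real.exp (-(actionGap lam β J j p.1).re) * Real.exp (actionGap lam β J j p.1).re := by
        gcongr
        linarith [Real.add_one_le_exp (-(actionGap lam β J j p.1).re)]
    _ = 1 := by rw [← Real.exp_add, neg_add_cancel, Real.exp_zero]

/-- Near the zeros of `crossingSum` the modes have comparable size and both weights are `1`;
elsewhere one mode dominates and its weight is `1`. -/
theorem exists_polarEstimate_crossingSum : ∃ C, 0 ≤ C ∧ ∀ lam β J j (p : ℝ × ℝ),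
    WKBRegime lam β J → J ≤ j → |radialClock β p.1 - j| < 5 / 16 →
      PolarEstimate lam (crossingSum lam β J j) p (C * (angularFreq j * freqGap j))
        (angularFreq j / 4) := by
  obtain ⟨C, hC0, hC⟩ := exists_polarEstimate_mode_add_cutoff_mul_mode 16
  refine ⟨C + 100, by positivity, fun lam β J j p H hj h => ?_⟩
  have hnk : 0 ≤ angularFreq j * freqGap j :=
    mul_nonneg angularFreq_nonneg (by linarith [sixteen_le_freqGap (j := j)])
  have hclock := (continuous_radialClock_fst (β := β)).continuousAt (x := p)
  have hfall (hlt : radialClock β p.1 < j + 1 / 8) :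
      ∀ᶠ q : ℝ × ℝ in 𝓝 p, fallCutoff β j q.1 = 1 :=
    (hclock.eventually_lt_const hlt).mono fun q hq => fallCutoff_eq_one hq.le
  have hrise (hlt : j - 1 / 8 < radialClock β p.1) :
      ∀ᶠ q : ℝ × ℝ in 𝓝 p, riseCutoff β j q.1 = 1 :=
    (hclock.eventually_const_lt hlt).mono fun q hq => riseCutoff_eq_one hq.le
  rcases lt_or_ge 1 (actionGap lam β J j p.1).re with hgt | hle
  · have hjt := H.lt_radialClock_of_re_actionGap_pos hj h (one_pos.trans hgt)
    refine ((hC lam β J j (j + 1) j (-16) (3 + 16 * j) p H hj h (.inr rfl) (.inl rfl) (by norm_num)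
      (two_mul_norm_mode_le_norm_mode_succ hgt.le)).congr_of_eventuallyEq ?_).mono
        (by gcongr; linarith) le_rfl
    filter_upwards [hrise (by linarith)] with q hq
    rw [crossingSum, hq, Complex.ofReal_one, one_mul, add_comm, fallCutoff]
  rcases lt_or_ge (actionGap lam β J j p.1).re (-1) with hlt | hge
  · have hjt := H.radialClock_lt_of_re_actionGap_neg hj h (hlt.trans (by norm_num))
    refine ((hC lam β J j j (j + 1) 16 (3 - 16 * j) p H hj h (.inl rfl) (.inr rfl) (by norm_num)
      (two_mul_norm_mode_succ_le_norm_mode hlt.le)).congr_of_eventuallyEq ?_).mono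
        (by gcongr; linarith) le_rfl
    filter_upwards [hfall (by linarith)] with q hq
    rw [crossingSum, hq, Complex.ofReal_one, one_mul, riseCutoff]
  · have hjt := abs_lt.1 (H.abs_radialClock_sub_lt hj h (abs_le.2 ⟨hge, hle⟩))
    refine ((H.polarEstimate_mode_add_mode_succ hj h (abs_le.2 ⟨hge, hle⟩)).congr_of_eventuallyEq
      ?_).mono (by gcongr; linarith) le_rfl
    filter_upwards [hfall (by linarith), hrise (by linarith)] with q hq hq'
    rw [crossingSum, hq, hq', Complex.ofReal_one, one_mul, one_mul]

theorem modeSum_eq_crossingSum (hj : J ≤ j) (h : |radialClock β p.1 - j| < 5 / 16) :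
    modeSum lam β J p = crossingSum lam β J j p := by
  have hlt := abs_lt.1 h
  have hfloor : ⌊radialClock β p.1 + 1 / 2⌋₊ = j :=
    (Nat.floor_eq_iff (by linarith [radialClock_pos (β := β) (s := p.1)])).2
      ⟨by linarith, by linarith⟩
  rw [modeSum, hfloor, if_neg (by omega)]

theorem crossingSum_eq_mode_succ (h : j + 3 / 16 ≤ radialClock β p.1) :
    crossingSum lam β J j p = mode lam β J (j + 1) p := by
  rw [crossingSum, fallCutoff_eq_zero h, riseCutoff_eq_one (by linarith), Complex.ofReal_zero,
    Complex.ofReal_one, zero_mul, one_mul, zero_add]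

theorem crossingSum_eq_mode (h : radialClock β p.1 ≤ j - 3 / 16) :
    crossingSum lam β J j p = mode lam β J j p := by
  rw [crossingSum, fallCutoff_eq_one (by linarith), riseCutoff_eq_zero h, Complex.ofReal_zero,
    Complex.ofReal_one, zero_mul, one_mul, add_zero]

theorem modeSum_eq_mode_succ (hj : J ≤ j) (h : j + 3 / 16 ≤ radialClock β p.1)
    (h' : radialClock β p.1 ≤ j + 13 / 16) :
    modeSum lam β J p = mode lam β J (j + 1) p := by
  have h0 : 0 ≤ radialClock β p.1 + 1 / 2 := by linarith [radialClock_pos (β := β) (s := p.1)]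
  rcases lt_or_ge (radialClock β p.1) (j + 1 / 2) with hlt | hge
  · have hfloor : ⌊radialClock β p.1 + 1 / 2⌋₊ = j :=
      (Nat.floor_eq_iff h0).2 ⟨by linarith, by linarith⟩
    rw [modeSum, hfloor, if_neg (by omega), crossingSum_eq_mode_succ h]
  · have hfloor : ⌊radialClock β p.1 + 1 / 2⌋₊ = j + 1 :=
      (Nat.floor_eq_iff h0).2 ⟨by push_cast; linarith, by push_cast; linarith⟩
    rw [modeSum, hfloor, if_neg (by omega), crossingSum_eq_mode (by push_cast; linarith)]

theorem modeSum_eq_mode_start (h : radialClock β p.1 ≤ J - 3 / 16) :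
    modeSum lam β J p = mode lam β J J p := by
  have h0 : 0 ≤ radialClock β p.1 + 1 / 2 := by linarith [radialClock_pos (β := β) (s := p.1)]
  by_cases hlt : ⌊radialClock β p.1 + 1 / 2⌋₊ < J
  · rw [modeSum, if_pos hlt]
  · have hfloor : ⌊radialClock β p.1 + 1 / 2⌋₊ = J :=
      (Nat.floor_eq_iff h0).2 ⟨(Nat.le_floor_iff h0).1 (not_lt.1 hlt), by linarith⟩
    rw [modeSum, if_neg hlt, hfloor, crossingSum_eq_mode h]

theorem WKBRegime.polarEstimate_mode {i : ℕ} {K : ℝ} (H : WKBRegime lam β J) (hi : J ≤ i)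
    (hp : radialClock β p.1 < i + 1) (hK : ‖modePotential lam β J i p‖ ≤ K) :
    PolarEstimate lam (mode lam β J i) p K (angularFreq i / 2) := by
  refine ⟨_, _, _, _, H.hasUnmixedJet_mode hi hp, ?_, ?_⟩
  · rw [← add_mul, ← add_mul, norm_mul, ← modePotential]
    gcongr
  · have hJ := H.le_start
    rw [norm_mul, norm_mul]
    refine le_trans ?_ (le_add_of_nonneg_left (by positivity))
    gcongr
    exact angularFreq_div_two_le_norm_modePhaseSnd (by omega)

theorem angularFreq_mul_freqGap_le {t : ℝ} (hj : 1 ≤ j) (h : j ≤ 2 * t) :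
    angularFreq j * freqGap j ≤ 6144 * t ^ 3 := by
  have hj' : (1 : ℝ) ≤ j := by exact_mod_cast hj
  have hcube : (j : ℝ) ^ 3 ≤ (2 * t) ^ 3 := by gcongr
  rw [angularFreq, freqGap]
  nlinarith

theorem exists_polarEstimate_modeSum_outer : ∃ C, 0 ≤ C ∧ ∀ lam β J (p : ℝ × ℝ),
    WKBRegime lam β J → (J : ℝ) - 1 / 4 ≤ radialClock β p.1 →
      PolarEstimate lam (modeSum lam β J) p (C * radialClock β p.1 ^ 3)
        (radialClock β p.1 ^ 2) := by
  obtain ⟨C, hC0, hC⟩ := exists_polarEstimate_crossingSum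
  obtain ⟨C', hC'0, hC'⟩ := WKBRegime.exists_norm_modePotential_le
  refine ⟨(C + C') * 6144, by positivity, fun lam β J p H hp => ?_⟩
  have hJ : (300 : ℝ) ≤ J := by exact_mod_cast H.le_start
  have hclock := (continuous_radialClock_fst (β := β)).continuousAt (x := p)
  set t := radialClock β p.1
  have hbound (i : ℕ) (hi : 1 ≤ i) (hit : i ≤ 2 * t) {B : ℝ} (hB : B ≤ C + C') :
      B * (angularFreq i * freqGap i) ≤ (C + C') * 6144 * t ^ 3 := by
    rw [mul_assoc]
    exact mul_le_mul hB (angularFreq_mul_freqGap_le hi hit) (mul_nonneg angularFreq_nonneg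
      (by linarith [sixteen_le_freqGap (j := i)])) (by positivity)
  have hsingle (j : ℕ) (hj : J ≤ j) (h : j + 3 / 16 < t) (h' : t < j + 13 / 16) :
      PolarEstimate lam (modeSum lam β J) p ((C + C') * 6144 * t ^ 3) (t ^ 2) := by
    have hest := H.polarEstimate_mode (i := j + 1) (by omega) (by push_cast; linarith)
      (hC' lam β J (j + 1) p H (by omega) (by push_cast; linarith) (by push_cast; linarith))
    refine (hest.congr_of_eventuallyEq ?_).mono (hbound _ (by omega) (by push_cast; linarith)
      (by linarith)) (by rw [angularFreq]; push_cast; nlinarith)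
    filter_upwards [hclock.eventually_const_lt h, hclock.eventually_lt_const h'] with q hq hq'
      using modeSum_eq_mode_succ hj hq.le hq'.le
  obtain ⟨hfloor, hfloor'⟩ := (Nat.floor_eq_iff (by linarith)).1 (Eq.refl ⌊t + 1 / 2⌋₊)
  have hj : J ≤ ⌊t + 1 / 2⌋₊ := Nat.le_floor (by linarith)
  generalize ⌊t + 1 / 2⌋₊ = j at hfloor hfloor' hj
  have hj' : (J : ℝ) ≤ j := by exact_mod_cast hj
  by_cases hcross : |t - j| < 5 / 16
  · refine ((hC lam β J j p H hj hcross).congr_of_eventuallyEq ?_).mono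
      (hbound _ (by have := H.le_start; omega) (by linarith) (by linarith))
      (by rw [angularFreq]; nlinarith)
    have hopen := (hclock.sub_const (j : ℝ)).abs.eventually_lt_const hcross
    exact hopen.mono fun q hq => modeSum_eq_crossingSum hj hq
  · rcases le_abs.1 (not_lt.1 hcross) with h | h
    · exact hsingle j hj (by linarith) (by linarith)
    · obtain ⟨i, rfl⟩ := Nat.exists_eq_add_of_lt (show J < j by
        exact_mod_cast (by linarith : (J : ℝ) < j))
      push_cast at *
      exact hsingle (J + i) (by omega) (by push_cast; linarith) (by push_cast; linarith)

end ModeSum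

section Start

variable {lam : ℂ} {β s : ℝ} {J j : ℕ} {p : ℝ × ℝ}

theorem enterRate_start : enterRate lam J J s = -angularFreq J := if_pos le_rfl

theorem modePotential_start :
    modePotential lam β J J p = -modeRateDeriv lam β J J p.1 + modeRate lam β J J p.1 ^ 2 -
      (angularFreq J : ℂ) ^ 2 + lam * Complex.exp (2 * p.1) := by
  have hsign : (modeSign J J : ℂ) ^ 2 = 1 := by exact_mod_cast modeSign_sq
  have hamp : twistAmplitude J J = 0 := if_pos le_rfl
  simp only [modePotential, modePhaseFst, modePhaseFstFst, modePhaseSnd, modePhaseSndSnd, twist,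
    twistDeriv, twistSecondDeriv, hamp, zero_div, zero_mul, mul_zero, neg_zero, Complex.ofReal_zero,
    add_zero, mul_pow, Complex.I_sq, hsign]
  ring

theorem modePotential_start_of_entering (h : radialClock β p.1 < J - 11 / 16) :
    modePotential lam β J J p = lam * Complex.exp (2 * p.1) := by
  have hderiv : modeRateDeriv lam β J J p.1 = 0 := by
    simp [modeRateDeriv, switch_eq_one h.le, deriv_switch_eq_zero (.inl h), enterRateDeriv]
  rw [modePotential_start, modeRate_of_entering h.le, hderiv, enterRate_start]
  ring

namespace WKBRegime

theorem continuousAt_modeRateDeriv {i : ℕ} (H : WKBRegime lam β J) (hi : J ≤ i)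
    (hs : radialClock β s < i + 1) : ContinuousAt (modeRateDeriv lam β J i) s := by
  have hderiv : modeRateDeriv lam β J i =ᶠ[𝓝 s] fun x => fderiv ℝ (modeRate lam β J i) x 1 := by
    filter_upwards [(contDiff_radialClock (n := 0)).continuous.continuousAt.eventually_lt_const hs]
      with x hx using (H.hasDerivAt_modeRate hi hx.le).deriv.symm
  exact (((H.contDiffAt_modeRate hi hs.le (m := 1)).continuousAt_fderiv one_ne_zero).clm_apply
    continuousAt_const).congr_of_eventuallyEq hderiv

theorem exists_norm_modePotential_start_le (H : WKBRegime lam β J) : ∃ K, 0 ≤ K ∧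
    ∀ p : ℝ × ℝ, radialClock β p.1 ≤ J → ‖modePotential lam β J J p‖ ≤ K * Real.exp (2 * p.1) := by
  have hJ := H.le_start
  have hmono := radialClock_strictMono H.pos
  have hcont : ContinuousOn (fun x => ‖modePotential lam β J J (x, 0)‖ / Real.exp (2 * x))
      (Set.Icc (crossingTime β (J - 1)) (crossingTime β J)) := by
    intro x hx
    have hlt : radialClock β x < J + 1 := by
      have hle := hmono.monotone hx.2
      rw [radialClock_crossingTime H.pos (by omega)] at hle
      linarith
    simp only [modePotential_start]
    refine ContinuousAt.continuousWithinAt (ContinuousAt.div ?_ (by fun_prop) (Real.exp_ne_zero _))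
    exact ((((H.continuousAt_modeRateDeriv le_rfl hlt).neg.add
      ((H.hasDerivAt_modeRate le_rfl hlt.le).continuousAt.pow 2)).sub continuousAt_const).add
      (by fun_prop)).norm
  obtain ⟨M, hM⟩ := isCompact_Icc.bddAbove_image hcont
  refine ⟨max M ‖lam‖, le_max_of_le_right (norm_nonneg _), fun p hp => ?_⟩
  rcases lt_or_ge (radialClock β p.1) (J - 1) with hlt | hge
  · rw [modePotential_start_of_entering (by linarith), norm_mul, Complex.norm_exp]
    gcongr
    · exact le_max_right _ _
    · simp
  · have hmem : p.1 ∈ Set.Icc (crossingTime β (J - 1)) (crossingTime β J) := by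
      refine ⟨hmono.le_iff_le.1 ?_, hmono.le_iff_le.1 ?_⟩
      · rwa [radialClock_crossingTime H.pos (by omega), Nat.cast_pred (by omega)]
      · rwa [radialClock_crossingTime H.pos (by omega)]
    have hle := (hM (Set.mem_image_of_mem _ hmem)).trans (le_max_left M ‖lam‖)
    simp only [modePotential_start] at hle ⊢
    exact (div_le_iff₀ (Real.exp_pos _)).1 hle

theorem exists_polarEstimate_modeSum_inner (H : WKBRegime lam β J) : ∃ K, 0 ≤ K ∧
    ∀ p : ℝ × ℝ, radialClock β p.1 ≤ J - 1 / 4 →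
      PolarEstimate lam (modeSum lam β J) p (K * Real.exp (2 * p.1)) 1 := by
  obtain ⟨K, hK0, hK⟩ := H.exists_norm_modePotential_start_le
  refine ⟨K, hK0, fun p hp => ?_⟩
  refine ((H.polarEstimate_mode le_rfl (by linarith) (hK p (by linarith))).congr_of_eventuallyEq
    ?_).mono le_rfl ?_
  · filter_upwards [continuous_radialClock_fst.continuousAt.eventually_lt_const
      (show radialClock β p.1 < J - 3 / 16 by linarith)] with q hq
      using modeSum_eq_mode_start hq.le
  · linarith [le_angularFreq (j := J) (by have := H.le_start; omega)]

theorem modeAction_start_eq (H : WKBRegime lam β J) (hs : radialClock β s ≤ J - 1) :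
    modeAction lam β J J s = modeAction lam β J J (crossingTime β (J - 1)) +
      angularFreq J * (crossingTime β (J - 1) - s) := by
  have hJ := H.le_start
  have hmono := radialClock_strictMono H.pos
  have hend : radialClock β (crossingTime β (J - 1)) = J - 1 := by
    rw [radialClock_crossingTime H.pos (by omega), Nat.cast_pred (by omega)]
  have hle : s ≤ crossingTime β (J - 1) := hmono.le_iff_le.1 (hs.trans_eq hend.symm)
  have hderiv : ∀ x ∈ Set.uIcc s (crossingTime β (J - 1)),
      HasDerivAt (modeAction lam β J J) (-angularFreq J : ℂ) x := by
    intro x hx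
    rw [Set.uIcc_of_le hle] at hx
    have hxle := (hmono.monotone hx.2).trans_eq hend
    refine (H.hasDerivAt_modeAction le_rfl (by linarith)).congr_deriv ?_
    rw [modeRate_of_entering (by linarith), enterRate_start]
  have hint := intervalIntegral.integral_eq_sub_of_hasDerivAt hderiv intervalIntegrable_const
  rw [intervalIntegral.integral_const, Complex.real_smul] at hint
  push_cast at hint
  linear_combination hint

theorem exists_mode_start_eq (H : WKBRegime lam β J) : ∃ c : ℂ,
    ∀ p : ℝ × ℝ, radialClock β p.1 ≤ J - 1 →
      mode lam β J J p = c * complexCoord (polarExp p) ^ (16 * J ^ 2) := by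
  refine ⟨Complex.exp (-(modeAction lam β J J (crossingTime β (J - 1)) +
    angularFreq J * crossingTime β (J - 1))), fun p hp => ?_⟩
  have hamp : twistAmplitude J J = 0 := if_pos le_rfl
  have hsign : modeSign J J = 1 := (Even.add_self J).neg_one_pow
  rw [complexCoord_polarExp, ← Complex.exp_nat_mul, ← Complex.exp_add, mode, modePhase,
    H.modeAction_start_eq hp, hsign, twist, hamp, angularFreq]
  push_cast
  ring_nf

end WKBRegime

theorem periodic_mode {i : ℕ} (s : ℝ) :
    Function.Periodic (fun θ => mode lam β J i (s, θ)) (2 * Real.pi) := by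
  intro θ
  have hfreq : crossFreq i = (16 * (i - 1) ^ 2 + 16 * i ^ 2 : ℕ) := by
    rw [crossFreq, angularFreq, angularFreq]
    push_cast
    rfl
  have htwist : twist J i (θ + 2 * Real.pi) = twist J i θ := by
    rw [twist, twist, mul_add, hfreq, Real.sin_add_nat_mul_two_pi]
  simp only [mode, Complex.exp_eq_exp_iff_exists_int]
  refine ⟨(-1) ^ (i + J) * (16 * i ^ 2), ?_⟩
  simp only [modePhase, htwist, modeSign, angularFreq]
  push_cast
  ring

theorem periodic_modeSum (s : ℝ) :
    Function.Periodic (fun θ => modeSum lam β J (s, θ)) (2 * Real.pi) := by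
  intro θ
  have hmode (i : ℕ) : mode lam β J i (s, θ + 2 * Real.pi) = mode lam β J i (s, θ) :=
    periodic_mode s θ
  simp only [modeSum, crossingSum, hmode]

end Start

/-! ### Decay -/

section Decay

variable {lam : ℂ} {β s : ℝ} {J i j : ℕ} {p : ℝ × ℝ}

theorem exp_two_mul_eq_radialClock_rpow (hβ : 0 < β) :
    Real.exp (2 * s) = radialClock β s ^ (4 / β) := by
  rw [radialClock, ← Real.exp_mul]
  congr 1
  field_simp
  ring

theorem norm_relPotential_le_rpow (hβ : 0 < β) (hj : 1 ≤ j) (hs : radialClock β s ≤ 2 * j) :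
    ‖relPotential lam j s‖ ≤ ‖lam‖ * (2 * j : ℝ) ^ (-(4 - 4 / β)) := by
  have hj' : (0 : ℝ) < 2 * j := by
    have : (1 : ℝ) ≤ j := by exact_mod_cast hj
    positivity
  have hexp : Real.exp (2 * s) ≤ (2 * j : ℝ) ^ (4 / β) := by
    rw [exp_two_mul_eq_radialClock_rpow hβ]
    exact Real.rpow_le_rpow radialClock_pos.le hs (by positivity)
  have hnorm : ‖Complex.exp (2 * s)‖ = Real.exp (2 * s) := by simp [Complex.norm_exp]
  rw [relPotential, norm_div, norm_mul, hnorm, norm_pow, Complex.norm_real,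
    Real.norm_of_nonneg angularFreq_nonneg, neg_sub, Real.rpow_sub hj', mul_div_assoc, angularFreq]
  gcongr
  rw [show (4 : ℝ) = (4 : ℕ) by norm_num, Real.rpow_natCast]
  nlinarith [sq_nonneg ((j : ℝ) ^ 2)]

theorem exists_wkbRegime (lam : ℂ) (h1 : 1 < β) (h2 : β ≤ 2) : ∃ J, WKBRegime lam β J := by
  have hβ : 0 < β := one_pos.trans h1
  have hexponent : 0 < 4 - 4 / β := by
    rw [sub_pos, div_lt_iff₀ hβ]
    linarith
  have htendsto : Tendsto (fun j : ℕ => ‖lam‖ * (2 * j : ℝ) ^ (-(4 - 4 / β))) atTop (𝓝 0) := by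
    simpa using ((tendsto_rpow_neg_atTop hexponent).comp
      (tendsto_natCast_atTop_atTop.const_mul_atTop two_pos)).const_mul ‖lam‖
  obtain ⟨n, hn⟩ := eventually_atTop.1
    (htendsto.eventually_le_const (show (0 : ℝ) < 1 / 100 by norm_num))
  refine ⟨n + 300, by omega, h1, h2, fun j hj s hs => ?_⟩
  have hj' : (2 : ℝ) ≤ j := by exact_mod_cast (by omega : 2 ≤ j)
  exact (norm_relPotential_le_rpow hβ (by omega) (by linarith)).trans (hn j (by omega))

theorem norm_crossingSum_le :
    ‖crossingSum lam β J j p‖ ≤ ‖mode lam β J j p‖ + ‖mode lam β J (j + 1) p‖ := by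
  have hcutoff (a b : ℝ) (z : ℂ) : ‖cutoff β a b p.1 * z‖ ≤ ‖z‖ := by
    rw [norm_mul, Complex.norm_real]
    exact mul_le_of_le_one_left (norm_nonneg z) abs_cutoff_le_one
  exact (norm_add_le _ _).trans (add_le_add (hcutoff _ _ _) (hcutoff _ _ _))

namespace WKBRegime

theorem norm_mode_le_norm_mode_succ (H : WKBRegime lam β J) (hj : J ≤ j)
    (h : |radialClock β p.1 - j| < 5 / 16) (hle : j ≤ radialClock β p.1) :
    ‖mode lam β J j p‖ ≤ ‖mode lam β J (j + 1) p‖ := by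
  have hre : 0 ≤ (actionGap lam β J j p.1).re := by
    by_contra! hneg
    exact hle.not_gt (H.radialClock_lt_of_re_actionGap_neg hj h hneg)
  rw [norm_mode_succ]
  exact le_mul_of_one_le_left (norm_nonneg _) (Real.one_le_exp hre)

theorem norm_mode_succ_le_norm_mode (H : WKBRegime lam β J) (hj : J ≤ j)
    (h : |radialClock β p.1 - j| < 5 / 16) (hle : radialClock β p.1 ≤ j) :
    ‖mode lam β J (j + 1) p‖ ≤ ‖mode lam β J j p‖ := by
  have hre : (actionGap lam β J j p.1).re ≤ 0 := by
    by_contra! hpos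
    exact hle.not_gt (H.lt_radialClock_of_re_actionGap_pos hj h hpos)
  rw [norm_mode_succ]
  exact mul_le_of_le_one_left (norm_nonneg _) (Real.exp_le_one_iff.2 hre)

theorem norm_modeSum_le (H : WKBRegime lam β J) (hj : J ≤ j) (h : j ≤ radialClock β p.1)
    (h' : radialClock β p.1 < j + 1) :
    ‖modeSum lam β J p‖ ≤ 2 * ‖mode lam β J (j + 1) p‖ := by
  rcases lt_or_ge (radialClock β p.1) (j + 5 / 16) with hlt | hge
  · have habs : |radialClock β p.1 - j| < 5 / 16 := by rw [abs_lt]; constructor <;> linarith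
    rw [modeSum_eq_crossingSum hj habs]
    linarith [norm_crossingSum_le (lam := lam) (β := β) (J := J) (j := j) (p := p),
      H.norm_mode_le_norm_mode_succ hj habs h]
  rcases lt_or_ge (radialClock β p.1) (j + 3 / 4) with hlt | hge'
  · rw [modeSum_eq_mode_succ hj (by linarith) (by linarith)]
    linarith [norm_nonneg (mode lam β J (j + 1) p)]
  · have habs : |radialClock β p.1 - (j + 1 : ℕ)| < 5 / 16 := by
      rw [abs_lt]; push_cast; constructor <;> linarith
    rw [modeSum_eq_crossingSum (by omega) habs]
    linarith [norm_crossingSum_le (lam := lam) (β := β) (J := J) (j := j + 1) (p := p),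
      H.norm_mode_succ_le_norm_mode (by omega) habs (by push_cast; exact h'.le)]

theorem norm_modeRate_sub_le (H : WKBRegime lam β J) (hi : J < i)
    (hs : radialClock β s ≤ i + 1) :
    ‖modeRate lam β J i s - angularFreq i‖ ≤ angularFreq i / 10 := by
  have hJ := H.le_start
  have hw := H.norm_relPotential_le_of_le hi.le hs
  have hk := sixteen_le_freqGap (j := i)
  have hkn := freqGap_le (j := i) (by omega)
  have hσ := norm_meanRate_sub_le (by linarith [le_angularFreq (j := i) (by omega)]) hw
  have hδ := norm_rateShift_le (by linarith) hkn hw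
  have hswitch : ‖(switch β i s : ℂ) * (enterRate lam J i s - leaveRate lam i s)‖ ≤
      4 * freqGap i := by
    rw [norm_mul, Complex.norm_real]
    exact (mul_le_of_le_one_left (norm_nonneg _) abs_cutoff_le_one).trans
      (H.norm_enterRate_sub_leaveRate_le hi hs)
  have hsplit : modeRate lam β J i s - angularFreq i =
      (meanRate (angularFreq i) (relPotential lam i s) - angularFreq i) +
        rateShift (angularFreq i) (freqGap i) (relPotential lam i s) +
          switch β i s * (enterRate lam J i s - leaveRate lam i s) := by
    rw [modeRate, leaveRate]
    ring
  rw [hsplit]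
  linarith [norm_add₃_le (a := meanRate (angularFreq i) (relPotential lam i s) - angularFreq i)
    (b := rateShift (angularFreq i) (freqGap i) (relPotential lam i s))
    (c := switch β i s * (enterRate lam J i s - leaveRate lam i s))]

theorem mul_radialClock_sq_le_re_modeRate (H : WKBRegime lam β J) (hi : J < i)
    (hs : radialClock β s ≤ i) : β * radialClock β s ^ 2 ≤ (modeRate lam β J i s).re := by
  have hre := (abs_le.1 ((Complex.abs_re_le_norm _).trans
    (H.norm_modeRate_sub_le hi (hs.trans (lt_add_one _).le)))).1
  rw [Complex.sub_re, Complex.ofReal_re] at hre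
  have hsq : β * radialClock β s ^ 2 ≤ 2 * (i : ℝ) ^ 2 := by
    have := radialClock_pos (β := β) (s := s)
    have := H.le_two
    gcongr
  have hfreq : angularFreq i = 16 * (i : ℝ) ^ 2 := rfl
  nlinarith [sq_nonneg (i : ℝ)]

theorem monotoneOn_re_modeAction_sub_sq (H : WKBRegime lam β J) (hj : J ≤ j) :
    MonotoneOn (fun s => (modeAction lam β J (j + 1) s).re - radialClock β s ^ 2)
      (Set.Icc (crossingTime β j) (crossingTime β (j + 1))) := by
  have hle : ∀ s ∈ Set.Icc (crossingTime β j) (crossingTime β (j + 1)),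
      radialClock β s ≤ (j + 1 : ℕ) := fun s hs => by
    simpa only [radialClock_crossingTime H.pos (i := j + 1) (by omega)] using
      (radialClock_strictMono H.pos).monotone hs.2
  have hderiv : ∀ s ∈ Set.Icc (crossingTime β j) (crossingTime β (j + 1)),
      HasDerivAt (fun s => (modeAction lam β J (j + 1) s).re - radialClock β s ^ 2)
        ((modeRate lam β J (j + 1) s).re - β * radialClock β s ^ 2) s := fun s hs => by
    have haction := H.hasDerivAt_modeAction (i := j + 1) (by omega)
      ((hle s hs).trans_lt (lt_add_one _))
    refine ((Complex.reCLM.hasFDerivAt.comp_hasDerivAt s haction).sub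
      ((hasDerivAt_radialClock β s).pow 2)).congr_deriv ?_
    simp only [Complex.reCLM_apply, Nat.cast_ofNat]
    ring
  refine monotoneOn_of_hasDerivWithinAt_nonneg (convex_Icc _ _)
    (fun s hs => (hderiv s hs).continuousAt.continuousWithinAt)
    (fun s hs => (hderiv s (interior_subset hs)).hasDerivWithinAt) fun s hs => ?_
  rw [sub_nonneg]
  exact H.mul_radialClock_sq_le_re_modeRate (by omega) (hle s (interior_subset hs))

theorem exists_radialClock_sq_sub_le_re_modeAction (H : WKBRegime lam β J) : ∃ A : ℝ,
    ∀ j s, J ≤ j → j ≤ radialClock β s → radialClock β s ≤ j + 1 →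
      radialClock β s ^ 2 - A ≤ (modeAction lam β J (j + 1) s).re := by
  have hJ := H.le_start
  have hmono := radialClock_strictMono H.pos
  have hstep : ∀ j s, J ≤ j → j ≤ radialClock β s → radialClock β s ≤ j + 1 →
      (modeAction lam β J j (crossingTime β j)).re - (j : ℝ) ^ 2 ≤
        (modeAction lam β J (j + 1) s).re - radialClock β s ^ 2 := by
    intro j s hj h h'
    have hclock := radialClock_crossingTime H.pos (i := j) (by omega)
    have hclock' := radialClock_crossingTime H.pos (i := j + 1) (by omega)
    have hle : crossingTime β j ≤ s := hmono.le_iff_le.1 (hclock ▸ h)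
    have hle' : s ≤ crossingTime β (j + 1) := by
      rw [← hmono.le_iff_le, hclock']
      exact_mod_cast h'
    have hmonoOn := H.monotoneOn_re_modeAction_sub_sq hj ⟨le_rfl, hle.trans hle'⟩ ⟨hle, hle'⟩ hle
    simpa only [modeAction_succ_crossingTime, hclock] using hmonoOn
  have hcrossing : ∀ j, J ≤ j →
      (modeAction lam β J J (crossingTime β J)).re - (J : ℝ) ^ 2 ≤
        (modeAction lam β J j (crossingTime β j)).re - (j : ℝ) ^ 2 := by
    intro j hj
    induction j, hj using Nat.le_induction with
    | base => exact le_rfl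
    | succ j hj ih =>
      have hclock := radialClock_crossingTime H.pos (i := j + 1) (by omega)
      refine ih.trans ((hstep j _ hj ?_ ?_).trans_eq (by rw [hclock])) <;> rw [hclock] <;> simp
  refine ⟨(J : ℝ) ^ 2 - (modeAction lam β J J (crossingTime β J)).re, fun j s hj h h' => ?_⟩
  linarith [hstep j s hj h h', hcrossing j hj]

theorem exists_norm_modeSum_le (H : WKBRegime lam β J) : ∃ C, 0 < C ∧
    ∀ p : ℝ × ℝ, J ≤ radialClock β p.1 →
      ‖modeSum lam β J p‖ ≤ C * Real.exp (-radialClock β p.1 ^ 2) := by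
  obtain ⟨A, hA⟩ := H.exists_radialClock_sq_sub_le_re_modeAction
  refine ⟨2 * Real.exp A, by positivity, fun p hp => ?_⟩
  have hfloor := Nat.floor_le (radialClock_pos (β := β) (s := p.1)).le
  have hfloor' := Nat.lt_floor_add_one (radialClock β p.1)
  have hj : J ≤ ⌊radialClock β p.1⌋₊ := Nat.le_floor hp
  refine (H.norm_modeSum_le hj hfloor hfloor').trans ?_
  rw [norm_mode, mul_assoc, ← Real.exp_add]
  gcongr
  linarith [hA _ _ hj hfloor hfloor'.le]

end WKBRegime

end Decay

/-! ### The solution on the plane -/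

namespace PolarEstimate

variable {lam : ℂ} {u : Plane → ℂ} {p : ℝ × ℝ} {K c : ℝ}

theorem contDiffAt (h : PolarEstimate lam (u ∘ polarExp) p K c) :
    ContDiffAt ℝ 2 u (polarExp p) := by
  obtain ⟨f₁, f₂, f₁₁, f₂₂, hjet, -, -⟩ := h
  exact contDiffAt_of_comp_polarExp hjet.contDiffAt

theorem norm_sq_mul_norm_lap_add_le (h : PolarEstimate lam (u ∘ polarExp) p K c) :
    ‖polarExp p‖ ^ 2 * ‖lap u (polarExp p) + lam * u (polarExp p)‖ ≤ K * ‖u (polarExp p)‖ := by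
  obtain ⟨f₁, f₂, f₁₁, f₂₂, hjet, hK, -⟩ := h
  have hexp : Complex.exp (2 * p.1) = (‖polarExp p‖ : ℂ) ^ 2 := by
    rw [norm_polarExp, Complex.ofReal_exp, ← Complex.exp_nat_mul, Nat.cast_ofNat]
  calc ‖polarExp p‖ ^ 2 * ‖lap u (polarExp p) + lam * u (polarExp p)‖
      = ‖(‖polarExp p‖ : ℂ) ^ 2 * (lap u (polarExp p) + lam * u (polarExp p))‖ := by
        rw [norm_mul, norm_pow, Complex.norm_real, norm_norm]
    _ = ‖f₁₁ + f₂₂ + lam * Complex.exp (2 * p.1) * (u ∘ polarExp) p‖ := by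
        rw [hjet.add_eq_norm_sq_mul_lap, hexp, Function.comp_apply]
        ring_nf
    _ ≤ K * ‖u (polarExp p)‖ := hK

theorem mul_norm_le (h : PolarEstimate lam (u ∘ polarExp) p K c) :
    c * ‖u (polarExp p)‖ ≤ 2 * (‖polarExp p‖ * ‖grad u (polarExp p)‖) := by
  obtain ⟨f₁, f₂, f₁₁, f₂₂, hjet, -, hc⟩ := h
  refine hc.trans (abs_le_of_sq_le_sq' ?_ (by positivity)).2
  have hsq := hjet.norm_sq_add_norm_sq
  nlinarith [sq_nonneg (‖f₁ p‖ - ‖f₂ p‖), sq_nonneg (‖polarExp p‖ * ‖grad u (polarExp p)‖)]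

end PolarEstimate

section Monomial

theorem lap_congr_of_eventuallyEq {u v : Plane → ℂ} {x : Plane} (h : u =ᶠ[𝓝 x] v) :
    lap u x = lap v x := by
  refine Finset.sum_congr rfl fun i _ => ?_
  have hpd : pd u i =ᶠ[𝓝 x] pd v i := h.fderiv.mono fun y hy => by rw [pd, pd, hy]
  rw [pd, pd, hpd.fderiv_eq]

theorem pd_const_mul_complexCoord_pow (c : ℂ) (m : ℕ) (i : Fin 2) (x : Plane) :
    pd (fun x => c * complexCoord x ^ m) i x =
      c * m * complexCoord (EuclideanSpace.single i 1) * complexCoord x ^ (m - 1) := by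
  have hz : HasFDerivAt complexCoord (complexCoord.toContinuousLinearEquiv : Plane →L[ℝ] ℂ) x :=
    complexCoord.toContinuousLinearEquiv.hasFDerivAt
  rw [pd, ((hz.pow m).const_mul c).fderiv]
  simp only [nsmul_eq_mul, smul_apply, ContinuousLinearEquiv.coe_coe,
    LinearIsometryEquiv.coe_toContinuousLinearEquiv, smul_eq_mul]
  ring

theorem lap_const_mul_complexCoord_pow (c : ℂ) (m : ℕ) (x : Plane) :
    lap (fun x => c * complexCoord x ^ m) x = 0 := by
  have hfst : complexCoord (EuclideanSpace.single 0 1) = 1 := by simp [complexCoord_apply]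
  have hsnd : complexCoord (EuclideanSpace.single 1 1) = Complex.I := by simp [complexCoord_apply]
  simp only [lap, Fin.sum_univ_two, pd_const_mul_complexCoord_pow, hfst, hsnd]
  linear_combination c * m * (m - 1 : ℕ) * complexCoord x ^ (m - 1 - 1) * Complex.I_sq

end Monomial

/-- The solution on the plane; near the origin it is a multiple of `z ^ n_J`. -/
def solution (lam : ℂ) (β : ℝ) (J : ℕ) : Plane → ℂ := ofPolar (modeSum lam β J)

section Solution

variable {lam : ℂ} {β : ℝ} {J : ℕ}

theorem solution_comp_polarExp : solution lam β J ∘ polarExp = modeSum lam β J :=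
  ofPolar_comp_polarExp periodic_modeSum

theorem solution_zero : solution lam β J 0 = 0 := ofPolar_zero _

namespace WKBRegime

theorem solution_ne_zero (H : WKBRegime lam β J) : solution lam β J ≠ 0 := by
  intro h
  have hJ := H.le_start
  have hclock := radialClock_crossingTime H.pos (i := J - 1) (by omega)
  rw [Nat.cast_pred (by omega)] at hclock
  have hvalue := congrFun h (polarExp (crossingTime β (J - 1), 0))
  rw [← Function.comp_apply (f := solution lam β J), solution_comp_polarExp,
    modeSum_eq_mode_start (by simp only [hclock]; linarith)] at hvalue
  exact Complex.exp_ne_zero _ hvalue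

theorem exists_solution_eventuallyEq (H : WKBRegime lam β J) : ∃ c : ℂ,
    solution lam β J =ᶠ[𝓝 0] fun x => c * complexCoord x ^ (16 * J ^ 2) := by
  obtain ⟨c, hc⟩ := H.exists_mode_start_eq
  have hJ := H.le_start
  refine ⟨c, ?_⟩
  filter_upwards [Metric.ball_mem_nhds 0 (Real.exp_pos (crossingTime β (J - 1)))] with x hx
  rcases eq_or_ne x 0 with rfl | hne
  · have : 16 * J ^ 2 ≠ 0 := by positivity
    rw [solution_zero, map_zero, zero_pow this, mul_zero]
  · have hclock : radialClock β (Real.log ‖x‖) ≤ J - 1 := by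
      rw [← Nat.cast_pred (by omega), ← radialClock_crossingTime H.pos (by omega : 1 ≤ J - 1)]
      exact (radialClock_strictMono H.pos).monotone
        ((Real.log_le_iff_le_exp (norm_pos_iff.2 hne)).2 (mem_ball_zero_iff.1 hx).le)
    rw [solution, ofPolar_of_ne_zero _ hne, modeSum_eq_mode_start (by simp only; linarith),
      hc _ hclock, polarExp_log_arg hne]

theorem contDiffAt_solution_zero (H : WKBRegime lam β J) :
    ContDiffAt ℝ 2 (solution lam β J) 0 := by
  obtain ⟨c, hc⟩ := H.exists_solution_eventuallyEq
  exact (contDiff_const.mul (complexCoord.contDiff.pow _)).contDiffAt.congr_of_eventuallyEq hc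

theorem grad_solution_zero (H : WKBRegime lam β J) : grad (solution lam β J) 0 = 0 := by
  obtain ⟨c, hc⟩ := H.exists_solution_eventuallyEq
  have hJ := H.le_start
  have hdeg : 16 * J ^ 2 - 1 ≠ 0 := by
    have : 1 < 16 * J ^ 2 := by nlinarith
    omega
  ext i
  have hpd : pd (solution lam β J) i 0 = 0 := by
    rw [pd, hc.fderiv_eq, ← pd, pd_const_mul_complexCoord_pow, map_zero, zero_pow hdeg, mul_zero]
  simpa [grad] using hpd

theorem lap_solution_zero (H : WKBRegime lam β J) : lap (solution lam β J) 0 = 0 := by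
  obtain ⟨c, hc⟩ := H.exists_solution_eventuallyEq
  rw [lap_congr_of_eventuallyEq hc, lap_const_mul_complexCoord_pow]

end WKBRegime

end Solution

/-! ### Global bounds -/

section Bracket

variable {E : Type*} [NormedAddCommGroup E]

theorem rpow_neg_le_rpow_abs {t T : ℝ} (ht : 1 ≤ t) (hT : t ≤ T) (a : ℝ) : t ^ (-a) ≤ T ^ |a| :=
  (Real.rpow_le_rpow_of_exponent_le ht (neg_le_abs a)).trans
    (Real.rpow_le_rpow (by linarith) hT (abs_nonneg a))

theorem one_le_mul_sqrt_one_add_norm_sq_rpow {R : ℝ} {x : E} (hx : ‖x‖ ≤ R) (a : ℝ) :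
    1 ≤ (1 + R) ^ |a| * √(1 + ‖x‖ ^ 2) ^ a := by
  have hbracket : 1 ≤ √(1 + ‖x‖ ^ 2) := Real.one_le_sqrt.2 (by nlinarith)
  have hpos : 0 < √(1 + ‖x‖ ^ 2) := one_pos.trans_le hbracket
  rw [← inv_le_iff_one_le_mul₀ (by positivity), ← Real.rpow_neg hpos.le]
  exact rpow_neg_le_rpow_abs hbracket (by linarith [sqrt_one_add_norm_sq_le x]) a

theorem norm_rpow_le_mul_sqrt_one_add_norm_sq_rpow {R : ℝ} (hR : 1 ≤ R) {x : E} (hx : R ≤ ‖x‖)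
    (a : ℝ) : ‖x‖ ^ a ≤ (1 + R) ^ |a| * √(1 + ‖x‖ ^ 2) ^ a := by
  have hnorm : 0 < ‖x‖ := by linarith
  have hbracket : ‖x‖ ≤ √(1 + ‖x‖ ^ 2) := Real.le_sqrt_of_sq_le (by linarith)
  have hpos : 0 < √(1 + ‖x‖ ^ 2) := hnorm.trans_le hbracket
  have hratio : √(1 + ‖x‖ ^ 2) / ‖x‖ ≤ 1 + R := by
    rw [div_le_iff₀ hnorm]
    nlinarith [sqrt_one_add_norm_sq_le x]
  rw [← div_le_iff₀ (by positivity), ← Real.div_rpow hnorm.le hpos.le, ← inv_div,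
    Real.inv_rpow (by positivity), ← Real.rpow_neg (by positivity)]
  exact rpow_neg_le_rpow_abs ((one_le_div hnorm).2 hbracket) hratio a

theorem exists_le_mul_sqrt_one_add_norm_sq_rpow {f g : E → ℝ} {a R K C : ℝ} (hR : 1 ≤ R)
    (hC : 0 ≤ C) (hK : 0 ≤ K) (hg : ∀ x, 0 ≤ g x) (hinner : ∀ x, ‖x‖ ≤ R → f x ≤ K * g x)
    (houter : ∀ x, R ≤ ‖x‖ → f x ≤ C * ‖x‖ ^ a * g x) :
    ∃ D, 0 < D ∧ ∀ x, f x ≤ D * √(1 + ‖x‖ ^ 2) ^ a * g x := by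
  have : 0 < R := by linarith
  refine ⟨(K + C + 1) * (1 + R) ^ |a|, by positivity, fun x => ?_⟩
  have hnonneg := hg x
  rw [mul_assoc (K + C + 1)]
  rcases le_total ‖x‖ R with hx | hx
  · have hbracket := one_le_mul_sqrt_one_add_norm_sq_rpow hx a
    refine (hinner x hx).trans ?_
    gcongr
    nlinarith
  · have hbracket := norm_rpow_le_mul_sqrt_one_add_norm_sq_rpow hR hx a
    refine (houter x hx).trans ?_
    gcongr
    linarith

end Bracket

theorem exists_forall_norm_le_mul_of_le_norm {E F : Type*} [NormedAddCommGroup E] [ProperSpace E]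
    [SeminormedAddCommGroup F] {u : E → F} {g : E → ℝ} (hu : Continuous u) (hg : Continuous g)
    (hpos : ∀ x, 0 < g x) {C R : ℝ} (h : ∀ x, R ≤ ‖x‖ → ‖u x‖ ≤ C * g x) :
    ∃ D, 0 < D ∧ ∀ x, ‖u x‖ ≤ D * g x := by
  obtain ⟨B, hB⟩ := (isCompact_closedBall (0 : E) R).bddAbove_image
    (hu.norm.div hg fun x => (hpos x).ne').continuousOn
  refine ⟨max 1 (max B C), by positivity, fun x => ?_⟩
  rw [← div_le_iff₀ (hpos x)]
  rcases le_total ‖x‖ R with hx | hx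
  · exact (hB ⟨x, mem_closedBall_zero_iff.2 hx, rfl⟩).trans (by simp)
  · exact ((div_le_iff₀ (hpos x)).2 (h x hx)).trans (by simp)

section Polar

theorem exists_polarExp_eq {x : Plane} (hx : x ≠ 0) : ∃ p, polarExp p = x :=
  ⟨_, polarExp_log_arg hx⟩

theorem radialClock_pow_eq_norm_polarExp_rpow (β : ℝ) (n : ℕ) (p : ℝ × ℝ) :
    radialClock β p.1 ^ n = ‖polarExp p‖ ^ (n * β / 2) := by
  rw [radialClock, ← Real.exp_nat_mul, norm_polarExp, ← Real.exp_mul]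
  ring_nf

theorem radialClock_eq_norm_polarExp_rpow (β : ℝ) (p : ℝ × ℝ) :
    radialClock β p.1 = ‖polarExp p‖ ^ (β / 2) := by
  simpa using radialClock_pow_eq_norm_polarExp_rpow β 1 p

end Polar

namespace WKBRegime

variable {lam : ℂ} {β : ℝ} {J : ℕ}

theorem exists_solution_inner_bounds (H : WKBRegime lam β J) : ∃ K, 0 ≤ K ∧ ∀ x, x ≠ 0 →
    ‖x‖ ^ (β / 2) ≤ J - 1 / 4 →
      ContDiffAt ℝ 2 (solution lam β J) x ∧
      ‖lap (solution lam β J) x + lam * solution lam β J x‖ ≤ K * ‖solution lam β J x‖ ∧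
      ‖solution lam β J x‖ ≤ 2 * (‖x‖ * ‖grad (solution lam β J) x‖) := by
  obtain ⟨K, hK, hestimate⟩ := H.exists_polarEstimate_modeSum_inner
  refine ⟨K, hK, fun x hx hclock => ?_⟩
  obtain ⟨p, rfl⟩ := exists_polarExp_eq hx
  have h := hestimate p ((radialClock_eq_norm_polarExp_rpow β p).trans_le hclock)
  rw [← solution_comp_polarExp] at h
  refine ⟨h.contDiffAt, ?_, by simpa using h.mul_norm_le⟩
  have hexp : Real.exp (2 * p.1) = ‖polarExp p‖ ^ 2 := by
    rw [norm_polarExp, ← Real.exp_nat_mul, Nat.cast_ofNat]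
  have hlap := h.norm_sq_mul_norm_lap_add_le
  rw [hexp] at hlap
  refine le_of_mul_le_mul_left (hlap.trans_eq ?_) (pow_pos (norm_pos_iff.2 hx) 2)
  ring

theorem exists_solution_outer_bounds (H : WKBRegime lam β J) : ∃ C, 0 ≤ C ∧ ∀ x, x ≠ 0 →
    J - 1 / 4 ≤ ‖x‖ ^ (β / 2) →
      ContDiffAt ℝ 2 (solution lam β J) x ∧
      ‖lap (solution lam β J) x + lam * solution lam β J x‖ ≤
        C * ‖x‖ ^ (3 * β / 2 - 2) * ‖solution lam β J x‖ ∧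
      ‖lap (solution lam β J) x + lam * solution lam β J x‖ ≤
        2 * C * ‖x‖ ^ (β / 2 - 1) * ‖grad (solution lam β J) x‖ := by
  obtain ⟨C, hC, hestimate⟩ := exists_polarEstimate_modeSum_outer
  refine ⟨C, hC, fun x hx hclock => ?_⟩
  obtain ⟨p, rfl⟩ := exists_polarExp_eq hx
  have h := hestimate lam β J p H (hclock.trans_eq (radialClock_eq_norm_polarExp_rpow β p).symm)
  rw [← solution_comp_polarExp] at h
  have hnorm : 0 < ‖polarExp p‖ := norm_pos_iff.2 hx
  have hlap := h.norm_sq_mul_norm_lap_add_le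
  have hgrad := h.mul_norm_le
  have hcube : radialClock β p.1 ^ 3 =
      ‖polarExp p‖ ^ 2 * ‖polarExp p‖ ^ (3 * β / 2 - 2) := by
    rw [radialClock_pow_eq_norm_polarExp_rpow, ← Real.rpow_natCast, ← Real.rpow_add hnorm]
    simp
  have hlinear : radialClock β p.1 = ‖polarExp p‖ * ‖polarExp p‖ ^ (β / 2 - 1) := by
    rw [radialClock_eq_norm_polarExp_rpow, mul_comm, ← Real.rpow_add_one hnorm.ne', sub_add_cancel]
  refine ⟨h.contDiffAt, le_of_mul_le_mul_left ?_ (pow_pos hnorm 2),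
    le_of_mul_le_mul_left ?_ (pow_pos hnorm 2)⟩
  · rw [hcube] at hlap
    linarith
  · have hclock_pos : 0 < radialClock β p.1 := radialClock_pos
    calc ‖polarExp p‖ ^ 2 * ‖lap (solution lam β J) (polarExp p) +
          lam * solution lam β J (polarExp p)‖
        ≤ C * radialClock β p.1 *
            (radialClock β p.1 ^ 2 * ‖solution lam β J (polarExp p)‖) := by linarith
      _ ≤ C * radialClock β p.1 *
            (2 * (‖polarExp p‖ * ‖grad (solution lam β J) (polarExp p)‖)) := by gcongr
      _ = _ := by rw [hlinear]; ring

theorem exists_norm_solution_le (H : WKBRegime lam β J) : ∃ C, ∀ x, x ≠ 0 →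
    J ≤ ‖x‖ ^ (β / 2) → ‖solution lam β J x‖ ≤ C * Real.exp (-‖x‖ ^ β) := by
  obtain ⟨C, -, hdecay⟩ := H.exists_norm_modeSum_le
  refine ⟨C, fun x hx hclock => ?_⟩
  obtain ⟨p, rfl⟩ := exists_polarExp_eq hx
  have h := hdecay p (hclock.trans_eq (radialClock_eq_norm_polarExp_rpow β p).symm)
  rw [← solution_comp_polarExp, radialClock_pow_eq_norm_polarExp_rpow] at h
  simpa using h

theorem contDiff_solution (H : WKBRegime lam β J) : ContDiff ℝ 2 (solution lam β J) := by
  obtain ⟨K, -, hinner⟩ := H.exists_solution_inner_bounds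
  obtain ⟨C, -, houter⟩ := H.exists_solution_outer_bounds
  refine contDiff_iff_contDiffAt.2 fun x => ?_
  rcases eq_or_ne x 0 with rfl | hx
  · exact H.contDiffAt_solution_zero
  · rcases le_total (‖x‖ ^ (β / 2)) (J - 1 / 4) with h | h
    · exact (hinner x hx h).1
    · exact (houter x hx h).1

theorem exists_norm_lap_solution_add_le (H : WKBRegime lam β J) :
    (∃ D, 0 < D ∧ ∀ x, ‖lap (solution lam β J) x + lam * solution lam β J x‖ ≤
      D * √(1 + ‖x‖ ^ 2) ^ (3 * β / 2 - 2) * ‖solution lam β J x‖) ∧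
    ∃ D, 0 < D ∧ ∀ x, ‖lap (solution lam β J) x + lam * solution lam β J x‖ ≤
      D * √(1 + ‖x‖ ^ 2) ^ (β / 2 - 1) * ‖grad (solution lam β J) x‖ := by
  obtain ⟨K, hK, hinner⟩ := H.exists_solution_inner_bounds
  obtain ⟨C, hC, houter⟩ := H.exists_solution_outer_bounds
  have hβ : 0 < β / 2 := half_pos H.pos
  have hJ : (300 : ℝ) ≤ J := by exact_mod_cast H.le_start
  set R : ℝ := (J - 1 / 4) ^ (β / 2)⁻¹
  have hR : 1 ≤ R := Real.one_le_rpow (by linarith) (by positivity)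
  have hinner_zero : ‖lap (solution lam β J) 0 + lam * solution lam β J 0‖ = 0 := by
    rw [H.lap_solution_zero, solution_zero, mul_zero, add_zero, norm_zero]
  have hinner' : ∀ x : Plane, x ≠ 0 → ‖x‖ ≤ R → _ := fun x hx hxR => hinner x hx
    ((Real.le_rpow_inv_iff_of_pos (norm_nonneg x) (by linarith) hβ).1 hxR)
  have houter' : ∀ x : Plane, R ≤ ‖x‖ → _ := fun x hxR => houter x
    (norm_pos_iff.1 (by linarith))
    ((Real.rpow_inv_le_iff_of_pos (by linarith) (norm_nonneg x) hβ).1 hxR)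
  constructor
  · refine exists_le_mul_sqrt_one_add_norm_sq_rpow hR hC hK (fun x => norm_nonneg _)
      (fun x hxR => ?_) fun x hxR => (houter' x hxR).2.1
    rcases eq_or_ne x 0 with rfl | hx
    · rw [hinner_zero]; positivity
    · exact (hinner' x hx hxR).2.1
  · refine exists_le_mul_sqrt_one_add_norm_sq_rpow (K := K * (2 * R)) hR
      (by positivity : 0 ≤ 2 * C) (by positivity) (fun x => norm_nonneg _)
      (fun x hxR => ?_) fun x hxR => (houter' x hxR).2.2
    rcases eq_or_ne x 0 with rfl | hx
    · rw [hinner_zero]; positivity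
    · obtain ⟨-, hlap, hgrad⟩ := hinner' x hx hxR
      calc _ ≤ K * (2 * (‖x‖ * ‖grad (solution lam β J) x‖)) := hlap.trans (by gcongr)
        _ ≤ K * (2 * (R * ‖grad (solution lam β J) x‖)) := by gcongr
        _ = _ := by ring

theorem exists_forall_norm_solution_le (H : WKBRegime lam β J) : ∃ D, 0 < D ∧
    ∀ x, ‖solution lam β J x‖ ≤ D * Real.exp (-‖x‖ ^ β) := by
  obtain ⟨C, hdecay⟩ := H.exists_norm_solution_le
  have hβ : 0 < β / 2 := half_pos H.pos
  have hJ : (300 : ℝ) ≤ J := by exact_mod_cast H.le_start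
  have hcont : Continuous fun x : Plane => Real.exp (-‖x‖ ^ β) :=
    Real.continuous_exp.comp (continuous_norm.rpow_const fun _ => Or.inr H.pos.le).neg
  refine exists_forall_norm_le_mul_of_le_norm (R := (J : ℝ) ^ (β / 2)⁻¹)
    H.contDiff_solution.continuous hcont (fun x => Real.exp_pos _) fun x hx => hdecay x ?_ ?_
  · have hR : 0 < (J : ℝ) ^ (β / 2)⁻¹ := by positivity
    exact norm_pos_iff.1 (hR.trans_le hx)
  · exact (Real.rpow_inv_le_iff_of_pos (by positivity) (norm_nonneg x) hβ).1 hx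

end WKBRegime

theorem exists_superexponentially_decaying_solution (lam : ℂ) {β : ℝ} (h1 : 1 < β) (h2 : β ≤ 2) :
    ∃ (u : Plane → ℂ) (D : ℝ), 0 < D ∧ u ≠ 0 ∧ ContDiff ℝ 2 u ∧ u 0 = 0 ∧ grad u 0 = 0 ∧
      (∀ x, ‖lap u x + lam * u x‖ ≤ D * √(1 + ‖x‖ ^ 2) ^ (3 * β / 2 - 2) * ‖u x‖) ∧
      (∀ x, ‖lap u x + lam * u x‖ ≤ D * √(1 + ‖x‖ ^ 2) ^ (β / 2 - 1) * ‖grad u x‖) ∧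
      ∀ x, ‖u x‖ ≤ D * Real.exp (-‖x‖ ^ β) := by
  obtain ⟨J, H⟩ := exists_wkbRegime lam h1 h2
  obtain ⟨⟨A, hA, hpotential⟩, B, hB, hdrift⟩ := H.exists_norm_lap_solution_add_le
  obtain ⟨D, hD, hdecay⟩ := H.exists_forall_norm_solution_le
  refine ⟨solution lam β J, A + B + D, by positivity, H.solution_ne_zero, H.contDiff_solution,
    solution_zero, H.grad_solution_zero, fun x => (hpotential x).trans ?_,
    fun x => (hdrift x).trans ?_, fun x => (hdecay x).trans ?_⟩ <;> gcongr <;> linarith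

/-! ### Recovering the potentials -/

section Coefficients

variable {ι : Type*} [Fintype ι] [Nonempty ι]

theorem exists_norm_le_sum_mul_eq {a : EuclideanSpace ℂ ι} {b : ℂ} {m : ℝ} (hm : 0 < m)
    (h : ‖b‖ ≤ m * ‖a‖) :
    ∃ w : EuclideanSpace ℂ ι, ∑ i, w i * a i = b ∧ ‖w‖ ≤ m ∧ (a = 0 → w ≠ 0) := by
  rcases eq_or_ne a 0 with rfl | ha
  · classical
    obtain ⟨i⟩ := ‹Nonempty ι›
    refine ⟨EuclideanSpace.single i (m : ℂ), ?_, ?_, fun _ => ?_⟩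
    · simpa [eq_comm] using h
    · simp [abs_of_pos hm]
    · simpa using hm.ne'
  · have hnorm : 0 < ‖a‖ := norm_pos_iff.2 ha
    refine ⟨(b / (‖a‖ : ℂ) ^ 2) • WithLp.toLp 2 fun i => star (a i), ?_, ?_,
      fun h0 => absurd h0 ha⟩
    · have hsum : ∑ i, star (a i) * a i = (‖a‖ : ℂ) ^ 2 := by
        rw [← Complex.ofReal_pow, EuclideanSpace.norm_sq_eq, Complex.ofReal_sum]
        exact Finset.sum_congr rfl fun i _ => by
          rw [Complex.ofReal_pow]; exact Complex.conj_mul' (a i)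
      simp only [PiLp.smul_apply, smul_eq_mul, mul_assoc, ← Finset.mul_sum, hsum]
      exact div_mul_cancel₀ b (by simpa using ha)
    · have hstar : ‖WithLp.toLp 2 fun i => star (a i)‖ = ‖a‖ := by
        simp [EuclideanSpace.norm_eq]
      rw [norm_smul, hstar, norm_div, norm_pow, Complex.norm_real, norm_norm,
        div_mul_eq_mul_div, div_le_iff₀ (by positivity)]
      nlinarith

theorem exists_norm_le_mul_eq {a b : ℂ} {m : ℝ} (hm : 0 < m) (h : ‖b‖ ≤ m * ‖a‖) :
    ∃ v : ℂ, v * a = b ∧ ‖v‖ ≤ m ∧ (a = 0 → v ≠ 0) := by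
  obtain ⟨w, hw, hwm, hw0⟩ := exists_norm_le_sum_mul_eq (a := EuclideanSpace.single () a) hm
    (by simpa using h)
  refine ⟨w (), by simpa using hw, (PiLp.norm_apply_le w ()).trans hwm, fun ha h0 => ?_⟩
  exact hw0 (by simp [ha]) (by ext; simpa using h0)

end Coefficients

theorem stmt9 (lam : ℂ) (N P : ℝ) (hN : 0 ≤ N) (hP : 0 ≤ P)
    (hβ : 1 < max (2 - 2 * P) ((4 - 2 * N) / 3)) :
    ∃ (C c : ℝ) (V : EuclideanSpace ℝ (Fin 2) → ℂ)
      (W : EuclideanSpace ℝ (Fin 2) → EuclideanSpace ℂ (Fin 2))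
      (u : EuclideanSpace ℝ (Fin 2) → ℂ),
      0 < C ∧ 0 < c ∧
      ((V = 0 ∧ W ≠ 0) ∨ (V ≠ 0 ∧ W = 0)) ∧
      u ≠ 0 ∧ ContDiff ℝ 2 u ∧
      (∀ x, -lap u x + (∑ i, W x i * pd u i x) + V x * u x = lam * u x) ∧
      (∀ x, ‖V x‖ ≤ C * Real.sqrt (1 + ‖x‖ ^ 2) ^ (-N)) ∧
      (∀ x, ‖W x‖ ≤ C * Real.sqrt (1 + ‖x‖ ^ 2) ^ (-P)) ∧
      (∃ A : ℝ, (A = -1 ∨ A = 0) ∧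
        ∀ x : EuclideanSpace ℝ (Fin 2), 2 ≤ ‖x‖ →
          ‖u x‖ ≤ C * Real.exp (-(c * ‖x‖ ^ (max (2 - 2 * P) ((4 - 2 * N) / 3)) *
            Real.log ‖x‖ ^ A))) := by
  set β := max (2 - 2 * P) ((4 - 2 * N) / 3) with hβ_eq
  obtain ⟨u, D, hD, hu, hcont, hzero, hgrad, hpotential, hdrift, hdecay⟩ :=
    exists_superexponentially_decaying_solution lam hβ (max_le (by linarith) (by linarith))
  have hweight (a : ℝ) (x : Plane) : 0 < D * √(1 + ‖x‖ ^ 2) ^ a := by positivity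
  have hdecay' : ∃ A : ℝ, (A = -1 ∨ A = 0) ∧ ∀ x : Plane, 2 ≤ ‖x‖ →
      ‖u x‖ ≤ D * Real.exp (-(1 * ‖x‖ ^ β * Real.log ‖x‖ ^ A)) :=
    ⟨0, Or.inr rfl, fun x _ => by simpa using hdecay x⟩
  rcases le_total ((4 - 2 * N) / 3) (2 - 2 * P) with hle | hle
  · have hexponent : β / 2 - 1 = -P := by rw [hβ_eq, max_eq_left hle]; ring
    choose W hW hW_le hW_ne using fun x =>
      exists_norm_le_sum_mul_eq (hweight (-P) x) (hexponent ▸ hdrift x)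
    refine ⟨D, 1, 0, W, u, hD, one_pos, Or.inl ⟨rfl, fun h => hW_ne 0 hgrad (congrFun h 0)⟩,
      hu, hcont, fun x => ?_, fun x => by simpa using (hweight (-N) x).le, hW_le, hdecay'⟩
    rw [Pi.zero_apply, zero_mul, add_zero]
    exact (congrArg (-lap u x + ·) (hW x)).trans (neg_add_cancel_left _ _)
  · have hexponent : 3 * β / 2 - 2 = -N := by rw [hβ_eq, max_eq_right hle]; ring
    choose V hV hV_le hV_ne using fun x =>
      exists_norm_le_mul_eq (hweight (-N) x) (hexponent ▸ hpotential x)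
    refine ⟨D, 1, V, 0, u, hD, one_pos, Or.inr ⟨fun h => hV_ne 0 hzero (congrFun h 0), rfl⟩,
      hu, hcont, fun x => ?_, hV_le, fun x => by simpa using (hweight (-P) x).le, hdecay'⟩
    simp only [Pi.zero_apply, PiLp.zero_apply, zero_mul, Finset.sum_const_zero, add_zero]
    linear_combination hV x
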